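/- arXiv:2102.03871 — 2 statements merged into one kernel-verified Lean document; each statement's English description precedes it below -/
import Mathlib

section
/- Let 𝔐 be a weight matrix. If 𝔐 is R-regular and has R-moderate growth, then the ring of germs at 0 ∈ ℝ of complex-valued E^{𝔐}-functions (Roumieu) has property (D); if 𝔐 is B-regular and has B-moderate growth, then the ring of germs at 0 ∈ ℝ of complex-valued E^{(𝔐)}-functions (Beurling) has property (D). Here property (D) means: for every function f defined on an open neighborhood of 0 in ℝ and every integer j ≥ 1, if f^j and f^{j+1} are of the respective class on some open neighborhood of 0, then f is of that class on some open neighborhood of 0. -/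
open Filter Set Asymptotics MeasureTheory

noncomputable section

/-- `M` is a weight sequence: `M 0 = 1`, positive, `M 1 ≥ 1`, log-convex and
`M k ^ (1/k) → ∞`. -/
def IsWeightSeq (M : ℕ → ℝ) : Prop :=
  M 0 = 1 ∧ (∀ k, 0 < M k) ∧ 1 ≤ M 1 ∧
    (∀ k : ℕ, 1 ≤ k → M k ^ 2 ≤ M (k - 1) * M (k + 1)) ∧
    Tendsto (fun k : ℕ => M k ^ (1 / (k : ℝ))) atTop atTop

/-- The sequence `m k = M k / k!`. -/
def mseq (M : ℕ → ℝ) : ℕ → ℝ := fun k => M k / (Nat.factorial k : ℝ)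

/-- Log-convexity of a sequence. -/
def LogConvexSeq (m : ℕ → ℝ) : Prop := ∀ k : ℕ, 1 ≤ k → m k ^ 2 ≤ m (k - 1) * m (k + 1)

/-- `m k ^ (1/k) → ∞`. -/
def RootTendsToInfty (m : ℕ → ℝ) : Prop :=
  Tendsto (fun k : ℕ => m k ^ (1 / (k : ℝ))) atTop atTop

/-- Moderate growth of a sequence. -/
def ModerateGrowth (M : ℕ → ℝ) : Prop :=
  ∃ C : ℝ, 0 < C ∧ ∀ j k : ℕ, M (j + k) ≤ C ^ (j + k) * M j * M k

/-- Derivation closedness of a sequence. -/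
def DerivClosed (M : ℕ → ℝ) : Prop :=
  ∃ C : ℝ, 0 < C ∧ ∀ k : ℕ, M (k + 1) ≤ C ^ (k + 1) * M k

/-- Non-quasianalyticity: `∑_{k≥1} M (k-1) / M k = ∑_{k≥1} 1/μ_k < ∞`. -/
def NonQuasianalytic (M : ℕ → ℝ) : Prop := Summable fun k : ℕ => M k / M (k + 1)

/-- Quasianalyticity: `∑_{k≥1} 1/μ_k = ∞`. -/
def Quasianalytic (M : ℕ → ℝ) : Prop := ¬ NonQuasianalytic M

/-- The associated function `h_m (t) = inf_k m k * t ^ k`. -/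
def hFun (m : ℕ → ℝ) (t : ℝ) : ℝ := ⨅ k : ℕ, m k * t ^ k

/-- `Γ̄_m (t) = min {k | h_m t = m k * t ^ k}`. -/
def GammaBar (m : ℕ → ℝ) (t : ℝ) : ℕ := sInf {k : ℕ | hFun m t = m k * t ^ k}

/-- `Γ̲_m (t) = min {k | m (k+1) / m k ≥ 1 / t}`. -/
def GammaLow (m : ℕ → ℝ) (t : ℝ) : ℕ := sInf {k : ℕ | 1 / t ≤ m (k + 1) / m k}

/-- The set whose supremum is `mg (M, N)`. -/
def mgSet (M N : ℕ → ℝ) : Set ℝ :=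
  {x | ∃ j k : ℕ, 1 ≤ j + k ∧ x = (M (j + k) / (N j * N k)) ^ (1 / (j + k : ℝ))}

/-- `mg (M, N) = sup_{j+k ≥ 1} (M (j+k) / (N j * N k)) ^ (1/(j+k))`. -/
def mg (M N : ℕ → ℝ) : ℝ := sSup (mgSet M N)

/-- `mg (M, N) < ∞`. -/
def MgFinite (M N : ℕ → ℝ) : Prop := BddAbove (mgSet M N)

/-- A weight sequence is regular: `m k ^ (1/k) → ∞`, derivation closed, and
`Γ̄_m (C t) ≤ Γ̲_m t` for some `C ≥ 1`. -/
def RegularWS (M : ℕ → ℝ) : Prop :=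
  RootTendsToInfty (mseq M) ∧ DerivClosed M ∧
    ∃ C : ℝ, 1 ≤ C ∧ ∀ t : ℝ, 0 < t → GammaBar (mseq M) (C * t) ≤ GammaLow (mseq M) t

/-- `f` is of class `E^{M}` (Roumieu) on the open set `U`. -/
def RoumieuOn {E : Type*} [NormedAddCommGroup E] [NormedSpace ℝ E]
    (M : ℕ → ℝ) (f : E → ℂ) (U : Set E) : Prop :=
  ContDiffOn ℝ (⊤ : ℕ∞) f U ∧
    ∀ V : Set E, IsOpen V → IsCompact (closure V) → closure V ⊆ U →
      ∃ C σ : ℝ, 0 < C ∧ 0 < σ ∧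
        ∀ x ∈ V, ∀ k : ℕ, ‖iteratedFDerivWithin ℝ k f U x‖ ≤ C * σ ^ k * M k

/-- `f` is of class `E^{(M)}` (Beurling) on the open set `U`. -/
def BeurlingOn {E : Type*} [NormedAddCommGroup E] [NormedSpace ℝ E]
    (M : ℕ → ℝ) (f : E → ℂ) (U : Set E) : Prop :=
  ContDiffOn ℝ (⊤ : ℕ∞) f U ∧
    ∀ V : Set E, IsOpen V → IsCompact (closure V) → closure V ⊆ U →
      ∀ σ : ℝ, 0 < σ → ∃ C : ℝ, 0 < C ∧
        ∀ x ∈ V, ∀ k : ℕ, ‖iteratedFDerivWithin ℝ k f U x‖ ≤ C * σ ^ k * M k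

/-- A weight matrix: a nonempty, pointwise totally ordered family of weight sequences. -/
def IsWeightMatrix (W : Set (ℕ → ℝ)) : Prop :=
  W.Nonempty ∧ (∀ M ∈ W, IsWeightSeq M) ∧
    ∀ M ∈ W, ∀ N ∈ W, (∀ k, M k ≤ N k) ∨ (∀ k, N k ≤ M k)

/-- R-regularity of a weight matrix. -/
def RRegular (W : Set (ℕ → ℝ)) : Prop :=
  (∀ M ∈ W, RootTendsToInfty (mseq M)) ∧
    (∀ M ∈ W, ∃ N ∈ W, ∃ C : ℝ, 1 ≤ C ∧ ∀ j : ℕ, M (j + 1) ≤ C ^ (j + 1) * N j) ∧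
    (∀ M ∈ W, ∃ N ∈ W, ∃ C : ℝ, 1 ≤ C ∧
      ∀ t : ℝ, 0 < t → GammaBar (mseq N) (C * t) ≤ GammaLow (mseq M) t)

/-- B-regularity of a weight matrix. -/
def BRegular (W : Set (ℕ → ℝ)) : Prop :=
  (∀ M ∈ W, RootTendsToInfty (mseq M)) ∧
    (∀ M ∈ W, ∃ N ∈ W, ∃ C : ℝ, 1 ≤ C ∧ ∀ j : ℕ, N (j + 1) ≤ C ^ j * M j) ∧
    (∀ M ∈ W, ∃ N ∈ W, ∃ C : ℝ, 1 ≤ C ∧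
      ∀ t : ℝ, 0 < t → GammaBar (mseq M) (C * t) ≤ GammaLow (mseq N) t)

/-- R-moderate growth of a weight matrix. -/
def RModerateGrowth (W : Set (ℕ → ℝ)) : Prop := ∀ M ∈ W, ∃ N ∈ W, MgFinite M N

/-- B-moderate growth of a weight matrix. -/
def BModerateGrowth (W : Set (ℕ → ℝ)) : Prop := ∀ M ∈ W, ∃ N ∈ W, MgFinite N M

/-- `f` is of class `E^{W}` (Roumieu, weight matrix) on the open set `U`. -/
def MatrixRoumieuOn {E : Type*} [NormedAddCommGroup E] [NormedSpace ℝ E]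
    (W : Set (ℕ → ℝ)) (f : E → ℂ) (U : Set E) : Prop :=
  ContDiffOn ℝ (⊤ : ℕ∞) f U ∧
    ∀ V : Set E, IsOpen V → IsCompact (closure V) → closure V ⊆ U →
      ∃ M ∈ W, ∃ C σ : ℝ, 0 < C ∧ 0 < σ ∧
        ∀ x ∈ V, ∀ k : ℕ, ‖iteratedFDerivWithin ℝ k f U x‖ ≤ C * σ ^ k * M k

/-- `f` is of class `E^{(W)}` (Beurling, weight matrix) on the open set `U`. -/
def MatrixBeurlingOn {E : Type*} [NormedAddCommGroup E] [NormedSpace ℝ E]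
    (W : Set (ℕ → ℝ)) (f : E → ℂ) (U : Set E) : Prop :=
  ContDiffOn ℝ (⊤ : ℕ∞) f U ∧
    ∀ V : Set E, IsOpen V → IsCompact (closure V) → closure V ⊆ U →
      ∀ M ∈ W, ∀ σ : ℝ, 0 < σ → ∃ C : ℝ, 0 < C ∧
        ∀ x ∈ V, ∀ k : ℕ, ‖iteratedFDerivWithin ℝ k f U x‖ ≤ C * σ ^ k * M k

/-- `ω` is a weight function. -/
def IsWeightFunction (ω : ℝ → ℝ) : Prop :=
  ContinuousOn ω (Ici 0) ∧ MonotoneOn ω (Ici 0) ∧ (∀ t ∈ Ici (0 : ℝ), 0 ≤ ω t) ∧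
    ((fun t => ω (2 * t)) =O[atTop] ω) ∧ (ω =o[atTop] fun t : ℝ => t) ∧
    ((fun t => Real.log t) =o[atTop] ω) ∧ ConvexOn ℝ (Ici 0) fun t => ω (Real.exp t)

/-- The Young conjugate `φ*_ω (s) = sup_{t ≥ 0} (s t - ω (e^t))`. -/
def phiStar (ω : ℝ → ℝ) (s : ℝ) : ℝ := sSup ((fun t => s * t - ω (Real.exp t)) '' Ici 0)

/-- Non-quasianalyticity of a weight function. -/
def NonQuasianalyticW (ω : ℝ → ℝ) : Prop := IntegrableOn (fun t => ω t / t ^ 2) (Ici 1)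

/-- `f` is of class `E^{ω}` (Roumieu) on the open set `U`. -/
def OmegaRoumieuOn {E : Type*} [NormedAddCommGroup E] [NormedSpace ℝ E]
    (ω : ℝ → ℝ) (f : E → ℂ) (U : Set E) : Prop :=
  ContDiffOn ℝ (⊤ : ℕ∞) f U ∧
    ∀ V : Set E, IsOpen V → IsCompact (closure V) → closure V ⊆ U →
      ∃ C ρ : ℝ, 0 < C ∧ 0 < ρ ∧
        ∀ x ∈ V, ∀ k : ℕ,
          ‖iteratedFDerivWithin ℝ k f U x‖ ≤ C * Real.exp (phiStar ω (ρ * k) / ρ)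

/-- `f` is of class `E^{(ω)}` (Beurling) on the open set `U`. -/
def OmegaBeurlingOn {E : Type*} [NormedAddCommGroup E] [NormedSpace ℝ E]
    (ω : ℝ → ℝ) (f : E → ℂ) (U : Set E) : Prop :=
  ContDiffOn ℝ (⊤ : ℕ∞) f U ∧
    ∀ V : Set E, IsOpen V → IsCompact (closure V) → closure V ⊆ U →
      ∀ ρ : ℝ, 0 < ρ → ∃ C : ℝ, 0 < C ∧
        ∀ x ∈ V, ∀ k : ℕ,
          ‖iteratedFDerivWithin ℝ k f U x‖ ≤ C * Real.exp (phiStar ω (ρ * k) / ρ)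

/-- The open ellipse `Ω_ε` with vertices `± cosh ε` and co-vertices `± i sinh ε`. -/
def OmegaE (ε : ℝ) : Set ℂ :=
  {z : ℂ | (z.re / Real.cosh ε) ^ 2 + (z.im / Real.sinh ε) ^ 2 < 1}

/-- The sequence space `Λ^{M}`. -/
def Lambda (M : ℕ → ℝ) : Set (ℕ → ℂ) :=
  {c | ∃ ρ : ℝ, 0 < ρ ∧ ∃ C : ℝ, ∀ k, ‖c k‖ ≤ C * ρ ^ k * M k}

/-- `L(M)`: all non-quasianalytic weight sequences `N ≥ M` with `n = N/k!` log-convex. -/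
def LM (M : ℕ → ℝ) : Set (ℕ → ℝ) :=
  {N | IsWeightSeq N ∧ NonQuasianalytic N ∧ (∀ k, M k ≤ N k) ∧ LogConvexSeq (mseq N)}

/-- A quasianalytic weight sequence `M` is intersectable if `Λ^{M} = ⋂_{N ∈ L(M)} Λ^{N}`. -/
def Intersectable (M : ℕ → ℝ) : Prop := Lambda M = ⋂ N ∈ LM M, Lambda N


lemma tc_aux (G : ℂ → ℂ) (hG : DifferentiableOn ℂ G (Metric.ball 0 1))
    (E : ℝ) (hE0 : 0 < E) (hE1 : E ≤ 1) (hb : ∀ z ∈ Metric.ball (0:ℂ) 1, ‖G z‖ ≤ 1)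
    (hr : ∀ x : ℝ, |x| < 1 → ‖G x‖ ≤ E) (s : ℝ) (hs : s = 1 ∨ s = -1)
    (u : ℂ) (hu0 : 0 ≤ u.re) (hu1 : u.re ≤ 1/2) :
    ‖G ((Complex.exp (u * (s * (Real.pi/3) * Complex.I)) - 1) /
      (Complex.exp (u * (s * (Real.pi/3) * Complex.I)) + 1))‖ ≤ Real.sqrt E := by
  set w : ℂ → ℂ := fun u => Complex.exp (u * (s * (Real.pi/3) * Complex.I)) with hw
  have hre : ∀ u : ℂ, 0 ≤ u.re → u.re ≤ 1 → 0 < (w u).re := by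
    intro u h0 h1
    simp only [hw, Complex.exp_re]
    apply mul_pos (Real.exp_pos _)
    have : (u * (s * (Real.pi/3) * Complex.I)).im = s * (Real.pi/3) * u.re := by
      have : (u * (s * (Real.pi/3) * Complex.I)) = u * ((s * (Real.pi/3) : ℝ) : ℂ) * Complex.I := by
        push_cast; ring
      rw [this]
      simp [mul_comm]
    rw [this]
    have hc : 0 < Real.cos (Real.pi/3 * u.re) := by
      apply Real.cos_pos_of_mem_Ioo
      constructor <;> nlinarith [Real.pi_pos]
    rcases hs with rfl | rfl
    · simpa using hc
    · have : (-1 : ℝ) * (Real.pi/3) * u.re = -(Real.pi/3 * u.re) := by ring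
      rw [this, Real.cos_neg]; exact hc
  have hball : ∀ v : ℂ, 0 < v.re → (v - 1)/(v+1) ∈ Metric.ball (0:ℂ) 1 := by
    intro v hv
    have h1 : v + 1 ≠ 0 := by
      intro h
      have := congrArg Complex.re h
      simp at this; linarith
    rw [mem_ball_zero_iff, norm_div, div_lt_one (norm_pos_iff.2 h1)]
    rw [← sq_lt_sq₀ (norm_nonneg _) (norm_nonneg _), ← Complex.normSq_eq_norm_sq,
      ← Complex.normSq_eq_norm_sq, Complex.normSq_apply, Complex.normSq_apply]
    simp; nlinarith
  have hdw : Differentiable ℂ w := by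
    intro u; simp only [hw]; fun_prop
  set H : ℂ → ℂ := fun u => G ((w u - 1)/(w u + 1)) with hH
  have hdH : ∀ u : ℂ, 0 ≤ u.re → u.re ≤ 1 → DifferentiableAt ℂ H u := by
    intro u h0 h1
    have hne : w u + 1 ≠ 0 := by
      intro h
      have := congrArg Complex.re h
      simp at this; linarith [hre u h0 h1]
    have hin := hball _ (hre u h0 h1)
    have hGd : DifferentiableAt ℂ G ((w u - 1)/(w u + 1)) :=
      hG.differentiableAt (Metric.isOpen_ball.mem_nhds hin)
    exact DifferentiableAt.comp u hGd
      (((hdw u).sub_const 1).div ((hdw u).add_const 1) hne)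
  have key := Complex.HadamardThreeLines.norm_le_interp_of_mem_verticalClosedStrip₀₁' H
    (z := u) (a := E) (b := 1) ⟨hu0, by linarith⟩ ?_ ?_ ?_ ?_
  · simp only [Real.one_rpow, mul_one] at key
    refine key.trans ?_
    rw [Real.sqrt_eq_rpow]
    exact Real.rpow_le_rpow_of_exponent_ge hE0 hE1 (by linarith)
  · refine ⟨fun z hz => (hdH z hz.1.le hz.2.le).differentiableWithinAt, fun z hz => ?_⟩
    have : z ∈ Complex.HadamardThreeLines.verticalClosedStrip 0 1 := by
      rw [Complex.HadamardThreeLines.verticalStrip, Complex.closure_preimage_re, closure_Ioo zero_ne_one] at hz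
      exact hz
    exact (hdH z this.1 this.2).continuousAt.continuousWithinAt
  · refine ⟨1, ?_⟩
    rintro _ ⟨z, hz, rfl⟩
    exact hb _ (hball _ (hre z hz.1 hz.2))
  · intro z hz
    have hz' : z.re = 0 := hz
    have : ∃ y : ℝ, w z = y := by
      refine ⟨Real.exp (-(z.im * (s * (Real.pi/3)))), ?_⟩
      simp only [hw]
      push_cast
      congr 1
      apply Complex.ext <;> simp [hz']
    obtain ⟨y, hy⟩ := this
    have hpos := hre z hz'.ge (by rw [hz']; norm_num)
    have hin := hball _ hpos
    simp only [hH]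
    have e : (w z - 1)/(w z + 1) = (((y-1)/(y+1) : ℝ) : ℂ) := by rw [hy]; push_cast; rfl
    rw [e] at hin ⊢
    apply hr
    rw [mem_ball_zero_iff, Complex.norm_real] at hin
    exact hin
  · intro z hz
    have hz' : z.re = 1 := hz
    exact hb _ (hball _ (hre z (by rw [hz']; norm_num) hz'.le))

/-- two constants lemma, normalized -/
lemma tc_unit (G : ℂ → ℂ) (hG : DifferentiableOn ℂ G (Metric.ball 0 1))
    (E : ℝ) (hE0 : 0 < E) (hE1 : E ≤ 1) (hb : ∀ z ∈ Metric.ball (0:ℂ) 1, ‖G z‖ ≤ 1)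
    (hr : ∀ x : ℝ, |x| < 1 → ‖G x‖ ≤ E) (z : ℂ) (hz : ‖z‖ ≤ 1/8) :
    ‖G z‖ ≤ Real.sqrt E := by
  have hzre := (Complex.abs_re_le_norm z).trans hz
  have hzim := (Complex.abs_im_le_norm z).trans hz
  rw [abs_le] at hzre hzim
  have h1z : 1 - z ≠ 0 := by
    intro h
    have := congrArg Complex.re h
    simp at this; linarith
  have h1z' : 1 + z ≠ 0 := by
    intro h
    have := congrArg Complex.re h
    simp at this; linarith
  set v := (1+z)/(1-z) with hv
  have hv0 : v ≠ 0 := div_ne_zero h1z' h1z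
  have hvz : (v - 1)/(v+1) = z := by
    have : v + 1 ≠ 0 := by
      have h2 : v + 1 = 2/(1-z) := by rw [hv]; field_simp; ring
      rw [h2]; exact div_ne_zero two_ne_zero h1z
    rw [div_eq_iff this, hv]; field_simp; ring
  have hn : Complex.normSq (1 - z) > 0 := Complex.normSq_pos.2 h1z
  have hvre : 0 < v.re := by
    rw [hv, Complex.div_re, ← add_div]
    apply div_pos _ hn
    simp; nlinarith
  have hsmall : |v.im| ≤ v.re / 2 := by
    rw [hv, Complex.div_re, Complex.div_im, ← add_div, ← sub_div, abs_div, abs_of_pos hn, div_div,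
      mul_comm _ (2:ℝ), ← div_div]
    gcongr
    simp
    rw [abs_le]; constructor <;> nlinarith
  have harg : |v.arg| ≤ Real.pi/6 := by
    rw [Complex.arg_of_re_nonneg hvre.le]
    have hnv : 0 < ‖v‖ := norm_pos_iff.2 hv0
    have h2 : |v.im / ‖v‖| ≤ 1/2 := by
      rw [abs_div, abs_of_pos hnv, div_le_iff₀ hnv]
      have := Complex.re_le_norm v
      linarith
    rw [abs_le] at h2 ⊢
    have h6 : Real.sin (Real.pi/6) = 1/2 := Real.sin_pi_div_six
    have hp := Real.pi_pos
    constructor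
    · rw [Real.le_arcsin_iff_sin_le (by constructor <;> linarith) (by constructor <;> linarith)]
      rw [Real.sin_neg, h6]; linarith
    · rw [Real.arcsin_le_iff_le_sin (by constructor <;> linarith) (by constructor <;> linarith)]
      rw [h6]; linarith
  have hpi : (Real.pi : ℂ) ≠ 0 := by exact_mod_cast Real.pi_ne_zero
  have hI := Complex.I_ne_zero
  have main : ∀ s : ℝ, (s = 1 ∨ s = -1) → 0 ≤ s * v.arg → ‖G z‖ ≤ Real.sqrt E := by
    intro s hs hsa
    set u : ℂ := Complex.log v * (s * 3 / Real.pi) * (-Complex.I) with hu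
    have hs2 : (s:ℂ) * s = 1 := by rcases hs with rfl | rfl <;> norm_num
    have e1 : u * (s * (Real.pi/3) * Complex.I) = Complex.log v := by
      rw [hu]
      have : Complex.log v * (s * 3 / Real.pi) * (-Complex.I) * (s * (Real.pi/3) * Complex.I) =
        Complex.log v * (s * s) * (-(Complex.I * Complex.I)) := by field_simp
      rw [this, hs2, Complex.I_mul_I]; ring
    have ure : u.re = s * v.arg * (3 / Real.pi) := by
      have : u = Complex.log v * ((s * 3 / Real.pi : ℝ) : ℂ) * (-Complex.I) := by
        rw [hu]; push_cast; ring
      rw [this]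
      simp [Complex.log_im]
      ring
    have hle : s * v.arg ≤ Real.pi/6 := by
      refine le_trans ?_ harg
      rcases hs with rfl | rfl
      · simpa using le_abs_self _
      · simpa using neg_le_abs _
    have := tc_aux G hG E hE0 hE1 hb hr s hs u (by rw [ure]; have := Real.pi_pos; positivity) (by
      rw [ure]
      calc s * v.arg * (3/Real.pi) ≤ Real.pi/6 * (3/Real.pi) := by
            have := Real.pi_pos; gcongr
        _ = 1/2 := by have := Real.pi_ne_zero; field_simp; norm_num)
    rw [e1, Complex.exp_log hv0, hvz] at this
    exact this
  rcases le_total 0 v.arg with h | h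
  · exact main 1 (Or.inl rfl) (by rw [one_mul]; exact h)
  · exact main (-1) (Or.inr rfl) (by linarith)

/-- two constants lemma -/
lemma tc_main (G : ℂ → ℂ) (x₀ R B E : ℝ) (hR : 0 < R) (hB : 0 < B) (hE : 0 ≤ E)
    (hG : DifferentiableOn ℂ G (Metric.ball (x₀:ℂ) R))
    (hb : ∀ z ∈ Metric.ball (x₀:ℂ) R, ‖G z‖ ≤ B)
    (hr : ∀ x : ℝ, |x - x₀| < R → ‖G x‖ ≤ E) (z : ℂ) (hz : ‖z - x₀‖ ≤ R/8) :
    ‖G z‖ ≤ Real.sqrt (B * E) := by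
  have hmap : ∀ w ∈ Metric.ball (0:ℂ) 1, (x₀:ℂ) + R * w ∈ Metric.ball (x₀:ℂ) R := by
    intro w hw
    rw [mem_ball_iff_norm, add_sub_cancel_left, norm_mul, Complex.norm_real, Real.norm_of_nonneg hR.le]
    rw [mem_ball_zero_iff] at hw
    nlinarith
  have hRC : (R:ℂ) ≠ 0 := by exact_mod_cast hR.ne'
  have main : ∀ E' : ℝ, 0 < E' → E ≤ E' → E' ≤ B → ‖G z‖ ≤ Real.sqrt (B * E') := by
    intro E' hE' hEE' hEB
    have := tc_unit (fun w => G (x₀ + R * w) / B) ?_ (E'/B) (by positivity)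
      ((div_le_one hB).2 hEB) ?_ ?_ ((z - x₀)/R) ?_
    · have e : (x₀:ℂ) + R * ((z - x₀)/R) = z := by field_simp; ring
      simp only [e] at this
      rw [norm_div, Complex.norm_real, Real.norm_of_nonneg hB.le, div_le_iff₀ hB] at this
      refine this.trans (le_of_eq ?_)
      rw [Real.sqrt_div hE'.le, Real.sqrt_mul hB.le]
      have h2 : Real.sqrt B * Real.sqrt B = B := Real.mul_self_sqrt hB.le
      have h3 : 0 < Real.sqrt B := Real.sqrt_pos.2 hB
      rw [div_mul_eq_mul_div, div_eq_iff h3.ne']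
      calc _ = Real.sqrt E' * (Real.sqrt B * Real.sqrt B) := by rw [h2]
        _ = _ := by ring
    · apply DifferentiableOn.div_const
      apply hG.comp (by fun_prop)
      intro w hw; exact hmap w hw
    · intro w hw
      rw [norm_div, Complex.norm_real, Real.norm_of_nonneg hB.le, div_le_one hB]
      exact hb _ (hmap w hw)
    · intro x hx
      rw [norm_div, Complex.norm_real, Real.norm_of_nonneg hB.le]
      gcongr
      refine le_trans ?_ hEE'
      have := hr (x₀ + R * x) (by
        rw [add_sub_cancel_left, abs_mul, abs_of_pos hR]; nlinarith)
      push_cast at this; exact this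
    · rw [norm_div, Complex.norm_real, Real.norm_of_nonneg hR.le, div_le_iff₀ hR]; linarith
  rcases le_or_gt B E with h | h
  · have : z ∈ Metric.ball (x₀:ℂ) R := by
      rw [mem_ball_iff_norm]; linarith
    refine (hb z this).trans ?_
    apply Real.le_sqrt_of_sq_le; nlinarith
  · have ht : Tendsto (fun E' => Real.sqrt (B * E')) (nhdsWithin E (Ioi E)) (nhds (Real.sqrt (B*E))) := by
      have : Continuous (fun E' => Real.sqrt (B * E')) := by fun_prop
      exact this.continuousAt.continuousWithinAt
    refine ge_of_tendsto ht ?_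
    have : Ioo E B ∈ nhdsWithin E (Ioi E) := Ioo_mem_nhdsGT h
    filter_upwards [this] with E' hE'
    exact main E' (lt_of_le_of_lt hE hE'.1) hE'.1.le hE'.2.le

/-- the d-bar derivative -/
def dbar (V : ℂ → ℂ) (z : ℂ) : ℂ := (fderiv ℝ V z 1 + Complex.I * fderiv ℝ V z Complex.I) / 2

lemma cp_zero (V : ℂ → ℂ) (hV : ContDiff ℝ 1 V) (hc : HasCompactSupport V) :
    ∫ z, dbar V z / z = - (Real.pi * V 0) := by
  obtain ⟨R, hR0, hR⟩ : ∃ R : ℝ, 0 < R ∧ ∀ z : ℂ, R < ‖z‖ → z ∉ tsupport V := by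
    obtain ⟨R, hR⟩ := hc.isBounded.subset_closedBall 0
    refine ⟨max R 1, by positivity, fun z hz hz' => ?_⟩
    have := hR hz'
    rw [mem_closedBall_zero_iff] at this
    exact absurd (lt_of_le_of_lt (le_max_left _ _) hz) (not_lt.2 this)
  have hfd0 : ∀ z : ℂ, R < ‖z‖ → fderiv ℝ V z = 0 := fun z hz => by
    have : z ∉ tsupport (fderiv ℝ V) := fun h => hR z hz (tsupport_fderiv_subset ℝ h)
    exact image_eq_zero_of_notMem_tsupport this
  have hfc : Continuous (fderiv ℝ V) := hV.continuous_fderiv one_ne_zero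
  set e : ℝ → ℂ := fun θ => Complex.exp (θ * Complex.I) with he
  have hec : Continuous e := by simp only [he]; fun_prop
  have hen : ∀ θ, ‖e θ‖ = 1 := fun θ => Complex.norm_exp_ofReal_mul_I θ
  set A : ℝ × ℝ → ℂ := fun p => fderiv ℝ V (p.1 * e p.2) (e p.2) with hA
  set B : ℝ × ℝ → ℂ := fun p => fderiv ℝ V (p.1 * e p.2) (Complex.I * e p.2) with hB
  have hAc : Continuous A := by
    apply (hfc.comp _).clm_apply <;> fun_prop
  have hBc : Continuous B := by
    apply (hfc.comp _).clm_apply <;> fun_prop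
  have hintg : ∀ F : ℝ × ℝ → ℂ, Continuous F → (∀ p, R < |p.1| → F p = 0) →
      IntegrableOn F (Ioi 0 ×ˢ Ioo (-Real.pi) Real.pi) := by
    intro F hF h0
    have h1 : IntegrableOn F (Icc 0 R ×ˢ Icc (-Real.pi) Real.pi) :=
      hF.continuousOn.integrableOn_compact (isCompact_Icc.prod isCompact_Icc)
    refine h1.of_forall_sdiff_eq_zero (measurableSet_Ioi.prod measurableSet_Ioo) ?_
    rintro ⟨r, θ⟩ ⟨⟨h1, h2⟩, h3⟩
    apply h0
    simp only [mem_prod, mem_Icc, mem_Ioi, mem_Ioo] at *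
    by_contra h
    push Not at h
    exact h3 ⟨⟨h1.le, (le_abs_self _).trans h⟩, h2.1.le, h2.2.le⟩
  have hnz : ∀ p : ℝ × ℝ, R < |p.1| → fderiv ℝ V (p.1 * e p.2) = 0 := fun p hp => by
    apply hfd0
    rw [norm_mul, hen, mul_one, Complex.norm_real]; exact hp
  have hAi := hintg A hAc (fun p hp => by simp only [hA, hnz p hp]; rfl)
  have hBi := hintg B hBc (fun p hp => by simp only [hB, hnz p hp]; rfl)
  rw [← Complex.integral_comp_polarCoord_symm]
  have ht : polarCoord.target = Ioi (0:ℝ) ×ˢ Ioo (-Real.pi) Real.pi := rfl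
  rw [ht]
  have hVd : Differentiable ℝ V := hV.differentiable one_ne_zero
  have step1 : ∫ p in Ioi (0:ℝ) ×ˢ Ioo (-Real.pi) Real.pi, p.1 • (dbar V (Complex.polarCoord.symm p) /
      Complex.polarCoord.symm p) = ∫ p in Ioi (0:ℝ) ×ˢ Ioo (-Real.pi) Real.pi,
        (1/2 : ℂ) * (A p + Complex.I * B p) := by
    refine setIntegral_congr_fun (measurableSet_Ioi.prod measurableSet_Ioo) ?_
    rintro ⟨r, θ⟩ ⟨h1, h2⟩
    have hr : (r:ℂ) ≠ 0 := by
      have : (0:ℝ) < r := h1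
      exact_mod_cast this.ne'
    have hez : e θ ≠ 0 := Complex.exp_ne_zero _
    have hcs : ((Real.cos θ : ℂ) + Real.sin θ * Complex.I) = e θ := by
      simp only [he, Complex.exp_mul_I, Complex.ofReal_cos, Complex.ofReal_sin]
    simp only [Complex.polarCoord_symm_apply, hcs]
    simp only [hA, hB, dbar]
    set L := fderiv ℝ V (r * e θ)
    have hl : ∀ z : ℂ, L z = z.re * L 1 + z.im * L Complex.I := by
      intro z
      have : z = z.re • (1:ℂ) + z.im • Complex.I := by
        simp
      conv_lhs => rw [this]
      rw [map_add, map_smul, map_smul]; simp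
    rw [hl (e θ), hl (Complex.I * e θ)]
    rw [Complex.real_smul]
    have hee : e θ * (((e θ).re : ℂ) - (e θ).im * Complex.I) = 1 := by
      have h3 : ((e θ).re : ℂ) - (e θ).im * Complex.I = (starRingEnd ℂ) (e θ) := by
        apply Complex.ext <;> simp
      rw [h3, Complex.mul_conj, Complex.normSq_eq_norm_sq, hen]; norm_num
    have : (r:ℂ) * ((L 1 + Complex.I * L Complex.I) / 2 / (r * e θ)) =
      (L 1 + Complex.I * L Complex.I) / 2 * (((e θ).re : ℂ) - (e θ).im * Complex.I) := by
      rw [eq_comm, div_eq_mul_inv _ (r * e θ)]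
      have : ((r:ℂ) * e θ)⁻¹ = (r:ℂ)⁻¹ * (((e θ).re : ℂ) - (e θ).im * Complex.I) := by
        rw [mul_inv]; congr 1
        exact inv_eq_of_mul_eq_one_right hee
      rw [this]; field_simp
    rw [this]
    simp
    ring_nf
    rw [Complex.I_sq]; ring
  rw [step1, integral_const_mul, integral_add hAi (hBi.const_mul _), integral_const_mul]
  have hBz : ∫ p in Ioi (0:ℝ) ×ˢ Ioo (-Real.pi) Real.pi, B p = 0 := by
    rw [Measure.volume_eq_prod, setIntegral_prod _ (by rw [← Measure.volume_eq_prod]; exact hBi)]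
    refine setIntegral_eq_zero_of_forall_eq_zero ?_
    intro r hr
    have hr0 : (r:ℂ) ≠ 0 := by
      have : (0:ℝ) < r := hr
      exact_mod_cast this.ne'
    have hle : -Real.pi ≤ Real.pi := by linarith [Real.pi_pos]
    rw [← integral_Ioc_eq_integral_Ioo, ← intervalIntegral.integral_of_le hle]
    have hder : ∀ θ ∈ uIcc (-Real.pi) Real.pi, HasDerivAt (fun θ : ℝ => (r:ℂ)⁻¹ * V (r * e θ)) (B (r, θ)) θ := by
      intro θ _
      have h1 : HasDerivAt e (Complex.I * e θ) θ := by
        have h0 : HasDerivAt (fun θ : ℝ => (θ:ℂ) * Complex.I) (1 * Complex.I) θ :=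
          (Complex.ofRealCLM.hasDerivAt (x := θ)).mul_const Complex.I
        have := h0.cexp
        convert this using 1
        simp only [he]; ring
      have h2 := (hVd (r * e θ)).hasFDerivAt.comp_hasDerivAt θ (h1.const_mul (r:ℂ))
      have h3 := h2.const_mul (r:ℂ)⁻¹
      refine HasDerivAt.congr_deriv h3 ?_
      have : (r:ℂ) * (Complex.I * e θ) = r • (Complex.I * e θ) := by simp
      rw [this, map_smul, Complex.real_smul, inv_mul_cancel_left₀ hr0]
    rw [intervalIntegral.integral_eq_sub_of_hasDerivAt hder
      ((hBc.comp (by fun_prop : Continuous fun θ : ℝ => (r, θ))).intervalIntegrable _ _)]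
    have : e Real.pi = e (-Real.pi) := by
      simp only [he]; push_cast
      rw [Complex.exp_pi_mul_I, neg_mul, Complex.exp_neg, Complex.exp_pi_mul_I]; norm_num
    rw [this, sub_self]
  have hAz : ∫ p in Ioi (0:ℝ) ×ˢ Ioo (-Real.pi) Real.pi, A p = - (2 * Real.pi * V 0) := by
    rw [Measure.volume_eq_prod, ← setIntegral_prod_swap]
    rw [setIntegral_prod]
    · have : ∀ θ ∈ Ioo (-Real.pi) Real.pi, ∫ r in Ioi (0:ℝ), A (Prod.swap (θ, r)) = - V 0 := by
        intro θ _
        have hder : ∀ r : ℝ, HasDerivAt (fun r : ℝ => V (r * e θ)) (A (r, θ)) r := by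
          intro r
          have h1 : HasDerivAt (fun r : ℝ => (r:ℂ) * e θ) (1 * e θ) r :=
            (Complex.ofRealCLM.hasDerivAt (x := r)).mul_const (e θ)
          have h2 := (hVd (r * e θ)).hasFDerivAt.comp_hasDerivAt r h1
          refine HasDerivAt.congr_deriv h2 ?_
          rw [one_mul]
        have hcc : Continuous fun r : ℝ => A (r, θ) := hAc.comp (by fun_prop)
        have := integral_Ioi_of_hasDerivAt_of_tendsto' (a := 0) (m := 0) (fun r _ => hder r) ?_ ?_
        · simpa using this
        · have h1 : IntegrableOn (fun r : ℝ => A (r, θ)) (Icc 0 R) :=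
            hcc.continuousOn.integrableOn_compact isCompact_Icc
          refine h1.of_forall_sdiff_eq_zero measurableSet_Ioi ?_
          rintro r ⟨h1, h3⟩
          have : R < |r| := by
            by_contra h
            push Not at h
            exact h3 ⟨le_of_lt h1, (le_abs_self _).trans h⟩
          simp only [hA]
          rw [hnz (r, θ) this]; rfl
        · refine tendsto_const_nhds.congr' ?_
          filter_upwards [eventually_gt_atTop R] with r hr
          have : (r * e θ) ∉ tsupport V := by
            apply hR
            rw [norm_mul, hen, mul_one, Complex.norm_real]
            exact lt_of_lt_of_le hr (le_abs_self _)
          exact (image_eq_zero_of_notMem_tsupport this).symm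
      rw [setIntegral_congr_fun measurableSet_Ioo this, setIntegral_const]
      have hv : (volume : Measure ℝ).real (Ioo (-Real.pi) Real.pi) = 2 * Real.pi := by
        rw [Measure.real, Real.volume_Ioo, ENNReal.toReal_ofReal] <;> linarith [Real.pi_pos]
      rw [hv, Complex.real_smul]; push_cast; ring
    · have := hAi
      rw [Measure.volume_eq_prod, IntegrableOn, ← Measure.prod_restrict] at this
      rw [IntegrableOn, ← Measure.prod_restrict]
      exact this.swap
  rw [hAz, hBz]; ring

lemma cp_main (V : ℂ → ℂ) (hV : ContDiff ℝ 1 V) (hc : HasCompactSupport V) (w : ℂ) :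
    ∫ z, dbar V z / (z - w) = - (Real.pi * V w) := by
  have h := cp_zero (fun z => V (z + w)) (hV.comp (contDiff_id.add contDiff_const))
    (hc.comp_homeomorph (Homeomorph.addRight w))
  rw [zero_add] at h
  rw [← h, ← integral_add_right_eq_self _ w]
  congr 1; ext z
  simp only [dbar, add_sub_cancel_right, fderiv_comp_add_right]

lemma kern_lintegral (a : ℂ) :
    ∫⁻ z in Metric.ball (0:ℂ) 1, ‖(z - a)⁻¹‖ₑ ≤ ENNReal.ofReal (3 * Real.pi) := by
  have h1 : ∫⁻ z in Metric.ball (a:ℂ) 1, ‖(z - a)⁻¹‖ₑ ≤ ENNReal.ofReal (2 * Real.pi) := by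
    rw [← lintegral_indicator Metric.isOpen_ball.measurableSet, ← lintegral_add_right_eq_self _ a,
      ← Complex.lintegral_comp_polarCoord_symm]
    have ht : polarCoord.target = Ioi (0:ℝ) ×ˢ Ioo (-Real.pi) Real.pi := rfl
    rw [ht]
    calc _ ≤ ∫⁻ p in Ioi (0:ℝ) ×ˢ Ioo (-Real.pi) Real.pi,
          (Ioo (0:ℝ) 1 ×ˢ Ioo (-Real.pi) Real.pi).indicator (fun _ => (1 : ENNReal)) p := by
          refine setLIntegral_mono' (measurableSet_Ioi.prod measurableSet_Ioo) ?_
          rintro ⟨r, θ⟩ ⟨hr, hθ⟩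
          have hr : 0 < r := hr
          have hn : ‖Complex.polarCoord.symm (r, θ)‖ = r := by
            rw [Complex.norm_polarCoord_symm]; exact abs_of_pos hr
          by_cases h : r < 1
          · rw [indicator_of_mem (show (r, θ) ∈ (Ioo (0:ℝ) 1 ×ˢ Ioo (-Real.pi) Real.pi) from ⟨⟨hr, h⟩, hθ⟩)]
            rw [indicator_of_mem, add_sub_cancel_right, smul_eq_mul, ← ofReal_norm, norm_inv, hn,
              ← ENNReal.ofReal_mul hr.le, mul_inv_cancel₀ hr.ne', ENNReal.ofReal_one]
            rw [mem_ball_iff_norm, add_sub_cancel_right, hn]; exact h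
          · rw [indicator_of_notMem, smul_zero]
            · exact zero_le
            · rw [mem_ball_iff_norm, add_sub_cancel_right, hn]; exact h
      _ ≤ ∫⁻ p : ℝ × ℝ, (Ioo (0:ℝ) 1 ×ˢ Ioo (-Real.pi) Real.pi).indicator (fun _ => (1 : ENNReal)) p :=
          setLIntegral_le_lintegral _ _
      _ = ENNReal.ofReal (2 * Real.pi) := by
          rw [lintegral_indicator (measurableSet_Ioo.prod measurableSet_Ioo), setLIntegral_one,
            Measure.volume_eq_prod, Measure.prod_prod, Real.volume_Ioo, Real.volume_Ioo]
          rw [← ENNReal.ofReal_mul (by norm_num)]; congr 1; ring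
  calc ∫⁻ z in Metric.ball (0:ℂ) 1, ‖(z - a)⁻¹‖ₑ
      ≤ ∫⁻ z in Metric.ball (a:ℂ) 1 ∪ (Metric.ball (0:ℂ) 1 \ Metric.ball a 1), ‖(z - a)⁻¹‖ₑ := by
        apply lintegral_mono_set
        intro z hz
        by_cases h : z ∈ Metric.ball a 1
        · exact Or.inl h
        · exact Or.inr ⟨hz, h⟩
    _ ≤ (∫⁻ z in Metric.ball (a:ℂ) 1, ‖(z - a)⁻¹‖ₑ) +
        ∫⁻ z in (Metric.ball (0:ℂ) 1 \ Metric.ball a 1), ‖(z - a)⁻¹‖ₑ := lintegral_union_le _ _ _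
    _ ≤ ENNReal.ofReal (2 * Real.pi) + ENNReal.ofReal (Real.pi) := by
        gcongr
        calc ∫⁻ z in (Metric.ball (0:ℂ) 1 \ Metric.ball a 1), ‖(z - a)⁻¹‖ₑ
            ≤ ∫⁻ z in (Metric.ball (0:ℂ) 1 \ Metric.ball a 1), 1 := by
              refine setLIntegral_mono' (measurableSet_ball.diff measurableSet_ball) ?_
              rintro z ⟨_, hz⟩
              rw [mem_ball_iff_norm, not_lt] at hz
              rw [← ofReal_norm, norm_inv, ← ENNReal.ofReal_one]
              exact ENNReal.ofReal_le_ofReal (inv_le_one_of_one_le₀ hz)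
          _ ≤ volume (Metric.ball (0:ℂ) 1) := by
              rw [setLIntegral_one]; exact measure_mono sdiff_subset
          _ = ENNReal.ofReal Real.pi := by
              rw [Complex.volume_ball]
              simp [← NNReal.coe_real_pi, ENNReal.ofReal_coe_nnreal]
    _ = _ := by rw [← ENNReal.ofReal_add] <;> [congr 1; skip; skip] <;> [ring; positivity; positivity]

lemma dbar_mul {f g : ℂ → ℂ} {z : ℂ} (hf : DifferentiableAt ℝ f z) (hg : DifferentiableAt ℝ g z) :
    dbar (fun z => f z * g z) z = dbar f z * g z + f z * dbar g z := by
  simp only [dbar]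
  rw [fderiv_fun_mul hf hg]
  simp; ring

lemma dbar_holo {f : ℂ → ℂ} {z : ℂ} (hf : DifferentiableAt ℂ f z) : dbar f z = 0 := by
  have h := hf.hasFDerivAt.restrictScalars ℝ
  simp only [dbar]
  rw [h.fderiv]
  have : fderiv ℂ f z Complex.I = Complex.I * fderiv ℂ f z 1 := by
    have : Complex.I = Complex.I • (1:ℂ) := by simp
    conv_lhs => rw [this]
    rw [map_smul, smul_eq_mul]
  simp only [ContinuousLinearMap.coe_restrictScalars']
  rw [this, ← mul_assoc, Complex.I_mul_I]; ring

lemma dbar_conj {f : ℂ → ℂ} {f' : ℂ} {z : ℂ} (hf : HasDerivAt f f' z) :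
    dbar (fun z => (starRingEnd ℂ) (f z)) z = (starRingEnd ℂ) f' := by
  have h := hf.hasFDerivAt.restrictScalars ℝ
  have h2 := (Complex.conjCLE.toContinuousLinearMap.hasFDerivAt (x := f z)).comp z h
  have h3 : HasFDerivAt (fun z => (starRingEnd ℂ) (f z)) _ z := h2
  simp only [dbar]
  rw [h3.fderiv]
  simp
  ring_nf
  rw [Complex.I_sq]; ring

lemma dbar_inv {f : ℂ → ℂ} {z : ℂ} (hf : DifferentiableAt ℝ f z) (h0 : f z ≠ 0) :
    dbar (fun z => (f z)⁻¹) z = - dbar f z / (f z)^2 := by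
  have h1 : DifferentiableAt ℝ (fun z => (f z)⁻¹) z := hf.inv h0
  have h2 := dbar_mul hf h1
  have h3 : dbar (fun z => f z * (f z)⁻¹) z = 0 := by
    have : (fun z => f z * (f z)⁻¹) =ᶠ[nhds z] fun _ => 1 := by
      filter_upwards [hf.continuousAt.eventually_ne h0] with w hw
      exact mul_inv_cancel₀ hw
    simp only [dbar, this.fderiv_eq]; simp
  rw [h3] at h2
  field_simp at h2 ⊢
  linear_combination -h2

lemma pow_sub_bound (j : ℕ) (x y : ℂ) (B : ℝ) (hx : ‖x‖ ≤ B) (hy : ‖y‖ ≤ B) :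
    ‖x^j - y^j‖ ≤ j * B^(j-1) * ‖x - y‖ := by
  have hB : 0 ≤ B := (norm_nonneg x).trans hx
  rw [← (Commute.all x y).geom_sum₂_mul, norm_mul]
  gcongr
  refine (norm_sum_le _ _).trans ?_
  refine (Finset.sum_le_card_nsmul _ _ (B^(j-1)) ?_).trans (by simp)
  intro k hk
  rw [Finset.mem_range] at hk
  rw [norm_mul, norm_pow, norm_pow]
  calc ‖x‖^k * ‖y‖^(j-1-k) ≤ B^k * B^(j-1-k) := by gcongr
    _ = B^(j-1) := by rw [← pow_add]; congr 1; omega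

lemma ca_alg (j : ℕ) (hj : 1 ≤ j) (d : ℝ) (hd : 0 < d) (hd1 : d ≤ 1) (p q : ℂ) (hp : ‖p‖ ≤ 1)
    (hq : ‖q‖ ≤ 1) (h : ‖q^j - p^(j+1)‖ ≤ d^(j*(j+1))) (D : ℝ) (hD : D = ‖p‖^2 + (d^j)^2) :
    ‖q‖ * ‖p‖ ≤ 2 * D ∧ ‖q‖ * (d^j)^2 ≤ 2 * d^(j+1) * D ∧
    ‖q‖ * (d^j)^2 * ‖p‖ ≤ d * D^2 ∧
    ∀ u : ℂ, u * D = q * (starRingEnd ℂ) p → ‖u‖ ≤ 2 ∧ ‖u * p - q‖ ≤ 2 * d^(j+1) ∧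
      ‖u^j - p‖ ≤ (j * 2^j + 2^(j+1) + 1) * d := by
  have hj0 : (j:ℝ) ≠ 0 := by positivity
  obtain ⟨b, hb0, hb⟩ : ∃ b : ℝ, 0 ≤ b ∧ b^j = ‖p‖ :=
    ⟨‖p‖ ^ ((j:ℝ)⁻¹), by positivity, Real.rpow_inv_natCast_pow (norm_nonneg _) (by omega)⟩
  have hDpos : 0 < D := by rw [hD]; positivity
  have hb1 : b ≤ 1 := by
    by_contra hc
    push Not at hc
    have := one_lt_pow₀ hc (by omega : j ≠ 0)
    linarith
  have hqb : ‖q‖ ≤ b^(j+1) + d^(j+1) := by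
    refine le_of_pow_le_pow_left₀ (by omega : j ≠ 0) (by positivity) ?_
    calc ‖q‖^j = ‖q^j‖ := (norm_pow _ _).symm
      _ ≤ ‖q^j - p^(j+1)‖ + ‖p^(j+1)‖ := by simpa using norm_add_le (q^j - p^(j+1)) (p^(j+1))
      _ ≤ d^(j*(j+1)) + ‖p‖^(j+1) := by rw [norm_pow]; gcongr
      _ = (d^(j+1))^j + (b^(j+1))^j := by rw [← hb]; ring
      _ ≤ (d^(j+1) + b^(j+1))^j := pow_add_pow_le (by positivity) (by positivity) (by omega)
      _ = _ := by rw [add_comm]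
  obtain ⟨i, rfl⟩ : ∃ i, j = i + 1 := ⟨j-1, by omega⟩
  set δ := d^(i+1) with hδ
  have hδ0 : 0 < δ := by positivity
  have hδ1 : δ ≤ 1 := pow_le_one₀ hd.le hd1
  have hpn := norm_nonneg p
  have e1 : b^(i+1+1) = b * ‖p‖ := by rw [← hb]; ring
  have e2 : d^(i+1+1) = d * δ := by rw [hδ]; ring
  have A1 : ‖q‖ * ‖p‖ ≤ (b + d) * D := by
    rw [e1, e2] at hqb
    have : ‖q‖ * ‖p‖ ≤ (b*‖p‖ + d*δ) * ‖p‖ := by gcongr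
    have h3 : δ * ‖p‖ ≤ D := by rw [hD]; nlinarith [sq_nonneg (δ - ‖p‖)]
    have h4 : ‖p‖^2 ≤ D := by rw [hD]; nlinarith
    nlinarith
  have A2 : ‖q‖ * δ^2 ≤ 2 * d^(i+1+1) * D := by
    have k1 : b^(i+1+1) * d^i ≤ D := by
      rw [hD, ← hb, hδ, ← pow_mul, ← pow_mul]
      rcases le_total b d with hbd | hbd
      · calc b^(i+1+1)*d^i ≤ d^(i+1+1)*d^i := by gcongr
          _ = d^((i+1)*2) := by ring
          _ ≤ _ := le_add_of_nonneg_left (by positivity)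
      · calc b^(i+1+1)*d^i ≤ b^(i+1+1)*b^i := by gcongr
          _ = b^((i+1)*2) := by ring
          _ ≤ _ := le_add_of_nonneg_right (by positivity)
    have k2 : b^(i+1+1) * δ^2 ≤ d^(i+1+1) * D := by
      calc b^(i+1+1) * δ^2 = d^(i+1+1) * (b^(i+1+1) * d^i) := by rw [hδ]; ring
        _ ≤ _ := by gcongr
    have k3 : δ^2 ≤ D := by rw [hD]; nlinarith
    calc ‖q‖ * δ^2 ≤ (b^(i+1+1) + d^(i+1+1)) * δ^2 := by gcongr
      _ = b^(i+1+1)*δ^2 + d^(i+1+1) * δ^2 := by ring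
      _ ≤ d^(i+1+1) * D + d^(i+1+1) * D := by gcongr
      _ = _ := by ring
  refine ⟨A1.trans (by nlinarith), A2, ?_, ?_⟩
  · have h3 : 2 * δ * ‖p‖ ≤ D := by rw [hD]; nlinarith [sq_nonneg (δ - ‖p‖)]
    calc ‖q‖ * δ^2 * ‖p‖ ≤ 2 * d^(i+1+1) * D * ‖p‖ := by gcongr
      _ = d * D * (2 * δ * ‖p‖) := by rw [e2]; ring
      _ ≤ d * D * D := by gcongr
      _ = _ := by ring
  · intro u hu
    have hun : ‖u‖ * D = ‖q‖ * ‖p‖ := by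
      have := congrArg norm hu
      rw [norm_mul, norm_mul, Complex.norm_real, Real.norm_of_nonneg hDpos.le, RCLike.norm_conj] at this
      exact this
    have hub : ‖u‖ ≤ b + d := by
      refine le_of_mul_le_mul_right ?_ hDpos
      rw [hun]; exact A1
    have hu2 : ‖u‖ ≤ 2 := by linarith
    have B1 : ‖u * p - q‖ ≤ 2 * d^(i+1+1) := by
      refine le_of_mul_le_mul_right ?_ hDpos
      refine le_trans (le_of_eq ?_) A2
      have : (u * p - q) * D = - (q * (δ:ℂ)^2) := by
        have h5 : (starRingEnd ℂ) p * p = ((‖p‖^2 : ℝ) : ℂ) := by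
          rw [mul_comm, Complex.mul_conj, Complex.normSq_eq_norm_sq]
        have h6 : (D:ℂ) = ((‖p‖^2 : ℝ):ℂ) + (δ:ℂ)^2 := by rw [hD]; push_cast; ring
        calc (u * p - q) * D = (u * D) * p - q * D := by ring
          _ = q * ((starRingEnd ℂ) p * p) - q * D := by rw [hu]; ring
          _ = _ := by rw [h5, h6]; ring
      have h7 := congrArg norm this
      rw [norm_mul, Complex.norm_real, Real.norm_of_nonneg hDpos.le, norm_neg, norm_mul, norm_pow,
        Complex.norm_real, Real.norm_of_nonneg hδ0.le] at h7
      exact h7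
    refine ⟨hu2, B1, ?_⟩
    have hC : (0:ℝ) ≤ ((i+1 : ℕ):ℝ) * 2^(i+1) := by positivity
    rcases le_or_gt d ‖p‖ with hc | hc
    · have B2 : ‖(u*p)^(i+1) - q^(i+1)‖ ≤ ((i+1 : ℕ):ℝ) * 2^(i+1) * d^(i+1+1) := by
        have := pow_sub_bound (i+1) (u*p) q 2 (by rw [norm_mul]; nlinarith [norm_nonneg u]) (by linarith)
        refine this.trans ?_
        calc _ ≤ (((i+1 : ℕ):ℝ) * 2^(i+1-1)) * (2 * d^(i+1+1)) := by gcongr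
          _ = _ := by simp only [Nat.add_sub_cancel]; ring
      have B3 : ‖p‖^(i+1) * ‖u^(i+1) - p‖ ≤ (((i+1 : ℕ):ℝ) * 2^(i+1) + 1) * d^(i+1+1) := by
        rw [← norm_pow, ← norm_mul]
        calc ‖p^(i+1) * (u^(i+1) - p)‖ = ‖((u*p)^(i+1) - q^(i+1)) + (q^(i+1) - p^(i+1+1))‖ := by
              congr 1; ring
          _ ≤ ((i+1 : ℕ):ℝ) * 2^(i+1) * d^(i+1+1) + d^((i+1)*(i+1+1)) :=
              (norm_add_le _ _).trans (add_le_add B2 h)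
          _ ≤ ((i+1 : ℕ):ℝ) * 2^(i+1) * d^(i+1+1) + d^(i+1+1) := by
              have : d^((i+1)*(i+1+1)) ≤ d^(i+1+1) :=
                pow_le_pow_of_le_one hd.le hd1 (by nlinarith)
              linarith
          _ = _ := by ring
      have B4 : δ * ‖u^(i+1) - p‖ ≤ δ * ((((i+1 : ℕ):ℝ) * 2^(i+1) + 1) * d) := by
        calc δ * ‖u^(i+1) - p‖ ≤ ‖p‖^(i+1) * ‖u^(i+1) - p‖ := by rw [hδ]; gcongr
          _ ≤ _ := B3
          _ = _ := by rw [e2]; ring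
      have B5 := le_of_mul_le_mul_left B4 hδ0
      refine B5.trans ?_
      gcongr
      have : (0:ℝ) ≤ 2^(i+1+1) := by positivity
      linarith
    · have C1 : ‖u‖^(i+1) ≤ 2^(i+1+1) * d := by
        have hδd : δ ≤ d := by
          rw [hδ, pow_succ]; exact mul_le_of_le_one_left hd.le (pow_le_one₀ hd.le hd1)
        calc ‖u‖^(i+1) ≤ (b + d)^(i+1) := by gcongr
          _ ≤ 2^(i+1-1) * (b^(i+1) + d^(i+1)) := add_pow_le hb0 hd.le _
          _ ≤ 2^(i+1-1) * (d + d) := by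
              rw [hb]; gcongr
          _ = 2^(i+1) * d := by simp; ring
          _ ≤ _ := by gcongr <;> norm_num
      calc ‖u^(i+1) - p‖ ≤ ‖u‖^(i+1) + ‖p‖ := by rw [← norm_pow]; exact norm_sub_le _ _
        _ ≤ 2^(i+1+1)*d + d := by gcongr
        _ ≤ _ := by nlinarith

lemma dbar_cont {V : ℂ → ℂ} (hV : ContDiff ℝ 1 V) : Continuous (dbar V) := by
  have hfc : Continuous (fderiv ℝ V) := hV.continuous_fderiv one_ne_zero
  unfold dbar
  fun_prop

lemma dbar_congr {V W : ℂ → ℂ} {z : ℂ} (h : V =ᶠ[nhds z] W) : dbar V z = dbar W z := by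
  simp only [dbar, h.fderiv_eq]

lemma dbar_const (c : ℂ) (z : ℂ) : dbar (fun _ => c) z = 0 := by simp [dbar]

/-- cutoff functions -/
lemma exists_cutoff (r R : ℝ) (hr : 0 < r) (hR : r < R) : ∃ (χ : ℂ → ℂ) (K : ℝ), 0 ≤ K ∧ ContDiff ℝ 1 χ ∧
    HasCompactSupport χ ∧ (∀ z, ‖χ z‖ ≤ 1) ∧ (∀ z, ‖z‖ < r → χ z = 1) ∧
    (∀ z, z ∈ tsupport χ → ‖z‖ ≤ R) ∧
    (∀ z, ‖dbar χ z‖ ≤ K) ∧ (∀ z, ‖z‖ < r → dbar χ z = 0) ∧ (∀ z, R < ‖z‖ → dbar χ z = 0) := by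
  let φ : ContDiffBump (0:ℂ) := ⟨r, R, hr, hR⟩
  set χ : ℂ → ℂ := fun z => ((φ z : ℝ) : ℂ) with hχ
  have h1 : ContDiff ℝ 1 χ := Complex.ofRealCLM.contDiff.comp φ.contDiff
  have hs : ∀ z, z ∈ tsupport χ → ‖z‖ ≤ R := by
    intro z hz
    have : z ∈ tsupport φ := by
      refine closure_mono ?_ hz
      intro w hw
      simp only [hχ, Function.mem_support] at hw ⊢
      exact_mod_cast hw
    rw [φ.tsupport_eq, mem_closedBall_zero_iff] at this
    exact this
  have hc : HasCompactSupport χ := by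
    refine HasCompactSupport.of_support_subset_isCompact (isCompact_closedBall (0:ℂ) R) ?_
    intro z hz
    rw [mem_closedBall_zero_iff]
    exact hs z (subset_tsupport _ hz)
  have hout : ∀ z, R < ‖z‖ → dbar χ z = 0 := by
    intro z hz
    have : z ∉ tsupport χ := fun h => absurd (hs z h) (not_le.2 hz)
    rw [dbar_congr (notMem_tsupport_iff_eventuallyEq.1 this)]
    exact dbar_const 0 z
  have hin : ∀ z, ‖z‖ < r → χ z = 1 := by
    intro z hz
    simp only [hχ]
    rw [φ.one_of_mem_closedBall (by rw [mem_closedBall_zero_iff]; exact hz.le)]; simp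
  have hdc : HasCompactSupport (dbar χ) := by
    refine HasCompactSupport.of_support_subset_isCompact (isCompact_closedBall (0:ℂ) R) ?_
    intro z hz
    rw [mem_closedBall_zero_iff]
    by_contra h
    exact hz (hout z (not_le.1 h))
  obtain ⟨K, hK⟩ := hdc.exists_bound_of_continuous (dbar_cont h1)
  refine ⟨χ, K, (norm_nonneg _).trans (hK 0), h1, hc, ?_, hin, hs, hK, ?_, hout⟩
  · intro z
    simp only [hχ]
    rw [Complex.norm_real, Real.norm_of_nonneg φ.nonneg]; exact φ.le_one
  · intro z hz
    have : χ =ᶠ[nhds z] fun _ => 1 := by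
      have : Metric.ball (0:ℂ) r ∈ nhds z := Metric.isOpen_ball.mem_nhds (by simpa using hz)
      filter_upwards [this] with w hw
      exact hin w (by simpa using hw)
    rw [dbar_congr this]; exact dbar_const 1 z

lemma ca_solve : ∃ C : ℝ, 0 < C ∧ ∀ U : ℂ → ℂ, ContDiff ℝ 1 U → (∀ z ∈ Metric.ball (0:ℂ) 1, ‖U z‖ ≤ 2) →
    ∀ (S : Multiset ℂ) (d : ℝ), 0 ≤ d →
    (∀ᵐ z, z ∈ Metric.ball (0:ℂ) 1 →
      ‖dbar U z‖ₑ ≤ ENNReal.ofReal d * (S.map fun a => ‖(z-a)⁻¹‖ₑ).sum) →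
    ∃ F : ℂ → ℂ, DifferentiableOn ℂ F (Metric.ball 0 (1/4)) ∧
      (∀ z ∈ Metric.ball (0:ℂ) (1/4), ‖F z‖ ≤ C) ∧
      ∫⁻ z in Metric.ball (0:ℂ) (1/4), ‖U z - F z‖ₑ ≤ ENNReal.ofReal (C * Multiset.card S * d) := by
  obtain ⟨χ, K, hK0, hχ, hχc, hχ1, hχin, hχs, hχK, hd0, hd1⟩ := exists_cutoff (1/2) (3/4) (by norm_num) (by norm_num)
  refine ⟨8 * K + 9 * Real.pi, by positivity, ?_⟩
  intro U hU hU2 S d hd hS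
  have hpi : (Real.pi : ℂ) ≠ 0 := by exact_mod_cast Real.pi_ne_zero
  set ψ : ℂ → ℂ := fun z => dbar χ z * U z with hψ
  have hψc : Continuous ψ := (dbar_cont hχ).mul hU.continuous
  have hψ0 : ∀ z, z ∉ Metric.ball (0:ℂ) 1 → ψ z = 0 := by
    intro z hz
    rw [mem_ball_zero_iff, not_lt] at hz
    simp only [hψ]; rw [hd1 z (by linarith), zero_mul]
  have hψK : ∀ z, ‖ψ z‖ ≤ (Metric.ball (0:ℂ) 1).indicator (fun _ => 2 * K) z := by
    intro z
    by_cases hz : z ∈ Metric.ball (0:ℂ) 1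
    · rw [indicator_of_mem hz]
      simp only [hψ]; rw [norm_mul, mul_comm 2 K]
      exact mul_le_mul (hχK z) (hU2 z hz) (norm_nonneg _) hK0
    · rw [indicator_of_notMem hz, hψ0 z hz, norm_zero]
  have hball : volume (Metric.ball (0:ℂ) 1) = ENNReal.ofReal Real.pi := by
    rw [Complex.volume_ball]
    simp [← NNReal.coe_real_pi, ENNReal.ofReal_coe_nnreal]
  have hconst : ∀ c : ℝ, Integrable ((Metric.ball (0:ℂ) 1).indicator (fun _ => c)) := by
    intro c
    rw [integrable_indicator_iff measurableSet_ball]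
    exact integrableOn_const (by rw [hball]; exact ENNReal.ofReal_ne_top)
  -- kernel away from the support
  have hψn : ∀ z w : ℂ, ‖w‖ < 1/4 → ‖ψ z / (z - w)‖ ≤ (Metric.ball (0:ℂ) 1).indicator (fun _ => 8 * K) z := by
    intro z w hw
    by_cases hz : ‖z‖ < 1/2
    · simp only [hψ]
      rw [hd0 z hz, zero_mul, zero_div, norm_zero]
      exact indicator_nonneg (fun _ _ => by positivity) _
    · have h4 : 1/4 ≤ ‖z - w‖ := by
        have := norm_sub_norm_le z w
        linarith
      rw [norm_div]
      calc ‖ψ z‖ / ‖z - w‖ ≤ ‖ψ z‖ / (1/4) := by gcongr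
        _ = 4 * ‖ψ z‖ := by ring
        _ ≤ 4 * (Metric.ball (0:ℂ) 1).indicator (fun _ => 2 * K) z := by gcongr; exact hψK z
        _ = _ := by
          by_cases hz : z ∈ Metric.ball (0:ℂ) 1
          · rw [indicator_of_mem hz, indicator_of_mem hz]; ring
          · rw [indicator_of_notMem hz, indicator_of_notMem hz]; ring
  have hmeas : ∀ w : ℂ, AEStronglyMeasurable (fun z => ψ z / (z - w)) := by
    intro w
    exact (hψc.measurable.div (measurable_id.sub_const w)).aestronglyMeasurable
  have hψi : ∀ w : ℂ, ‖w‖ < 1/4 → Integrable (fun z => ψ z / (z - w)) := by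
    intro w hw
    exact (hconst (8*K)).mono' (hmeas w) (Eventually.of_forall fun z => hψn z w hw)
  set F : ℂ → ℂ := fun w => -(Real.pi:ℂ)⁻¹ * ∫ z, ψ z / (z - w) with hF
  refine ⟨F, ?_, ?_, ?_⟩
  · intro w hw
    rw [mem_ball_zero_iff] at hw
    have h1 := hasDerivAt_integral_of_dominated_loc_of_deriv_le (μ := volume) (𝕜 := ℂ)
      (F := fun w z => ψ z / (z - w)) (F' := fun w z => ψ z / (z - w)^2) (x₀ := w)
      (s := Metric.ball 0 (1/4)) (bound := (Metric.ball (0:ℂ) 1).indicator (fun _ => 32 * K))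
      (Metric.isOpen_ball.mem_nhds (by simpa using hw)) (Eventually.of_forall hmeas) (hψi w hw)
      ?_ ?_ (hconst _) ?_
    · exact (h1.2.const_mul _).differentiableAt.differentiableWithinAt
    · exact (hψc.measurable.div ((measurable_id.sub_const w).pow_const 2)).aestronglyMeasurable
    · refine Eventually.of_forall fun z v hv => ?_
      rw [mem_ball_zero_iff] at hv
      by_cases hz : ‖z‖ < 1/2
      · simp only [hψ]
        rw [hd0 z hz, zero_mul, zero_div, norm_zero]
        exact indicator_nonneg (fun _ _ => by positivity) _
      · have h4 : 1/4 ≤ ‖z - v‖ := by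
          have := norm_sub_norm_le z v
          linarith
        rw [pow_two, ← div_div, norm_div]
        calc ‖ψ z / (z - v)‖ / ‖z - v‖ ≤ ‖ψ z / (z - v)‖ / (1/4) := by gcongr
          _ = 4 * ‖ψ z / (z - v)‖ := by ring
          _ ≤ 4 * (Metric.ball (0:ℂ) 1).indicator (fun _ => 8 * K) z := by gcongr; exact hψn z v hv
          _ = _ := by
            by_cases hz : z ∈ Metric.ball (0:ℂ) 1
            · rw [indicator_of_mem hz, indicator_of_mem hz]; ring
            · rw [indicator_of_notMem hz, indicator_of_notMem hz]; ring
    · refine Eventually.of_forall fun z v hv => ?_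
      rw [mem_ball_zero_iff] at hv
      by_cases hz : ‖z‖ < 1/2
      · have : ψ z = 0 := by simp only [hψ]; rw [hd0 z hz, zero_mul]
        simp only [this, zero_div]
        exact hasDerivAt_const _ _
      · have h4 : z - v ≠ 0 := by
          intro h
          rw [sub_eq_zero] at h
          rw [h] at hz; linarith
        have h5 : HasDerivAt (fun v => z - v) (-1) v := (hasDerivAt_id v).const_sub z
        have h6 := (h5.inv h4).const_mul (ψ z)
        refine (h6.congr_deriv ?_)
        field_simp
  · intro w hw
    rw [mem_ball_zero_iff] at hw
    simp only [hF]
    rw [norm_mul, norm_neg, norm_inv, Complex.norm_real, Real.norm_of_nonneg Real.pi_pos.le]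
    have : ‖∫ z, ψ z / (z - w)‖ ≤ 8 * K * Real.pi := by
      refine (norm_integral_le_of_norm_le (hconst (8*K)) (Eventually.of_forall fun z => hψn z w hw)).trans ?_
      rw [integral_indicator measurableSet_ball, setIntegral_const, Measure.real, hball,
        ENNReal.toReal_ofReal Real.pi_pos.le, smul_eq_mul]
      linarith
    calc Real.pi⁻¹ * ‖∫ z, ψ z / (z - w)‖ ≤ Real.pi⁻¹ * (8 * K * Real.pi) := by gcongr
      _ = 8 * K := by field_simp
      _ ≤ _ := by linarith [Real.pi_pos]
  · -- the L1 estimate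
    set η : ℂ → ℂ := fun z => χ z * dbar U z with hη
    have hηc : Continuous η := hχ.continuous.mul (dbar_cont hU)
    have hη0 : ∀ z, z ∉ Metric.ball (0:ℂ) 1 → η z = 0 := by
      intro z hz
      rw [mem_ball_zero_iff, not_lt] at hz
      have : z ∉ tsupport χ := fun h => by linarith [hχs z h]
      simp only [hη]; rw [image_eq_zero_of_notMem_tsupport this, zero_mul]
    obtain ⟨T, hT⟩ := (hχc.mul_right (f' := dbar U)).exists_bound_of_continuous hηc
    have hdiff : ∀ w : ℂ, ‖w‖ < 1/4 → U w - F w = -(Real.pi:ℂ)⁻¹ * ∫ z, η z / (z - w) := by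
      intro w hw
      have hcp := cp_main (fun z => χ z * U z) (hχ.mul hU) hχc.mul_right w
      have hsp : ∀ z, dbar (fun z => χ z * U z) z / (z - w) = ψ z / (z - w) + η z / (z - w) := by
        intro z
        rw [dbar_mul (hχ.differentiable one_ne_zero z) (hU.differentiable one_ne_zero z), add_div]
      have hηi : Integrable (fun z => η z / (z - w)) := by
        refine ⟨(hηc.measurable.div (measurable_id.sub_const w)).aestronglyMeasurable, ?_⟩
        rw [HasFiniteIntegral]
        calc ∫⁻ z, ‖η z / (z - w)‖ₑ ≤ ∫⁻ z, (Metric.ball (0:ℂ) 1).indicator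
              (fun z => ENNReal.ofReal T * ‖(z - w)⁻¹‖ₑ) z := by
              refine lintegral_mono fun z => ?_
              by_cases hz : z ∈ Metric.ball (0:ℂ) 1
              · rw [indicator_of_mem hz, div_eq_mul_inv, enorm_mul]
                gcongr
                rw [← ofReal_norm]; exact ENNReal.ofReal_le_ofReal (hT z)
              · rw [indicator_of_notMem hz, hη0 z hz]; simp
          _ = ENNReal.ofReal T * ∫⁻ z in Metric.ball (0:ℂ) 1, ‖(z - w)⁻¹‖ₑ := by
              rw [lintegral_indicator measurableSet_ball, lintegral_const_mul _ (by fun_prop)]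
          _ ≤ ENNReal.ofReal T * ENNReal.ofReal (3 * Real.pi) := by gcongr; exact kern_lintegral w
          _ < ⊤ := ENNReal.mul_lt_top ENNReal.ofReal_lt_top ENNReal.ofReal_lt_top
      simp only [hsp] at hcp
      rw [integral_add (hψi w hw) hηi, hχin w (by linarith), one_mul] at hcp
      simp only [hF]
      field_simp
      linear_combination hcp
    calc ∫⁻ w in Metric.ball (0:ℂ) (1/4), ‖U w - F w‖ₑ
        ≤ ∫⁻ w in Metric.ball (0:ℂ) (1/4), ENNReal.ofReal Real.pi⁻¹ *
          ∫⁻ z in Metric.ball (0:ℂ) 1, ‖dbar U z‖ₑ * ‖(z - w)⁻¹‖ₑ := by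
          refine setLIntegral_mono' measurableSet_ball fun w hw => ?_
          rw [mem_ball_zero_iff] at hw
          rw [hdiff w hw, enorm_mul]
          have e1 : ‖-(Real.pi:ℂ)⁻¹‖ₑ = ENNReal.ofReal Real.pi⁻¹ := by
            rw [← ofReal_norm, norm_neg, norm_inv, Complex.norm_real, Real.norm_of_nonneg Real.pi_pos.le]
          rw [e1]
          gcongr
          refine (enorm_integral_le_lintegral_enorm _).trans ?_
          rw [← lintegral_indicator measurableSet_ball]
          refine lintegral_mono fun z => ?_
          by_cases hz : z ∈ Metric.ball (0:ℂ) 1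
          · rw [indicator_of_mem hz, div_eq_mul_inv, enorm_mul]
            gcongr
            simp only [hη]; rw [enorm_mul]
            have : ‖χ z‖ₑ ≤ 1 := by
              rw [← ofReal_norm, ← ENNReal.ofReal_one]; exact ENNReal.ofReal_le_ofReal (hχ1 z)
            calc _ ≤ 1 * ‖dbar U z‖ₑ := by gcongr
              _ = _ := one_mul _
          · rw [indicator_of_notMem hz, hη0 z hz]; simp
      _ ≤ ∫⁻ w in Metric.ball (0:ℂ) 1, ENNReal.ofReal Real.pi⁻¹ *
          ∫⁻ z in Metric.ball (0:ℂ) 1, ‖dbar U z‖ₑ * ‖(z - w)⁻¹‖ₑ :=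
          lintegral_mono_set (Metric.ball_subset_ball (by norm_num))
      _ = ENNReal.ofReal Real.pi⁻¹ * ∫⁻ w in Metric.ball (0:ℂ) 1,
          ∫⁻ z in Metric.ball (0:ℂ) 1, ‖dbar U z‖ₑ * ‖(z - w)⁻¹‖ₑ :=
          lintegral_const_mul' _ _ ENNReal.ofReal_ne_top
      _ = ENNReal.ofReal Real.pi⁻¹ * ∫⁻ z in Metric.ball (0:ℂ) 1,
          ∫⁻ w in Metric.ball (0:ℂ) 1, ‖dbar U z‖ₑ * ‖(z - w)⁻¹‖ₑ := by
          congr 1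
          apply lintegral_lintegral_swap
          apply Measurable.aemeasurable
          have := (dbar_cont hU).measurable
          fun_prop
      _ ≤ ENNReal.ofReal Real.pi⁻¹ * ∫⁻ z in Metric.ball (0:ℂ) 1,
          ENNReal.ofReal (3 * Real.pi) * (ENNReal.ofReal d * (S.map fun a => ‖(z-a)⁻¹‖ₑ).sum) := by
          gcongr 1
          refine lintegral_mono_ae ?_
          rw [ae_restrict_iff' measurableSet_ball]
          filter_upwards [hS] with z hz hzb
          rw [lintegral_const_mul _ (by fun_prop), mul_comm]
          gcongr
          · have : ∀ w : ℂ, ‖(z - w)⁻¹‖ₑ = ‖(w - z)⁻¹‖ₑ := by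
              intro w
              rw [← neg_sub w z, inv_neg, enorm_neg]
            simp only [this]
            exact kern_lintegral z
          · exact hz hzb
      _ = ENNReal.ofReal Real.pi⁻¹ * (ENNReal.ofReal (3 * Real.pi) * (ENNReal.ofReal d *
          ∫⁻ z in Metric.ball (0:ℂ) 1, (S.map fun a => ‖(z-a)⁻¹‖ₑ).sum)) := by
          rw [lintegral_const_mul' _ _ ENNReal.ofReal_ne_top, lintegral_const_mul' _ _ ENNReal.ofReal_ne_top]
      _ ≤ ENNReal.ofReal Real.pi⁻¹ * (ENNReal.ofReal (3 * Real.pi) * (ENNReal.ofReal d *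
          (Multiset.card S * ENNReal.ofReal (3 * Real.pi)))) := by
          gcongr
          clear hS
          induction S using Multiset.induction_on with
          | empty => simp
          | cons a S ih =>
            simp only [Multiset.map_cons, Multiset.sum_cons, Multiset.card_cons]
            rw [lintegral_add_left (by fun_prop)]
            push_cast
            rw [add_mul, one_mul, add_comm]
            gcongr
            exact kern_lintegral a
      _ ≤ _ := by
          rw [← ENNReal.ofReal_natCast, ← ENNReal.ofReal_mul (by positivity), ← ENNReal.ofReal_mul (by positivity),
            ← ENNReal.ofReal_mul (by positivity), ← ENNReal.ofReal_mul (by positivity)]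
          apply ENNReal.ofReal_le_ofReal
          have : Real.pi⁻¹ * (3 * Real.pi * (d * ((Multiset.card S : ℝ) * (3 * Real.pi)))) =
            9 * Real.pi * (Multiset.card S * d) := by field_simp; ring
          rw [this, mul_assoc (8 * K + 9 * Real.pi)]
          apply mul_le_mul_of_nonneg_right _ (by positivity)
          linarith

/-- L1 small holomorphic implies pointwise small -/
lemma holo_L1 : ∃ C : ℝ, 0 < C ∧ ∀ (G : ℂ → ℂ) (e : ℝ), 0 ≤ e →
    DifferentiableOn ℂ G (Metric.ball 0 (1/4)) →
    ∫⁻ z in Metric.ball (0:ℂ) (1/4), ‖G z‖ₑ ≤ ENNReal.ofReal e →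
    ∀ w : ℂ, ‖w‖ < 1/16 → ‖G w‖ ≤ C * e := by
  obtain ⟨χ, K, hK0, hχ, hχc, hχ1, hχin, hχs, hχK, hd0, hd1⟩ := exists_cutoff (1/8) (3/16) (by norm_num) (by norm_num)
  refine ⟨16 * K + 1, by positivity, ?_⟩
  intro G e he hG hintg w hw
  have hGd : ∀ z ∈ Metric.ball (0:ℂ) (1/4), DifferentiableAt ℂ G z := fun z hz =>
    hG.differentiableAt (Metric.isOpen_ball.mem_nhds hz)
  have hV0 : ∀ z, z ∉ Metric.ball (0:ℂ) (1/4) → (fun z => χ z * G z) =ᶠ[nhds z] fun _ => 0 := by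
    intro z hz
    rw [mem_ball_zero_iff, not_lt] at hz
    have : z ∉ tsupport χ := fun h => by linarith [hχs z h]
    filter_upwards [notMem_tsupport_iff_eventuallyEq.1 this] with y hy
    rw [hy]; simp
  have hV : ContDiff ℝ 1 (fun z => χ z * G z) := by
    rw [contDiff_iff_contDiffAt]
    intro z
    by_cases hz : z ∈ Metric.ball (0:ℂ) (1/4)
    · have : ContDiffAt ℂ 1 G z := (hG.contDiffOn Metric.isOpen_ball).contDiffAt (Metric.isOpen_ball.mem_nhds hz)
      exact hχ.contDiffAt.mul (this.restrict_scalars ℝ)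
    · exact contDiffAt_const.congr_of_eventuallyEq (hV0 z hz)
  have hcp := cp_main _ hV hχc.mul_right w
  rw [hχin w (by linarith), one_mul] at hcp
  have hb : ‖∫ z, dbar (fun z => χ z * G z) z / (z - w)‖ₑ ≤ ENNReal.ofReal (16 * K * e) := by
    calc _ ≤ ∫⁻ z, ‖dbar (fun z => χ z * G z) z / (z - w)‖ₑ := enorm_integral_le_lintegral_enorm _
      _ ≤ ∫⁻ z, (Metric.ball (0:ℂ) (1/4)).indicator (fun z => ENNReal.ofReal (16 * K) * ‖G z‖ₑ) z := by
          refine lintegral_mono fun z => ?_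
          by_cases hz : z ∈ Metric.ball (0:ℂ) (1/4)
          · rw [indicator_of_mem hz, dbar_mul (hχ.differentiable one_ne_zero z) ((hGd z hz).restrictScalars ℝ),
              dbar_holo (hGd z hz), mul_zero, add_zero]
            by_cases hz2 : ‖z‖ < 1/8
            · rw [hd0 z hz2]; simp
            · have h4 : 1/16 ≤ ‖z - w‖ := by
                have := norm_sub_norm_le z w
                linarith
              rw [mul_div_right_comm, enorm_mul]
              gcongr
              rw [← ofReal_norm]
              apply ENNReal.ofReal_le_ofReal
              rw [norm_div]
              calc ‖dbar χ z‖ / ‖z - w‖ ≤ K / (1/16) := by gcongr; exact hχK z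
                _ = _ := by ring
          · rw [indicator_of_notMem hz, dbar_congr (hV0 z hz), dbar_const]; simp
      _ = ENNReal.ofReal (16 * K) * ∫⁻ z in Metric.ball (0:ℂ) (1/4), ‖G z‖ₑ := by
          rw [lintegral_indicator measurableSet_ball, lintegral_const_mul' _ _ ENNReal.ofReal_ne_top]
      _ ≤ ENNReal.ofReal (16 * K) * ENNReal.ofReal e := by gcongr
      _ = _ := by rw [← ENNReal.ofReal_mul (by positivity)]
  rw [hcp, ← ofReal_norm, ENNReal.ofReal_le_ofReal_iff (by positivity), norm_neg, norm_mul,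
    Complex.norm_real, Real.norm_of_nonneg Real.pi_pos.le] at hb
  have : 1 * ‖G w‖ ≤ Real.pi * ‖G w‖ := by
    gcongr; linarith [Real.pi_gt_three]
  nlinarith

lemma logderiv_bound (P : Polynomial ℂ) (z : ℂ) (hz : P.eval z ≠ 0) :
    ‖P.derivative.eval z / P.eval z‖ₑ ≤ (P.roots.map fun a => ‖(z-a)⁻¹‖ₑ).sum := by
  rw [(IsAlgClosed.splits P).eval_derivative_div_eval_of_ne_zero hz]
  generalize P.roots = S
  induction S using Multiset.induction_on with
  | empty => simp
  | cons a S ih =>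
    simp only [Multiset.map_cons, Multiset.sum_cons]
    refine (enorm_add_le _ _).trans ?_
    gcongr
    rw [one_div]

lemma coreA (j : ℕ) (hj : 1 ≤ j) : ∃ C : ℝ, 1 ≤ C ∧ ∀ (N : ℕ) (P Q : Polynomial ℂ) (d : ℝ),
    P.natDegree ≤ N → 0 < d → d ≤ 1 → (∀ z ∈ Metric.ball (0:ℂ) 1, ‖P.eval z‖ ≤ 1) →
    (∀ z ∈ Metric.ball (0:ℂ) 1, ‖Q.eval z‖ ≤ 1) →
    (∀ z ∈ Metric.ball (0:ℂ) 1, ‖(Q.eval z)^j - (P.eval z)^(j+1)‖ ≤ d^(j*(j+1))) →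
    ∃ F : ℂ → ℂ, DifferentiableOn ℂ F (Metric.ball 0 (1/4)) ∧
      (∀ z ∈ Metric.ball (0:ℂ) (1/4), ‖F z‖ ≤ C) ∧
      ∀ w : ℂ, ‖w‖ < 1/16 → ‖(F w)^j - P.eval w‖ ≤ C * (N+1) * d ∧
        ‖F w * P.eval w - Q.eval w‖ ≤ C * (N+1) * d := by
  obtain ⟨C1, hC1, hsolve⟩ := ca_solve
  obtain ⟨C2, hC2, hL1⟩ := holo_L1
  set K1 : ℝ := j * 2^j + 2^(j+1) + 1 with hK1
  have hK1p : 0 < K1 := by positivity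
  set B : ℝ := C1 + 2 with hB
  set K2 : ℝ := j * B^(j-1) with hK2
  have hK2p : 0 ≤ K2 := by positivity
  set C3 : ℝ := C2 * (K2 * C1 + K1 * Real.pi) with hC3
  set C4 : ℝ := C2 * (C1 + 2 * Real.pi) with hC4
  have hC3p : 0 ≤ C3 := by positivity
  have hC4p : 0 ≤ C4 := by positivity
  refine ⟨1 + C1 + C3 + C4, by linarith, ?_⟩
  intro N P Q d hN hd hd1 hP hQ hPQ
  set D : ℂ → ℝ := fun z => ‖P.eval z‖^2 + (d^j)^2 with hD
  have hDp : ∀ z, 0 < D z := fun z => by simp only [hD]; positivity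
  set DC : ℂ → ℂ := fun z => P.eval z * (starRingEnd ℂ) (P.eval z) + ((d^j)^2 : ℝ) with hDC
  have hDCD : ∀ z, DC z = D z := fun z => by
    simp only [hDC, hD]; rw [Complex.mul_conj, Complex.normSq_eq_norm_sq]; push_cast; ring
  have hDC0 : ∀ z, DC z ≠ 0 := fun z => by
    rw [hDCD]; exact_mod_cast (hDp z).ne'
  set U : ℂ → ℂ := fun z => Q.eval z * ((starRingEnd ℂ) (P.eval z) * (DC z)⁻¹) with hU
  have hPc : ContDiff ℝ 1 (fun z => P.eval z) :=
    (P.differentiable.contDiff (n := 1)).restrict_scalars ℝ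
  have hQc : ContDiff ℝ 1 (fun z => Q.eval z) :=
    (Q.differentiable.contDiff (n := 1)).restrict_scalars ℝ
  have hPbc : ContDiff ℝ 1 (fun z => (starRingEnd ℂ) (P.eval z)) :=
    Complex.conjCLE.contDiff.comp hPc
  have hDCc : ContDiff ℝ 1 DC := (hPc.mul hPbc).add contDiff_const
  have hDCi : ContDiff ℝ 1 (fun z => (DC z)⁻¹) := hDCc.inv hDC0
  have hUc : ContDiff ℝ 1 U := hQc.mul (hPbc.mul hDCi)
  have hdU : ∀ z, dbar U z = Q.eval z * (starRingEnd ℂ) (P.derivative.eval z) * ((d^j)^2 : ℝ) / (D z)^2 := by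
    intro z
    have h1 : dbar DC z = P.eval z * (starRingEnd ℂ) (P.derivative.eval z) := by
      have e : DC = fun z => P.eval z * (starRingEnd ℂ) (P.eval z) + ((d^j)^2 : ℝ) := rfl
      have e2 : dbar DC z = dbar (fun z => P.eval z * (starRingEnd ℂ) (P.eval z)) z := by
        simp only [dbar, e, fderiv_add_const]
      rw [e2, dbar_mul (hPc.differentiable one_ne_zero z) (hPbc.differentiable one_ne_zero z),
        dbar_holo (P.differentiable z), dbar_conj (P.hasDerivAt z)]; ring
    have h2 : dbar U z = _ := dbar_mul (hQc.differentiable one_ne_zero z)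
      ((hPbc.mul hDCi).differentiable one_ne_zero z)
    have h3 : dbar (fun z => (starRingEnd ℂ) (P.eval z) * (DC z)⁻¹) z = _ :=
      dbar_mul (hPbc.differentiable one_ne_zero z) (hDCi.differentiable one_ne_zero z)
    rw [h2, h3, dbar_holo (Q.differentiable z), dbar_conj (P.hasDerivAt z),
      dbar_inv (hDCc.differentiable one_ne_zero z) (hDC0 z), h1, ← hDCD]
    have := hDC0 z
    field_simp
    have h4 : ((d^j)^2 : ℝ) = DC z - P.eval z * (starRingEnd ℂ) (P.eval z) := by
      simp only [hDC]; ring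
    push_cast at h4 ⊢
    linear_combination (-(starRingEnd ℂ) (P.derivative.eval z) * Q.eval z) * h4
  have halg := fun z (hz : z ∈ Metric.ball (0:ℂ) 1) => ca_alg j hj d hd hd1 (P.eval z) (Q.eval z)
    (hP z hz) (hQ z hz) (hPQ z hz) (D z) rfl
  have hUeq : ∀ z, U z * D z = Q.eval z * (starRingEnd ℂ) (P.eval z) := by
    intro z
    simp only [hU]; rw [← hDCD]
    have := hDC0 z
    field_simp
  have hcard : (Multiset.card P.roots : ℝ) ≤ N := by
    exact_mod_cast (Polynomial.card_roots' P).trans hN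
  obtain ⟨F, hF1, hF2, hF3⟩ := hsolve U hUc (fun z hz => ((halg z hz).2.2.2 (U z) (hUeq z)).1)
    P.roots d hd.le (by
      by_cases hP0 : P = 0
      · refine Eventually.of_forall fun z _ => ?_
        rw [hdU, hP0]; simp
      · have hfin : (volume : Measure ℂ) {z | P.eval z = 0} = 0 := by
          have : {z | P.eval z = 0} = (P.roots.toFinset : Set ℂ) := by
            ext z; simp [hP0]
          rw [this]; exact P.roots.toFinset.measure_zero _
        have hae : ∀ᵐ z, P.eval z ≠ 0 := by
          rw [ae_iff]; simpa using hfin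
        filter_upwards [hae] with z hz hzb
        calc ‖dbar U z‖ₑ ≤ ENNReal.ofReal d * ‖P.derivative.eval z / P.eval z‖ₑ := by
              rw [← ofReal_norm, ← ofReal_norm, ← ENNReal.ofReal_mul hd.le]
              apply ENNReal.ofReal_le_ofReal
              have h3 := (halg z hzb).2.2.1
              have hpp : 0 < ‖P.eval z‖ := norm_pos_iff.2 hz
              rw [hdU, norm_div, norm_mul, norm_mul, norm_pow, Complex.norm_real, Complex.norm_real,
                Real.norm_of_nonneg (hDp z).le, Real.norm_of_nonneg (by positivity), RCLike.norm_conj, norm_div,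
                div_le_iff₀ (by have := hDp z; positivity), mul_comm d, div_mul_eq_mul_div, div_mul_eq_mul_div, le_div_iff₀ hpp]
              calc _ = ‖P.derivative.eval z‖ * (‖Q.eval z‖ * (d^j)^2 * ‖P.eval z‖) := by ring
                _ ≤ ‖P.derivative.eval z‖ * (d * D z ^2) := by gcongr
                _ = _ := by ring
          _ ≤ _ := by gcongr; exact logderiv_bound P z hz)
  have hvol : volume (Metric.ball (0:ℂ) (1/4)) ≤ ENNReal.ofReal Real.pi := by
    refine (measure_mono (Metric.ball_subset_ball (by norm_num : (1/4:ℝ) ≤ 1))).trans (le_of_eq ?_)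
    rw [Complex.volume_ball]
    simp [← NNReal.coe_real_pi, ENNReal.ofReal_coe_nnreal]
  have hsub : Metric.ball (0:ℂ) (1/4) ⊆ Metric.ball 0 1 := Metric.ball_subset_ball (by norm_num)
  have hFm : AEStronglyMeasurable F (volume.restrict (Metric.ball (0:ℂ) (1/4))) :=
    hF1.continuousOn.aestronglyMeasurable measurableSet_ball
  have hUFm : AEMeasurable (fun z => ‖U z - F z‖ₑ) (volume.restrict (Metric.ball (0:ℂ) (1/4))) :=
    (hUc.continuous.aestronglyMeasurable.sub hFm).enorm
  have comb : ∀ (G : ℂ → ℂ) (a b : ℝ), 0 ≤ a → 0 ≤ b →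
      (∀ z ∈ Metric.ball (0:ℂ) (1/4), ‖G z‖ ≤ a * ‖U z - F z‖ + b * d) →
      ∫⁻ z in Metric.ball (0:ℂ) (1/4), ‖G z‖ₑ ≤ ENNReal.ofReal ((a * C1 + b * Real.pi) * (N+1) * d) := by
    intro G a b ha hb hG
    calc ∫⁻ z in Metric.ball (0:ℂ) (1/4), ‖G z‖ₑ ≤
          ∫⁻ z in Metric.ball (0:ℂ) (1/4), (ENNReal.ofReal a * ‖U z - F z‖ₑ + ENNReal.ofReal (b*d)) := by
          refine setLIntegral_mono' measurableSet_ball fun z hz => ?_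
          rw [← ofReal_norm, ← ofReal_norm, ← ENNReal.ofReal_mul ha, ← ENNReal.ofReal_add (by positivity) (by positivity)]
          exact ENNReal.ofReal_le_ofReal (hG z hz)
      _ = ENNReal.ofReal a * (∫⁻ z in Metric.ball (0:ℂ) (1/4), ‖U z - F z‖ₑ) +
          ENNReal.ofReal (b*d) * volume (Metric.ball (0:ℂ) (1/4)) := by
          rw [lintegral_add_right _ measurable_const, lintegral_const_mul' _ _ ENNReal.ofReal_ne_top,
            setLIntegral_const]
      _ ≤ ENNReal.ofReal a * ENNReal.ofReal (C1 * Multiset.card P.roots * d) +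
          ENNReal.ofReal (b*d) * ENNReal.ofReal Real.pi := by gcongr
      _ = ENNReal.ofReal (a * (C1 * Multiset.card P.roots * d) + b * d * Real.pi) := by
          rw [← ENNReal.ofReal_mul ha, ← ENNReal.ofReal_mul (by positivity), ← ENNReal.ofReal_add (by positivity) (by positivity)]
      _ ≤ _ := by
          apply ENNReal.ofReal_le_ofReal
          have k1 : a * (C1 * Multiset.card P.roots * d) ≤ a * (C1 * (N+1) * d) := by
            gcongr; linarith
          have k2 : b * d * Real.pi * 1 ≤ b * d * Real.pi * (N+1) := by
            gcongr; linarith [(Nat.cast_nonneg N : (0:ℝ) ≤ N)]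
          nlinarith
  refine ⟨F, hF1, fun z hz => (hF2 z hz).trans (by linarith), fun w hw => ?_⟩
  have hNd : 0 ≤ ((N:ℝ)+1)*d := by positivity
  constructor
  · have := hL1 (fun z => (F z)^j - P.eval z) ((K2 * C1 + K1 * Real.pi) * (N+1) * d) (by positivity)
      ((hF1.pow j).sub P.differentiable.differentiableOn)
      (comb _ K2 K1 hK2p hK1p.le (fun z hz => by
        have h1 := ((halg z (hsub hz)).2.2.2 (U z) (hUeq z))
        calc ‖(F z)^j - P.eval z‖ = ‖((F z)^j - (U z)^j) + ((U z)^j - P.eval z)‖ := by congr 1; ring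
          _ ≤ K2 * ‖F z - U z‖ + K1 * d := by
            refine (norm_add_le _ _).trans (add_le_add ?_ h1.2.2)
            exact pow_sub_bound j _ _ B (by linarith [hF2 z hz]) (by linarith [h1.1])
          _ = _ := by rw [norm_sub_rev])) w hw
    refine this.trans ?_
    calc C2 * ((K2 * C1 + K1 * Real.pi) * (N+1) * d) = C3 * ((N+1) * d) := by rw [hC3]; ring
      _ ≤ (1 + C1 + C3 + C4) * ((N+1)*d) := by gcongr; linarith
      _ = _ := by ring
  · have := hL1 (fun z => F z * P.eval z - Q.eval z) ((1 * C1 + 2 * Real.pi) * (N+1) * d) (by positivity)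
      ((hF1.mul P.differentiable.differentiableOn).sub Q.differentiable.differentiableOn)
      (comb _ 1 2 (by norm_num) (by norm_num) (fun z hz => by
        have h1 := ((halg z (hsub hz)).2.2.2 (U z) (hUeq z))
        have h2 := hP z (hsub hz)
        calc ‖F z * P.eval z - Q.eval z‖ = ‖-((U z - F z) * P.eval z) + (U z * P.eval z - Q.eval z)‖ := by congr 1; ring
          _ ≤ ‖U z - F z‖ * ‖P.eval z‖ + 2 * d^(j+1) := by
            refine (norm_add_le _ _).trans (add_le_add ?_ h1.2.1)
            rw [norm_neg, norm_mul]
          _ ≤ ‖U z - F z‖ * 1 + 2 * d := by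
            gcongr
            rw [pow_succ]
            exact mul_le_of_le_one_left hd.le (pow_le_one₀ hd.le hd1)
          _ = _ := by ring)) w hw
    refine this.trans ?_
    calc C2 * ((1 * C1 + 2 * Real.pi) * (N+1) * d) = C4 * ((N+1) * d) := by rw [hC4]; ring
      _ ≤ (1 + C1 + C3 + C4) * ((N+1)*d) := by gcongr; linarith
      _ = _ := by ring

lemma close_of_pow (j : ℕ) (hj : 1 ≤ j) (B e : ℝ) (hB : 2 ≤ B) (he : 0 < e) (F φ : ℂ) (hF : ‖F‖ ≤ B)
    (hφ : ‖φ‖ ≤ 2) (h1 : ‖F^j - φ^j‖ ≤ e) (h2 : ‖φ^j * (F - φ)‖ ≤ e) :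
    ‖F - φ‖^(2*j) ≤ ((B+2)^(2*j) + 4^(j+1)) * e := by
  have hFφ : ‖F - φ‖ ≤ B + 2 := (norm_sub_le _ _).trans (by linarith)
  have hB1 : (1:ℝ) ≤ (B+2)^(2*j) := one_le_pow₀ (by linarith)
  have h4 : (0:ℝ) < 4^(j+1) := by positivity
  rcases le_or_gt e 1 with he1 | he1
  · set s := Real.sqrt e with hs
    have hs2 : s^2 = e := Real.sq_sqrt he.le
    have hs0 : 0 < s := Real.sqrt_pos.2 he
    have hes : e ≤ s := by
      have : s ≤ 1 := by rw [hs]; exact Real.sqrt_le_one.2 he1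
      nlinarith
    rcases le_or_gt s (‖φ‖^j) with hc | hc
    · have h3 : ‖F - φ‖ ≤ s := by
        rw [norm_mul, norm_pow] at h2
        have : s * ‖F - φ‖ ≤ s * s := by
          calc s * ‖F - φ‖ ≤ ‖φ‖^j * ‖F - φ‖ := by gcongr
            _ ≤ e := h2
            _ = s * s := by rw [← hs2]; ring
        exact le_of_mul_le_mul_left this hs0
      obtain ⟨i, rfl⟩ : ∃ i, j = i + 1 := ⟨j-1, by omega⟩
      calc ‖F - φ‖^(2*(i+1)) = ‖F-φ‖^(2*i) * ‖F-φ‖^2 := by ring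
        _ ≤ (B+2)^(2*i) * s^2 := by gcongr
        _ ≤ (B+2)^(2*(i+1)) * e := by
          rw [hs2]; gcongr
          · linarith
          · omega
        _ ≤ _ := by gcongr; linarith
    · have h3 : ‖F‖^j ≤ 2 * s := by
        rw [← norm_pow]
        calc ‖F^j‖ = ‖(F^j - φ^j) + φ^j‖ := by congr 1; ring
          _ ≤ e + ‖φ‖^j := by rw [← norm_pow]; exact (norm_add_le _ _).trans (by linarith)
          _ ≤ 2 * s := by linarith
      have h5 : ‖F - φ‖^j ≤ 2^(j-1) * (3 * s) := by
        calc ‖F - φ‖^j ≤ (‖F‖ + ‖φ‖)^j := by gcongr; exact norm_sub_le _ _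
          _ ≤ 2^(j-1) * (‖F‖^j + ‖φ‖^j) := add_pow_le (norm_nonneg _) (norm_nonneg _) _
          _ ≤ _ := by gcongr; linarith
      calc ‖F - φ‖^(2*j) = (‖F-φ‖^j)^2 := by ring
        _ ≤ (2^(j-1) * (3 * s))^2 := by gcongr
        _ = ((2^2)^(j-1) * 9) * e := by rw [← hs2, ← pow_mul, mul_comm 2 (j-1)]; ring
        _ ≤ 4^(j+1) * e := by
          gcongr
          obtain ⟨i, rfl⟩ : ∃ i, j = i + 1 := ⟨j-1, by omega⟩
          simp only [Nat.add_sub_cancel]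
          have : (0:ℝ) < 4^i := by positivity
          have e1 : (4:ℝ)^(i+1+1) = 4^i*16 := by ring
          have e2 : ((2:ℝ)^2)^i = 4^i := by norm_num
          rw [e1, e2]; linarith
        _ ≤ _ := by gcongr; linarith
  · calc ‖F - φ‖^(2*j) ≤ (B+2)^(2*j) := by gcongr
      _ ≤ (B+2)^(2*j) + 4^(j+1) := by linarith
      _ ≤ _ := le_mul_of_one_le_right (by positivity) he1.le

set_option maxHeartbeats 1000000 in
lemma coreB (j : ℕ) (hj : 1 ≤ j) : ∃ (c C E0 : ℝ) (q : ℕ), 0 < c ∧ c ≤ 1 ∧ 1 ≤ C ∧ 0 < E0 ∧ E0 ≤ 1 ∧ 1 ≤ q ∧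
    ∀ (N : ℕ) (P Q : Polynomial ℂ) (φ : ℝ → ℂ) (E : ℝ), P.natDegree ≤ N →
    (∀ z ∈ Metric.ball (0:ℂ) 1, ‖P.eval z‖ ≤ 1) → (∀ z ∈ Metric.ball (0:ℂ) 1, ‖Q.eval z‖ ≤ 1) →
    0 < E → E ≤ E0 →
    (∀ x : ℝ, |x| < 1 → ‖φ x^j - P.eval (x:ℂ)‖ ≤ E ∧ ‖φ x^(j+1) - Q.eval (x:ℂ)‖ ≤ E) →
    ∃ F : ℂ → ℂ, DifferentiableOn ℂ F (Metric.ball 0 c) ∧ (∀ z ∈ Metric.ball (0:ℂ) c, ‖F z‖ ≤ C) ∧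
      ∀ x : ℝ, |x| < c → ‖φ x - F x‖^q ≤ C * (N+1)^q * E := by
  obtain ⟨CA, hCA, hcore⟩ := coreA j hj
  set K : ℝ := j * 2^(j-1) + (j+1:ℕ) * 2^j with hK
  have hK1 : 1 ≤ K := by
    have h1 : (1:ℝ) ≤ 2^j := one_le_pow₀ (by norm_num)
    have h2 : (1:ℝ) ≤ (j+1:ℕ) := by push_cast; linarith [(Nat.cast_nonneg j : (0:ℝ) ≤ j)]
    have h3 : (0:ℝ) ≤ j * 2^(j-1) := by positivity
    nlinarith
  set n : ℕ := j*(j+1) with hn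
  have hn0 : n ≠ 0 := by positivity
  set B := CA + 1 with hB
  set K3 : ℝ := (B+2)^(2*j) + 4^(j+1) with hK3
  have hK3p : 0 < K3 := by positivity
  set K4 : ℝ := (K3 * (2*CA+1))^(2*n) * (2*K) with hK4
  have hK4p : 0 ≤ K4 := by positivity
  refine ⟨1/128, CA + K4, 1/(2*K), 2*j*(2*n), by norm_num, by norm_num, by linarith, by positivity,
    by rw [div_le_one (by positivity)]; linarith, by have : 0 < j * n := by positivity
                                                     nlinarith, ?_⟩
  intro N P Q φ E hN hP hQ hE hE0 hφ
  have hE1 : E ≤ 1 := hE0.trans (by rw [div_le_one (by positivity)]; linarith)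
  have hKE : 2*K*E ≤ 1 := by
    rw [le_div_iff₀ (by positivity)] at hE0; linarith
  set s := Real.sqrt (2*(K*E)) with hs
  have hs0 : 0 < s := Real.sqrt_pos.2 (by positivity)
  have hs2 : s^2 = 2*K*E := by rw [hs, Real.sq_sqrt (by positivity)]; ring
  have hs1 : s ≤ 1 := by rw [hs]; exact Real.sqrt_le_one.2 (by linarith)
  have hEs : E ≤ s := by
    refine Real.le_sqrt_of_sq_le ?_
    nlinarith
  set d : ℝ := s ^ ((n:ℝ)⁻¹) with hd
  have hdn : d^n = s := Real.rpow_inv_natCast_pow hs0.le hn0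
  have hd0 : 0 < d := Real.rpow_pos_of_pos hs0 _
  have hd1 : d ≤ 1 := Real.rpow_le_one hs0.le hs1 (by positivity)
  have hsd : s ≤ d := by
    rw [← hdn]; exact pow_le_of_le_one hd0.le hd1 hn0
  have hPx : ∀ x : ℝ, |x| < 1 → ‖P.eval (x:ℂ)‖ ≤ 1 ∧ ‖Q.eval (x:ℂ)‖ ≤ 1 := by
    intro x hx
    have : (x:ℂ) ∈ Metric.ball (0:ℂ) 1 := by
      rw [mem_ball_zero_iff, Complex.norm_real]; exact hx
    exact ⟨hP _ this, hQ _ this⟩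
  have htc : ∀ z : ℂ, ‖z‖ ≤ 1/8 → ‖(Q.eval z)^j - (P.eval z)^(j+1)‖ ≤ s := by
    intro z hz
    have := tc_main (fun z => (Q.eval z)^j - (P.eval z)^(j+1)) 0 1 2 (K*E) (by norm_num) (by norm_num)
      (by positivity) (by fun_prop) ?_ ?_ z (by simpa using hz)
    · exact this
    · intro z hz
      simp only [Complex.ofReal_zero] at hz
      refine (norm_sub_le _ _).trans ?_
      rw [norm_pow, norm_pow]
      have h1 := pow_le_one₀ (n := j) (norm_nonneg _) (hQ z hz)
      have h2 := pow_le_one₀ (n := j+1) (norm_nonneg _) (hP z hz)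
      linarith
    · intro x hx
      rw [sub_zero] at hx
      obtain ⟨h1, h2⟩ := hφ x hx
      obtain ⟨p1, p2⟩ := hPx x hx
      have n1 : ‖φ x^j‖ ≤ 2 := by
        have := norm_add_le (φ x^j - P.eval (x:ℂ)) (P.eval (x:ℂ))
        rw [sub_add_cancel] at this; linarith
      have n2 : ‖φ x^(j+1)‖ ≤ 2 := by
        have := norm_add_le (φ x^(j+1) - Q.eval (x:ℂ)) (Q.eval (x:ℂ))
        rw [sub_add_cancel] at this; linarith
      have k1 := pow_sub_bound j (φ x^(j+1)) (Q.eval (x:ℂ)) 2 n2 (by linarith)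
      have k2 := pow_sub_bound (j+1) (φ x^j) (P.eval (x:ℂ)) 2 n1 (by linarith)
      calc ‖(Q.eval (x:ℂ))^j - (P.eval (x:ℂ))^(j+1)‖
          = ‖((φ x^j)^(j+1) - (P.eval (x:ℂ))^(j+1)) - ((φ x^(j+1))^j - (Q.eval (x:ℂ))^j)‖ := by
            congr 1; ring
        _ ≤ (j+1:ℕ) * 2^(j+1-1) * ‖φ x^j - P.eval (x:ℂ)‖ + j * 2^(j-1) * ‖φ x^(j+1) - Q.eval (x:ℂ)‖ :=
            (norm_sub_le _ _).trans (add_le_add k2 k1)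
        _ ≤ (j+1:ℕ) * 2^(j+1-1) * E + j * 2^(j-1) * E := by gcongr
        _ = K * E := by rw [hK]; simp only [Nat.add_sub_cancel]; ring
  set S : Polynomial ℂ := Polynomial.C (1/8) * Polynomial.X with hS
  have hSe : ∀ z : ℂ, S.eval z = 1/8 * z := fun z => by simp [hS]
  have hSm : ∀ z ∈ Metric.ball (0:ℂ) 1, ‖1/8 * z‖ ≤ 1/8 := by
    intro z hz
    rw [mem_ball_zero_iff] at hz
    rw [norm_mul]; norm_num; linarith
  have hSm2 : ∀ z ∈ Metric.ball (0:ℂ) 1, 1/8 * z ∈ Metric.ball (0:ℂ) 1 := by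
    intro z hz
    rw [mem_ball_zero_iff]; linarith [hSm z hz]
  obtain ⟨F, hF1, hF2, hF3⟩ := hcore N (P.comp S) (Q.comp S) d (by
      refine Polynomial.natDegree_comp_le.trans ?_
      calc P.natDegree * S.natDegree ≤ N * 1 := by
            gcongr; rw [hS]; compute_degree
        _ = N := mul_one N) hd0 hd1
    (fun z hz => by rw [Polynomial.eval_comp, hSe]; exact hP _ (hSm2 z hz))
    (fun z hz => by rw [Polynomial.eval_comp, hSe]; exact hQ _ (hSm2 z hz))
    (fun z hz => by
      rw [Polynomial.eval_comp, Polynomial.eval_comp, hSe, hdn]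
      exact htc _ (hSm z hz))
  have hm : ∀ z ∈ Metric.ball (0:ℂ) (1/128), ‖8 * z‖ < 1/16 := by
    intro z hz
    rw [mem_ball_zero_iff] at hz
    rw [norm_mul]; norm_num; linarith
  refine ⟨fun z => F (8 * z), ?_, ?_, ?_⟩
  · refine hF1.comp (by fun_prop) ?_
    intro z hz
    rw [mem_ball_zero_iff]; linarith [hm z hz]
  · intro z hz
    refine (hF2 (8*z) ?_).trans (by linarith)
    rw [mem_ball_zero_iff]; linarith [hm z hz]
  · intro x hx
    have hxz : (x:ℂ) ∈ Metric.ball (0:ℂ) (1/128) := by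
      rw [mem_ball_zero_iff, Complex.norm_real]; exact hx
    have hx1 : |x| < 1 := by linarith
    obtain ⟨a1, a2⟩ := hF3 (8*x) (hm _ hxz)
    have hFB := hF2 (8*x) (by rw [mem_ball_zero_iff]; linarith [hm _ hxz])
    have e8 : (1/8 : ℂ) * (8 * x) = x := by ring
    rw [Polynomial.eval_comp, hSe, e8] at a1
    rw [Polynomial.eval_comp, Polynomial.eval_comp, hSe, e8] at a2
    obtain ⟨h1, h2⟩ := hφ x hx1
    obtain ⟨p1, p2⟩ := hPx x hx1
    set Fx := F (8*x)
    have hN0 : (0:ℝ) ≤ N := Nat.cast_nonneg N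
    have hEd : E ≤ (N+1)*d := by nlinarith
    have hNd : 0 < (N+1)*d := by positivity
    have hCAE : CA * E ≤ CA * ((N+1)*d) := mul_le_mul_of_nonneg_left hEd (by linarith)
    have hCAN : CA*(N+1)*d = CA*((N+1)*d) := by ring
    have hCAn : 0 ≤ CA*((N+1)*d) := by positivity
    have h2CA : (2*CA+1)*((N+1)*d) = 2 * (CA*((N+1)*d)) + (N+1)*d := by ring
    have g1 : ‖Fx^j - φ x^j‖ ≤ (2*CA+1)*((N+1)*d) := by
      calc ‖Fx^j - φ x^j‖ = ‖(Fx^j - P.eval (x:ℂ)) - (φ x^j - P.eval (x:ℂ))‖ := by congr 1; ring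
        _ ≤ CA*(N+1)*d + E := (norm_sub_le _ _).trans (add_le_add a1 h1)
        _ ≤ _ := by rw [h2CA, hCAN]; linarith
    have g2 : ‖φ x^j * (Fx - φ x)‖ ≤ (2*CA+1)*((N+1)*d) := by
      calc ‖φ x^j * (Fx - φ x)‖ = ‖Fx * (φ x^j - P.eval (x:ℂ)) + ((Fx * P.eval (x:ℂ) - Q.eval (x:ℂ)) -
            (φ x^(j+1) - Q.eval (x:ℂ)))‖ := by congr 1; ring
        _ ≤ ‖Fx‖ * ‖φ x^j - P.eval (x:ℂ)‖ + (CA*(N+1)*d + E) := by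
            refine (norm_add_le _ _).trans (add_le_add (le_of_eq (norm_mul _ _)) ?_)
            exact (norm_sub_le _ _).trans (add_le_add a2 h2)
        _ ≤ CA * E + (CA*(N+1)*d + E) := by gcongr
        _ ≤ _ := by rw [h2CA, hCAN]; linarith
    have hφ2 : ‖φ x‖ ≤ 2 := by
      by_contra hc
      push Not at hc
      have n1 : ‖φ x^j‖ ≤ 2 := by
        have := norm_add_le (φ x^j - P.eval (x:ℂ)) (P.eval (x:ℂ))
        rw [sub_add_cancel] at this; linarith
      rw [norm_pow] at n1
      have : ‖φ x‖ ≤ ‖φ x‖^j := le_self_pow₀ (by linarith) (by omega)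
      linarith
    have g3 := close_of_pow j hj B _ (by linarith) (by positivity : 0 < (2*CA+1)*((N+1)*d)) Fx (φ x)
      (by linarith) hφ2 g1 g2
    show ‖φ x - Fx‖^(2*j*(2*n)) ≤ _
    rw [norm_sub_rev, pow_mul]
    calc (‖Fx - φ x‖^(2*j))^(2*n) ≤ (K3 * ((2*CA+1)*((N+1)*d)))^(2*n) := by gcongr
      _ = (K3 * (2*CA+1))^(2*n) * (N+1)^(2*n) * (d^n)^2 := by
          rw [← pow_mul, mul_comm n 2, ← mul_pow, ← mul_pow]; congr 1; ring
      _ = K4 * (N+1)^(2*n) * E := by rw [hdn, hs2, hK4]; ring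
      _ ≤ (CA + K4) * (N+1)^(2*j*(2*n)) * E := by
        gcongr
        · linarith
        · linarith
        · nlinarith [Nat.zero_le n]
        · omega

lemma holo_iter_hasDerivAt (F : ℂ → ℂ) (z₀ : ℂ) (ρ : ℝ) (hF : DifferentiableOn ℂ F (Metric.ball z₀ ρ))
    (k : ℕ) (z : ℂ) (hz : z ∈ Metric.ball z₀ ρ) :
    HasDerivAt (iteratedDeriv k F) (iteratedDeriv (k+1) F z) z := by
  have h1 : AnalyticAt ℂ F z := hF.analyticAt (Metric.isOpen_ball.mem_nhds hz)
  rw [iteratedDeriv_succ]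
  have h2 : AnalyticAt ℂ (iteratedDeriv k F) z := by
    rw [iteratedDeriv_eq_iterate]; exact h1.iterated_deriv k
  exact h2.differentiableAt.hasDerivAt

lemma glue_cmp (F1 F2 : ℂ → ℂ) (f : ℝ → ℂ) (x1 x2 ρ1 ρ2 C e1 e2 : ℝ) (hC : 0 < C) (he1 : 0 ≤ e1) (he2 : 0 ≤ e2)
    (h1 : DifferentiableOn ℂ F1 (Metric.ball (x1:ℂ) ρ1)) (h2 : DifferentiableOn ℂ F2 (Metric.ball (x2:ℂ) ρ2))
    (b1 : ∀ z ∈ Metric.ball (x1:ℂ) ρ1, ‖F1 z‖ ≤ C) (b2 : ∀ z ∈ Metric.ball (x2:ℂ) ρ2, ‖F2 z‖ ≤ C)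
    (r1 : ∀ y : ℝ, |y - x1| < ρ1 → ‖f y - F1 y‖ ≤ e1) (r2 : ∀ y : ℝ, |y - x2| < ρ2 → ‖f y - F2 y‖ ≤ e2)
    (x' R : ℝ) (hR : 0 < R) (s1 : |x' - x1| + R ≤ ρ1) (s2 : |x' - x2| + R ≤ ρ2)
    (k : ℕ) (y : ℝ) (hy : |y - x'| ≤ R/16) :
    ‖iteratedDeriv k F1 y - iteratedDeriv k F2 y‖ ≤
      k.factorial * (16/R)^k * (Real.sqrt (2*C) * (Real.sqrt e1 + Real.sqrt e2)) := by
  have sub1 : Metric.ball (x':ℂ) R ⊆ Metric.ball (x1:ℂ) ρ1 := by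
    apply Metric.ball_subset_ball'
    rw [Complex.dist_eq, ← Complex.ofReal_sub, Complex.norm_real]; simp only [Real.norm_eq_abs]; linarith
  have sub2 : Metric.ball (x':ℂ) R ⊆ Metric.ball (x2:ℂ) ρ2 := by
    apply Metric.ball_subset_ball'
    rw [Complex.dist_eq, ← Complex.ofReal_sub, Complex.norm_real]; simp only [Real.norm_eq_abs]; linarith
  have hd : DifferentiableOn ℂ (fun z => F1 z - F2 z) (Metric.ball (x':ℂ) R) :=
    (h1.mono sub1).sub (h2.mono sub2)
  have key := tc_main (fun z => F1 z - F2 z) x' R (2*C) (e1 + e2) hR (by linarith) (by linarith) hd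
    (fun z hz => (norm_sub_le _ _).trans (by linarith [b1 z (sub1 hz), b2 z (sub2 hz)]))
    (fun u hu => by
      have a1 := abs_sub_le u x' x1
      have a2 := abs_sub_le u x' x2
      calc ‖F1 u - F2 u‖ = ‖(f u - F2 u) - (f u - F1 u)‖ := by congr 1; ring
        _ ≤ e2 + e1 := (norm_sub_le _ _).trans (add_le_add (r2 u (by linarith)) (r1 u (by linarith)))
        _ = _ := add_comm _ _)
  have hyb : (y:ℂ) ∈ Metric.ball (x':ℂ) R := by
    rw [Metric.mem_ball, Complex.dist_eq, ← Complex.ofReal_sub, Complex.norm_real]; simp only [Real.norm_eq_abs]; linarith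
  have hsq : Real.sqrt (2*C*(e1+e2)) ≤ Real.sqrt (2*C) * (Real.sqrt e1 + Real.sqrt e2) := by
    rw [Real.sqrt_mul (by linarith)]
    gcongr
    rw [Real.sqrt_le_iff]
    refine ⟨by positivity, ?_⟩
    have := Real.sq_sqrt he1
    have := Real.sq_sqrt he2
    nlinarith [mul_nonneg (Real.sqrt_nonneg e1) (Real.sqrt_nonneg e2)]
  have hR16 : 0 < R/16 := by linarith
  have hsub : ∀ z : ℂ, ‖z - y‖ ≤ R/16 → ‖z - x'‖ ≤ R/8 := by
    intro z hz
    calc ‖z - x'‖ = ‖(z - y) + ((y - x' : ℝ) : ℂ)‖ := by push_cast; congr 1; ring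
      _ ≤ R/16 + R/16 := (norm_add_le _ _).trans (add_le_add hz (by rw [Complex.norm_real]; exact hy))
      _ = R/8 := by ring
  have hcl : closure (Metric.ball (y:ℂ) (R/16)) ⊆ Metric.ball (x':ℂ) R := by
    rw [closure_ball _ hR16.ne']
    intro z hz
    rw [Metric.mem_closedBall, Complex.dist_eq] at hz
    rw [Metric.mem_ball, Complex.dist_eq]
    linarith [hsub z hz]
  have hc := Complex.norm_iteratedDeriv_le_of_forall_mem_sphere_norm_le k hR16
    (hd.diffContOnCl_ball (c := (y:ℂ)) (R := R/16) (by rw [← closure_ball _ hR16.ne']; exact hcl)) (C := Real.sqrt (2*C*(e1+e2)))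
    (fun z hz => key z (hsub z (by rw [mem_sphere_iff_norm] at hz; linarith)))
  have e : iteratedDeriv k (fun z => F1 z - F2 z) (y:ℂ) = iteratedDeriv k F1 y - iteratedDeriv k F2 y := by
    have c1 : ContDiffAt ℂ k F1 y := (h1.analyticAt (Metric.isOpen_ball.mem_nhds (sub1 hyb))).contDiffAt
    have c2 : ContDiffAt ℂ k F2 y := (h2.analyticAt (Metric.isOpen_ball.mem_nhds (sub2 hyb))).contDiffAt
    exact iteratedDeriv_fun_sub c1 c2
  rw [e] at hc
  refine hc.trans ?_
  have e2 : (k.factorial : ℝ) * Real.sqrt (2*C*(e1+e2)) / (R/16)^k =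
      k.factorial * (16/R)^k * Real.sqrt (2*C*(e1+e2)) := by
    rw [div_pow, div_pow]; field_simp
  rw [e2]
  gcongr

lemma taylor2 (ψ ψ1 ψ2 : ℂ → ℂ) (x x' B : ℝ) (hB : 0 ≤ B)
    (h0 : ∀ y ∈ uIcc x x', HasDerivAt ψ (ψ1 y) (y:ℂ)) (h1 : ∀ y ∈ uIcc x x', HasDerivAt ψ1 (ψ2 y) (y:ℂ))
    (h2 : ∀ y ∈ uIcc x x', ‖ψ2 (y:ℂ)‖ ≤ B) :
    ‖ψ x' - ψ x - (x' - x) * ψ1 x‖ ≤ B * |x' - x|^2 := by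
  have hx : x ∈ uIcc x x' := left_mem_uIcc
  have hx' : x' ∈ uIcc x x' := right_mem_uIcc
  have hconv : Convex ℝ (uIcc x x') := convex_uIcc x x'
  have s1 : ∀ y ∈ uIcc x x', ‖ψ1 y - ψ1 x‖ ≤ B * |x' - x| := by
    intro y hy
    have := hconv.norm_image_sub_le_of_norm_hasDerivWithin_le (f := fun t : ℝ => ψ1 t) (f' := fun t : ℝ => ψ2 t)
      (fun t ht => (h1 t ht).comp_ofReal.hasDerivWithinAt) h2 hx hy
    refine this.trans ?_
    gcongr
    rw [Real.norm_eq_abs]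
    exact abs_sub_left_of_mem_uIcc hy
  have := hconv.norm_image_sub_le_of_norm_hasDerivWithin_le (f := fun t : ℝ => ψ t - (t - x) * ψ1 x)
      (f' := fun t : ℝ => ψ1 t - ψ1 x)
      (fun t ht => by
        have a := (h0 t ht).comp_ofReal
        have b : HasDerivAt (fun t : ℝ => ((t:ℂ) - x) * ψ1 x) (1 * ψ1 x) t := by
          have : HasDerivAt (fun t : ℝ => ((t:ℂ) - x)) 1 t := by
            have := (hasDerivAt_id t).ofReal_comp.sub_const (x:ℂ)
            simpa using this
          exact this.mul_const _
        exact ((a.sub b).congr_deriv (by ring)).hasDerivWithinAt) s1 hx hx'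
  calc ‖ψ x' - ψ x - (x' - x) * ψ1 x‖ = ‖(ψ x' - (x' - x) * ψ1 x) - (ψ x - (x - x) * ψ1 x)‖ := by congr 1; ring
    _ ≤ _ := this
    _ = _ := by rw [Real.norm_eq_abs]; ring

/-- geometric tail bounds -/
lemma geo_tail (u : ℕ → ℂ) (B r : ℝ) (h : ∀ i, ‖u i - u (i+1)‖ ≤ B * (r / 2^i)) :
    ∃ a, Tendsto u atTop (nhds a) ∧ ∀ i, ‖u i - a‖ ≤ 2 * B * (r / 2^i) := by
  have h' : ∀ n, dist (u n) (u (n+1)) ≤ (2*B*r) / 2 / 2^n := by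
    intro n; rw [dist_eq_norm]; refine (h n).trans (le_of_eq ?_); field_simp
  obtain ⟨a, ha⟩ := cauchySeq_tendsto_of_complete (cauchySeq_of_le_geometric_two h')
  refine ⟨a, ha, fun i => ?_⟩
  have := dist_le_of_le_geometric_two_of_tendsto h' ha i
  rw [dist_eq_norm] at this
  refine this.trans (le_of_eq ?_); field_simp

lemma geo_tail2 (u : ℕ → ℂ) (a : ℂ) (B r : ℝ) (hr : 0 < r) (hB : 0 ≤ B) (ha : Tendsto u atTop (nhds a))
    (h : ∀ i, ‖u i - u (i+1)‖ ≤ B * (r / 2^i)^2) (i : ℕ) : ‖u i - a‖ ≤ 2 * B * (r / 2^i)^2 := by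
  have h2 : ∀ l, ‖u (l+i) - u (l+1+i)‖ ≤ (B * (r/2^i)) * ((r/2^i) / 2^l) := by
    intro l
    have := h (l+i)
    rw [show l + i + 1 = l + 1 + i by ring] at this
    refine this.trans ?_
    have e : r / 2^(l+i) = (r/2^i)/2^l := by rw [pow_add]; field_simp
    rw [e, sq, ← mul_assoc]
    refine mul_le_mul_of_nonneg_right (mul_le_mul_of_nonneg_left ?_ hB) (by positivity)
    exact div_le_self (by positivity) (one_le_pow₀ (by norm_num))
  obtain ⟨b, hb, hb2⟩ := geo_tail (fun l => u (l+i)) _ _ h2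
  have : a = b := tendsto_nhds_unique ((tendsto_add_atTop_iff_nat i).2 ha) hb
  subst this
  have := hb2 0
  simp only [zero_add, pow_zero, div_one] at this
  refine this.trans (le_of_eq ?_); ring

lemma glue (r c C : ℝ) (hr : 0 < r) (hc : 0 < c) (hc1 : c ≤ 1) (hC : 1 ≤ C) (f : ℝ → ℂ) (e : ℝ → ℝ)
    (β : ℕ → ℝ) (hβ0 : ∀ k, 0 ≤ β k) (he0 : ∀ a, 0 ≤ e a)
    (H : ∀ x ∈ Ioo (-r) r, ∀ a, 0 < a → a ≤ r → ∃ F : ℂ → ℂ, DifferentiableOn ℂ F (Metric.ball (x:ℂ) (c*a)) ∧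
      (∀ z ∈ Metric.ball (x:ℂ) (c*a), ‖F z‖ ≤ C) ∧ ∀ y : ℝ, |y - x| < c*a → ‖f y - F y‖ ≤ e a)
    (Hβ : ∀ k a, 0 < a → a ≤ r → Real.sqrt (e a) ≤ β k * a^k) :
    ∃ G : ℕ → ℝ → ℂ, (∀ x ∈ Ioo (-r) r, G 0 x = f x) ∧
      (∀ k, ∀ x ∈ Ioo (-r) r, HasDerivAt (G k) (G (k+1) x) x) ∧
      ∀ k, ∀ x ∈ Ioo (-r) r, ‖G k x‖ ≤ k.factorial * (64/c)^k * (C * (1/r)^k + 4 * Real.sqrt (2*C) * β (k+1) * r) := by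
  choose! F hF1 hF2 hF3 using H
  set I := Ioo (-r) r with hI
  set K := 2 * Real.sqrt (2*C) with hK
  have hK0 : 0 ≤ K := by positivity
  -- comparison
  have cmp : ∀ x ∈ I, ∀ x' ∈ I, ∀ a a', 0 < a → a ≤ r → a' ≤ a → a ≤ 2 * a' → |x' - x| ≤ c*a/4 →
      ∀ y : ℝ, |y - x'| ≤ c*a/64 → ∀ k l : ℕ,
      ‖iteratedDeriv k (F x a) y - iteratedDeriv k (F x' a') y‖ ≤
        k.factorial * (64/c)^k * K * β (l+k) * a^l := by
    intro x hx x' hx' a a' ha har ha' haa hxx y hy k l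
    have ha'0 : 0 < a' := by linarith
    have hca : 0 < c*a := by positivity
    have hca' : c*a ≤ 2*(c*a') := by nlinarith
    have := glue_cmp (F x a) (F x' a') f x x' (c*a) (c*a') C (e a) (e a') (by linarith) (he0 _) (he0 _)
      (hF1 x hx a ha har) (hF1 x' hx' a' ha'0 (ha'.trans har)) (hF2 x hx a ha har)
      (hF2 x' hx' a' ha'0 (ha'.trans har)) (hF3 x hx a ha har) (hF3 x' hx' a' ha'0 (ha'.trans har))
      x' (c*a/4) (by positivity) (by linarith) (by rw [sub_self, abs_zero]; linarith) k y (by linarith)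
    refine this.trans ?_
    have s1 := Hβ (l+k) a ha har
    have s2 : Real.sqrt (e a') ≤ β (l+k) * a^(l+k) :=
      (Hβ (l+k) a' ha'0 (ha'.trans har)).trans (by have := hβ0 (l+k); gcongr)
    calc (k.factorial : ℝ) * (16/(c*a/4))^k * (Real.sqrt (2*C) * (Real.sqrt (e a) + Real.sqrt (e a')))
        ≤ k.factorial * (16/(c*a/4))^k * (Real.sqrt (2*C) * (β (l+k) * a^(l+k) + β (l+k) * a^(l+k))) := by
          gcongr
      _ = k.factorial * (64/c)^k * K * β (l+k) * a^l := by
          have : 16/(c*a/4) = (64/c) / a := by field_simp; norm_num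
          rw [this, div_pow _ a, pow_add, hK]; field_simp; ring
  set α : ℕ → ℝ := fun i => r / 2^i with hα
  have hα0 : ∀ i, 0 < α i := fun i => by positivity
  have hαr : ∀ i, α i ≤ r := fun i => div_le_self hr.le (one_le_pow₀ (by norm_num))
  have hαs : ∀ i, α i = 2 * α (i+1) := fun i => by simp only [hα, pow_succ]; field_simp
  set D : ℕ → ℕ → ℝ → ℂ := fun k i x => iteratedDeriv k (F x (α i)) x with hD
  set Ak : ℕ → ℝ := fun k => k.factorial * (64/c)^k * K with hAk
  have hAk0 : ∀ k, 0 ≤ Ak k := fun k => by positivity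
  have step : ∀ k l i, ∀ x ∈ I, ‖D k i x - D k (i+1) x‖ ≤ Ak k * β (l+k) * α i ^ l := by
    intro k l i x hx
    exact cmp x hx x hx (α i) (α (i+1)) (hα0 i) (hαr i) (by linarith [hαs i, hα0 (i+1)]) (hαs i).le
      (by rw [sub_self, abs_zero]; have := hα0 i; positivity) x
      (by rw [sub_self, abs_zero]; have := hα0 i; positivity) k l
  have lim : ∀ k, ∀ x ∈ I, ∃ a, Tendsto (fun i => D k i x) atTop (nhds a) ∧
      ∀ i, ‖D k i x - a‖ ≤ 2 * (Ak k * β (1+k)) * α i := by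
    intro k x hx
    exact geo_tail (fun i => D k i x) (Ak k * β (1+k)) r (fun i => by simpa using step k 1 i x hx)
  choose! G hG1 hG2 using lim
  have hG3 : ∀ k i, ∀ x ∈ I, ‖D k i x - G k x‖ ≤ 2 * (Ak k * β (2+k)) * α i ^ 2 := by
    intro k i x hx
    exact geo_tail2 (fun i => D k i x) (G k x) (Ak k * β (2+k)) r hr (mul_nonneg (hAk0 k) (hβ0 _)) (hG1 k x hx)
      (fun i => step k 2 i x hx) i
  have hGb : ∀ k, ∀ x ∈ I, ‖G k x‖ ≤ k.factorial * (64/c)^k * (C * (1/r)^k + 4 * Real.sqrt (2*C) * β (k+1) * r) := by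
    intro k x hx
    have hcr : 0 < c*r/2 := by positivity
    have h0 : ‖D k 0 x‖ ≤ k.factorial * C / (c*r/2)^k := by
      have e0 : α 0 = r := by simp [hα]
      simp only [hD, e0]
      have hcl : Metric.closedBall (x:ℂ) (c*r/2) ⊆ Metric.ball (x:ℂ) (c*r) :=
        Metric.closedBall_subset_ball (by linarith)
      exact Complex.norm_iteratedDeriv_le_of_forall_mem_sphere_norm_le k hcr
        ((hF1 x hx r hr le_rfl).diffContOnCl_ball hcl)
        (fun z hz => hF2 x hx r hr le_rfl z (hcl (Metric.sphere_subset_closedBall hz)))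
    have h1 := hG2 k x hx 0
    have e0 : α 0 = r := by simp [hα]
    rw [e0] at h1
    calc ‖G k x‖ = ‖D k 0 x - (D k 0 x - G k x)‖ := by congr 1; ring
      _ ≤ k.factorial * C / (c*r/2)^k + 2 * (Ak k * β (1+k)) * r := (norm_sub_le _ _).trans (add_le_add h0 h1)
      _ = k.factorial * (2/c)^k * (C * (1/r)^k) + k.factorial * (64/c)^k * (4 * Real.sqrt (2*C) * β (k+1) * r) := by
          rw [show c*r/2 = c/2*r by ring, mul_pow, add_comm 1 k]
          simp only [hAk, hK, div_pow, one_pow]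
          field_simp
          ring
      _ ≤ _ := by
          rw [mul_add]
          gcongr
          norm_num
  refine ⟨G, ?_, ?_, hGb⟩
  · intro x hx
    refine tendsto_nhds_unique (hG1 0 x hx) ?_
    rw [tendsto_iff_norm_sub_tendsto_zero]
    have hz : Tendsto (fun i => (β 1 * α i)^2) atTop (nhds 0) := by
      have : Tendsto α atTop (nhds 0) := by
        have := (tendsto_pow_atTop_nhds_zero_of_lt_one (r := (1/2:ℝ)) (by norm_num) (by norm_num)).const_mul r
        rw [mul_zero] at this
        refine this.congr (fun i => ?_)
        simp only [hα, div_pow, one_pow]; field_simp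
      have := (this.const_mul (β 1)).pow 2
      simpa using this
    refine squeeze_zero (fun _ => norm_nonneg _) (fun i => ?_) hz
    simp only [hD, iteratedDeriv_zero]
    rw [norm_sub_rev]
    refine (hF3 x hx (α i) (hα0 i) (hαr i) x (by rw [sub_self, abs_zero]; have := hα0 i; positivity)).trans ?_
    have := Hβ 1 (α i) (hα0 i) (hαr i)
    rw [pow_one] at this
    rw [← Real.sq_sqrt (he0 (α i))]
    gcongr
  · intro k x hx
    -- uniform bound on second derivative
    obtain ⟨B2, hB20, hB2⟩ : ∃ B2, 0 ≤ B2 ∧ ∀ i, ∀ y ∈ I, |y - x| ≤ c*α i/64 →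
        ‖iteratedDeriv (k+2) (F x (α i)) y‖ ≤ B2 := by
      set b1 := Ak (k+2) * β (0+(k+2)) with hb1
      set b2 := 2 * (Ak (k+2) * β (1+(k+2))) * r with hb2
      set b3 := (k+2).factorial * (64/c)^(k+2) * (C * (1/r)^(k+2) + 4 * Real.sqrt (2*C) * β (k+2+1) * r) with hb3
      have hβ1 := hβ0 (0+(k+2))
      have hβ2 := hβ0 (1+(k+2))
      have hβ3 := hβ0 (k+2+1)
      have hA := hAk0 (k+2)
      refine ⟨b1 + (b2 + b3), by positivity, fun i y hy hyx => ?_⟩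
      have q := hα0 i
      have c1 := cmp x hx y hy (α i) (α i) (hα0 i) (hαr i) le_rfl (by linarith) (by
        have : 0 < c * α i := by positivity
        linarith) y (by rw [sub_self, abs_zero]; positivity) (k+2) 0
      rw [pow_zero, mul_one] at c1
      have c2 := hG2 (k+2) y hy i
      have c3 := hGb (k+2) y hy
      have c4 : 2 * (Ak (k+2) * β (1+(k+2))) * α i ≤ b2 := by
        rw [hb2]; have := hαr i; gcongr
      calc ‖iteratedDeriv (k+2) (F x (α i)) y‖ = ‖(iteratedDeriv (k+2) (F x (α i)) y - D (k+2) i y) +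
            ((D (k+2) i y - G (k+2) y) + G (k+2) y)‖ := by congr 1; ring
        _ ≤ _ := (norm_add_le _ _).trans (add_le_add c1 ((norm_add_le _ _).trans (add_le_add (c2.trans c4) c3)))
    set B3 := 2 * (Ak k * β (2+k)) with hB3
    set B4 := Ak k * β (2+k) with hB4
    set B5 := 2 * (Ak (k+1) * β (1+(k+1))) with hB5
    have hB30 : 0 ≤ B3 := by have := hAk0 k; have := hβ0 (2+k); positivity
    have hB40 : 0 ≤ B4 := by have := hAk0 k; have := hβ0 (2+k); positivity
    have hB50 : 0 ≤ B5 := by have := hAk0 (k+1); have := hβ0 (1+(k+1)); positivity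
    set B := B3 * (128/c)^2 + B4 * (128/c)^2 + B2 + B3 * (128/c)^2 + B5 * (128/c) with hB
    have quad : ∀ x' ∈ I, |x' - x| ≤ c*r/64 → ‖G k x' - G k x - (x' - x) * G (k+1) x‖ ≤ B * |x' - x|^2 := by
      intro x' hx' hxx
      by_cases hne : x' = x
      · subst hne; simp
      have hpos : 0 < |x' - x| := abs_pos.2 (sub_ne_zero.2 hne)
      set h := |x' - x| with hh
      obtain ⟨i, hi1, hi2⟩ : ∃ i, h ≤ c*α i/64 ∧ c*α (i+1)/64 < h := by
        obtain ⟨i, hi1, hi2⟩ := exists_nat_pow_near_of_lt_one (x := h/(c*r/64)) (y := 1/2) (by positivity)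
          (by rw [div_le_one (by positivity)]; exact hxx) (by norm_num) (by norm_num)
        rw [lt_div_iff₀ (by positivity)] at hi1
        rw [div_le_iff₀ (by positivity)] at hi2
        refine ⟨i, hi2.trans (le_of_eq ?_), lt_of_eq_of_lt ?_ hi1⟩
        · simp only [hα, div_pow, one_pow]; field_simp
        · simp only [hα, div_pow, one_pow]; field_simp
      have q := hα0 i
      have hαh : α i ≤ 128/c * h := by
        rw [div_mul_eq_mul_div, le_div_iff₀ hc]
        have := hαs i
        nlinarith
      have hseg : ∀ y ∈ uIcc x x', y ∈ I ∧ |y - x| ≤ h := by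
        intro y hy
        refine ⟨?_, abs_sub_left_of_mem_uIcc hy⟩
        have : OrdConnected I := ordConnected_Ioo
        exact this.uIcc_subset hx hx' hy
      have hball : ∀ y ∈ uIcc x x', (y:ℂ) ∈ Metric.ball (x:ℂ) (c * α i) := by
        intro y hy
        rw [Metric.mem_ball, Complex.dist_eq, ← Complex.ofReal_sub, Complex.norm_real]
        have := (hseg y hy).2
        have : 0 < c * α i := by positivity
        simp only [Real.norm_eq_abs]; linarith
      have hd := hF1 x hx (α i) (hα0 i) (hαr i)
      have T := taylor2 (iteratedDeriv k (F x (α i))) (iteratedDeriv (k+1) (F x (α i)))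
        (iteratedDeriv (k+2) (F x (α i))) x x' B2 hB20
        (fun y hy => holo_iter_hasDerivAt _ _ _ hd k y (hball y hy))
        (fun y hy => holo_iter_hasDerivAt _ _ _ hd (k+1) y (hball y hy))
        (fun y hy => hB2 i y (hseg y hy).1 ((hseg y hy).2.trans hi1))
      have t1 := hG3 k i x' hx'
      have t2 := cmp x hx x' hx' (α i) (α i) (hα0 i) (hαr i) le_rfl (by linarith) (by
        have : 0 < c * α i := by positivity
        linarith) x' (by rw [sub_self, abs_zero]; positivity) k 2
      have t3 := hG3 k i x hx
      have t4 := hG2 (k+1) x hx i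
      have hsq : α i^2 ≤ (128/c)^2 * h^2 := by rw [← mul_pow]; gcongr
      rw [norm_sub_rev] at t1
      calc ‖G k x' - G k x - (x' - x) * G (k+1) x‖
          = ‖(G k x' - D k i x') + (-(iteratedDeriv k (F x (α i)) x' - D k i x') +
              ((iteratedDeriv k (F x (α i)) x' - D k i x - (x' - x) * D (k+1) i x) + ((D k i x - G k x) +
              (x' - x) * (D (k+1) i x - G (k+1) x))))‖ := by congr 1; ring
        _ ≤ B3 * α i^2 + (B4 * α i^2 + (B2 * h^2 + (B3 * α i^2 + h * (B5 * α i)))) := by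
            refine (norm_add_le _ _).trans (add_le_add t1 ?_)
            refine (norm_add_le _ _).trans (add_le_add (by rw [norm_neg]; exact t2) ?_)
            refine (norm_add_le _ _).trans (add_le_add T ?_)
            refine (norm_add_le _ _).trans (add_le_add t3 ?_)
            rw [norm_mul, ← Complex.ofReal_sub, Complex.norm_real]
            exact mul_le_mul_of_nonneg_left t4 (abs_nonneg _)
        _ ≤ B3 * ((128/c)^2 * h^2) + (B4 * ((128/c)^2 * h^2) + (B2 * h^2 + (B3 * ((128/c)^2 * h^2) +
              h * (B5 * (128/c * h))))) := by gcongr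
        _ = B * h^2 := by rw [hB]; ring
    rw [hasDerivAt_iff_isLittleO]
    have hO : (fun x' : ℝ => G k x' - G k x - (x' - x) • G (k+1) x) =O[nhds x] fun x' => |x' - x|^2 := by
      refine IsBigO.of_bound B ?_
      have n1 : I ∈ nhds x := isOpen_Ioo.mem_nhds hx
      have n2 : Metric.closedBall x (c*r/64) ∈ nhds x := Metric.closedBall_mem_nhds x (by positivity)
      filter_upwards [n1, n2] with x' h1 h2
      have := quad x' h1 (by rw [Metric.mem_closedBall, Real.dist_eq] at h2; exact h2)
      rw [Complex.real_smul, Complex.ofReal_sub, norm_pow, Real.norm_eq_abs, abs_abs]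
      exact this
    refine hO.trans_isLittleO ?_
    have : (fun x' : ℝ => |x' - x|^2) =o[nhds x] fun x' => |x' - x|^1 := by
      have := (isLittleO_pow_pow (𝕜 := ℝ) (m := 1) (n := 2) (by norm_num))
      have t : Tendsto (fun x' : ℝ => |x' - x|) (nhds x) (nhds 0) := by
        have : Continuous (fun x' : ℝ => |x' - x|) := by fun_prop
        simpa using this.tendsto x
      exact this.comp_tendsto t
    refine this.trans_isBigO ?_
    refine IsBigO.of_bound 1 (Eventually.of_forall fun x' => ?_)
    simp

lemma mseq_pos {M : ℕ → ℝ} (h : IsWeightSeq M) (k : ℕ) : 0 < mseq M k :=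
  div_pos (h.2.1 k) (by positivity)

lemma mseq_zero {M : ℕ → ℝ} (h : IsWeightSeq M) : mseq M 0 = 1 := by
  simp [mseq, h.1]

lemma root_tendsto {n : ℕ → ℝ} (hp : ∀ k, 0 < n k) (hr : RootTendsToInfty n) (t : ℝ) (ht : 0 < t) :
    ∀ᶠ k : ℕ in atTop, t^k ≤ n k := by
  filter_upwards [hr.eventually_ge_atTop t, eventually_ge_atTop 1] with k hk hk1
  have : ((n k) ^ (1/(k:ℝ)))^k = n k := by
    rw [one_div]; exact Real.rpow_inv_natCast_pow (hp k).le (by omega)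
  rw [← this]; gcongr

lemma gammaBar_spec {n : ℕ → ℝ} (hp : ∀ k, 0 < n k) (hr : RootTendsToInfty n) (t : ℝ) (ht : 0 < t) (k : ℕ) :
    n (GammaBar n t) * t^(GammaBar n t) ≤ n k * t^k := by
  have h1 : Tendsto (fun k => n k * t^k) atTop atTop := by
    have h2 : Tendsto (fun k : ℕ => (2:ℝ)^k) atTop atTop := tendsto_pow_atTop_atTop_of_one_lt (by norm_num)
    refine tendsto_atTop_mono' _ ?_ h2
    filter_upwards [root_tendsto hp hr (2/t) (by positivity)] with k hk
    calc (2:ℝ)^k = (2/t)^k * t^k := by rw [← mul_pow]; congr 1; field_simp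
      _ ≤ _ := by gcongr
  rw [← Nat.cofinite_eq_atTop] at h1
  obtain ⟨k0, hk0⟩ := h1.exists_forall_le
  have hb : BddBelow (Set.range fun k => n k * t^k) := ⟨0, by
    rintro _ ⟨k, rfl⟩; have := hp k; positivity⟩
  have hh : hFun n t = n k0 * t^k0 := le_antisymm (ciInf_le hb k0) (le_ciInf hk0)
  have hne : {k : ℕ | hFun n t = n k * t ^ k}.Nonempty := ⟨k0, hh⟩
  have := Nat.sInf_mem hne
  have h3 : hFun n t = n (GammaBar n t) * t^(GammaBar n t) := this
  rw [← h3]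
  exact ciInf_le hb k

lemma gammaLow_spec {m : ℕ → ℝ} (hp : ∀ k, 0 < m k) (h0 : m 0 = 1) (t : ℝ) (ht : 0 < t) (k : ℕ)
    (hk : k ≤ GammaLow m t) : m k * t^k ≤ 1 := by
  induction k with
  | zero => simp [h0]
  | succ k ih =>
    have h1 := ih (by omega)
    have h2 : k ∉ {k : ℕ | 1 / t ≤ m (k + 1) / m k} := Nat.notMem_of_lt_sInf (by exact hk)
    simp only [Set.mem_ofPred_eq, not_le] at h2
    rw [div_lt_div_iff₀ (hp k) ht] at h2
    calc m (k+1) * t^(k+1) = (m (k+1) * t) * t^k := by ring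
      _ ≤ (1 * m k) * t^k := by gcongr
      _ ≤ 1 := by rw [one_mul]; exact h1

lemma gamma_dom {m n : ℕ → ℝ} (hm : ∀ k, 0 < m k) (hn : ∀ k, 0 < n k) (hm0 : m 0 = 1) (hn0 : n 0 = 1)
    (hr : RootTendsToInfty n) (C : ℝ) (hC : 1 ≤ C)
    (h : ∀ t : ℝ, 0 < t → GammaBar n (C*t) ≤ GammaLow m t) (i : ℕ) : m i ≤ C^i * n i := by
  induction i using Nat.strong_induction_on with
  | _ i ih =>
    rcases Nat.eq_zero_or_pos i with rfl | hi
    · simp [hm0, hn0]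
    obtain ⟨j, hj, hmax⟩ := Finset.exists_max_image (Finset.range i) (fun j => m (j+1) / m j)
      ⟨0, Finset.mem_range.2 hi⟩
    rw [Finset.mem_range] at hj
    set lam := m (j+1) / m j with hlam
    have hl0 : 0 < lam := div_pos (hm _) (hm _)
    set K := GammaBar n (C * (1/lam)) with hK
    have hKj : K ≤ j := by
      refine (h (1/lam) (by positivity)).trans ?_
      refine Nat.sInf_le ?_
      simp only [Set.mem_ofPred_eq, one_div, inv_inv]
      exact le_rfl
    have h1 := gammaBar_spec hn hr (C * (1/lam)) (by positivity) i
    rw [← hK] at h1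
    have h2 := ih K (by omega)
    have h3 : ∀ d, K + d ≤ i → m (K+d) ≤ m K * lam^d := by
      intro d
      induction d with
      | zero => intro _; simp
      | succ d ihd =>
        intro hd
        have a := ihd (by omega)
        have b := hmax (K+d) (Finset.mem_range.2 (by omega))
        rw [div_le_iff₀ (hm _)] at b
        calc m (K+(d+1)) ≤ lam * m (K+d) := b
          _ ≤ lam * (m K * lam^d) := by gcongr
          _ = m K * lam^(d+1) := by ring
    obtain ⟨d, rfl⟩ : ∃ d, i = K + d := ⟨i - K, by omega⟩
    have h4 := h3 d le_rfl
    calc m (K+d) ≤ m K * lam^d := h4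
      _ ≤ (C^K * n K) * lam^d := by gcongr
      _ = (n K * (C * (1/lam))^K) * lam^(K+d) := by
          rw [mul_pow, pow_add, one_div, inv_pow]; field_simp
      _ ≤ (n (K+d) * (C * (1/lam))^(K+d)) * lam^(K+d) := by gcongr
      _ = C^(K+d) * n (K+d) := by
          rw [mul_pow, one_div, inv_pow]; field_simp

/-- the chain of weights needed in the main estimate -/
structure WChain (q : ℕ) (M n l L' : ℕ → ℝ) (A : ℝ) : Prop where
  hA : 1 ≤ A
  hM : ∀ k, 0 < M k
  hn : ∀ k, 0 < n k
  hl : ∀ k, 0 < l k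
  hL : ∀ k, 0 < L' k
  a : ∀ t : ℝ, 0 < t → ∃ K : ℕ, (∀ k ≤ K, mseq M k * t^k ≤ A * (1/2)^k) ∧
    M (K+1) / K.factorial * t^(K+1) ≤ A * t * (1/2)^K ∧
    ∀ k, M (K+1) / K.factorial * t^(K+1) ≤ A * t * (n k * (A*t)^k)
  b : ∀ k, n (2^q * k) ≤ A^k * l k^(2^q)
  c : ∀ k, k.factorial * l (k+1) ≤ A^(k+1) * L' k
  d : RootTendsToInfty (mseq L')

lemma wseq_mono {M : ℕ → ℝ} (h : IsWeightSeq M) (k : ℕ) : M k ≤ M (k+1) := by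
  obtain ⟨h0, hp, h1, hc, -⟩ := h
  induction k with
  | zero => rw [h0]; exact h1
  | succ k ih =>
    have := hc (k+1) (by omega)
    rw [Nat.add_sub_cancel] at this
    have p := hp k
    have p1 := hp (k+1)
    have p2 := hp (k+1+1)
    by_contra hcon
    push Not at hcon
    nlinarith [mul_le_mul ih hcon.le p2.le p1.le]

lemma wchain_a {M M' N : ℕ → ℝ} (hM : IsWeightSeq M) (hM' : IsWeightSeq M') (hN : IsWeightSeq N)
    (hrN : RootTendsToInfty (mseq N)) (C C2 : ℝ) (hC : 1 ≤ C) (hC2 : 1 ≤ C2)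
    (hd : ∀ j : ℕ, M (j+1) ≤ C^(j+1) * M' j)
    (hg : ∀ t : ℝ, 0 < t → GammaBar (mseq N) (C2 * t) ≤ GammaLow (mseq M') t) (A : ℝ) (hA : 2*C*C2 ≤ A) :
    ∀ t : ℝ, 0 < t → ∃ K : ℕ, (∀ k ≤ K, mseq M k * t^k ≤ A * (1/2)^k) ∧
    M (K+1) / K.factorial * t^(K+1) ≤ A * t * (1/2)^K ∧
    ∀ k, M (K+1) / K.factorial * t^(K+1) ≤ A * t * (mseq N k * (A*t)^k) := by
  intro t ht
  have hCA : C ≤ A := by nlinarith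
  have hA0 : 0 < A := by linarith
  refine ⟨GammaBar (mseq N) (C2 * (2*C*t)), ?_⟩
  set K := GammaBar (mseq N) (C2 * (2*C*t)) with hK
  have hKl : K ≤ GammaLow (mseq M') (2*C*t) := hg _ (by positivity)
  have h1 : ∀ k ≤ K, mseq M' k * (C*t)^k ≤ (1/2)^k := by
    intro k hk
    have := gammaLow_spec (mseq_pos hM') (mseq_zero hM') (2*C*t) (by positivity) k (hk.trans hKl)
    calc mseq M' k * (C*t)^k = (mseq M' k * (2*C*t)^k) * (1/2)^k := by
          rw [mul_assoc, ← mul_pow]; congr 2; ring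
      _ ≤ 1 * (1/2)^k := by gcongr
      _ = _ := one_mul _
  have h2 : M (K+1) / K.factorial * t^(K+1) ≤ C * t * (mseq M' K * (C*t)^K) := by
    calc M (K+1) / K.factorial * t^(K+1) ≤ (C^(K+1) * M' K) / K.factorial * t^(K+1) := by gcongr; exact hd K
      _ = _ := by rw [mseq, mul_pow]; ring
  refine ⟨?_, ?_, ?_⟩
  · intro k hk
    calc mseq M k * t^k ≤ (C^(k+1) * M' k / k.factorial) * t^k := by
          rw [mseq]; gcongr; exact (wseq_mono hM k).trans (hd k)
      _ = C * (mseq M' k * (C*t)^k) := by rw [mseq, mul_pow]; ring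
      _ ≤ A * (1/2)^k := by
          have := h1 k hk
          have := mseq_pos hM' k
          gcongr
  · refine h2.trans ?_
    have := h1 K le_rfl
    have := mseq_pos hM' K
    gcongr
  · intro k
    refine h2.trans ?_
    have e1 := gamma_dom (mseq_pos hM') (mseq_pos hN) (mseq_zero hM') (mseq_zero hN) hrN C2 hC2 hg K
    have e2 := gammaBar_spec (mseq_pos hN) hrN (C2*(2*C*t)) (by positivity) k
    rw [← hK] at e2
    have := mseq_pos hN K
    have := mseq_pos hN k
    have := mseq_pos hM' K
    have e3 : mseq M' K * (C*t)^K ≤ mseq N k * (A*t)^k := by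
      calc mseq M' K * (C*t)^K ≤ (C2^K * mseq N K) * (C*t)^K := by gcongr
        _ = mseq N K * (C2*(C*t))^K := by rw [mul_pow C2]; ring
        _ ≤ mseq N K * (C2*(2*C*t))^K := by
            gcongr
            nlinarith [mul_pos (by linarith : 0 < C) ht]
        _ ≤ mseq N k * (C2*(2*C*t))^k := e2
        _ ≤ mseq N k * (A*t)^k := by
            have : C2*(2*C*t) ≤ A*t := by nlinarith
            gcongr
    gcongr

lemma mg_double {N L : ℕ → ℝ} (hN : IsWeightSeq N) (hL : IsWeightSeq L) (h : MgFinite N L) :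
    ∃ B : ℝ, 1 ≤ B ∧ ∀ k, mseq N (2*k) ≤ B^k * mseq L k^2 := by
  obtain ⟨C, hC⟩ := h
  refine ⟨(max C 1)^2, one_le_pow₀ (le_max_right _ _), fun k => ?_⟩
  have hp := hL.2.1 k
  have h1 : N (2*k) ≤ (max C 1)^(2*k) * L k^2 := by
    rcases Nat.eq_zero_or_pos k with rfl | hk
    · simp [hN.1, hL.1]
    have : (N (k + k) / (L k * L k)) ^ (1 / (k + k : ℝ)) ≤ C := hC ⟨k, k, by omega, rfl⟩
    have hpos : 0 < N (k+k) / (L k * L k) := div_pos (hN.2.1 _) (by positivity)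
    have h2 : N (k+k) / (L k * L k) ≤ (max C 1)^(k+k) := by
      have e : ((N (k + k) / (L k * L k)) ^ (1 / (k + k : ℝ)))^(k+k) = N (k+k) / (L k * L k) := by
        rw [one_div, ← Nat.cast_add]
        exact Real.rpow_inv_natCast_pow hpos.le (by omega)
      rw [← e]
      gcongr
      exact this.trans (le_max_left _ _)
    rw [div_le_iff₀ (by positivity)] at h2
    rw [two_mul, sq]; exact h2
  have h3 : ((k.factorial : ℝ))^2 ≤ (2*k).factorial := by
    have := Nat.factorial_mul_factorial_dvd_factorial_add k k
    have := Nat.le_of_dvd (Nat.factorial_pos _) this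
    rw [← two_mul] at this
    rw [sq]; exact_mod_cast this
  unfold mseq
  calc N (2*k) / (2*k).factorial ≤ ((max C 1)^(2*k) * L k^2) / (k.factorial : ℝ)^2 := by gcongr
    _ = _ := by rw [← pow_mul, div_pow]; ring

lemma mg_step {n l l' : ℕ → ℝ} (q : ℕ) (hl : ∀ k, 0 < l k) (hl' : ∀ k, 0 < l' k) (A B : ℝ) (hA : 1 ≤ A) (hB : 1 ≤ B)
    (h1 : ∀ k, n (2^q * k) ≤ A^k * l k^(2^q)) (h2 : ∀ k, l (2*k) ≤ B^k * l' k^2) :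
    ∃ A', 1 ≤ A' ∧ ∀ k, n (2^(q+1) * k) ≤ A'^k * l' k^(2^(q+1)) := by
  refine ⟨A^2 * B^(2^q), one_le_mul_of_one_le_of_one_le (one_le_pow₀ hA) (one_le_pow₀ hB), fun k => ?_⟩
  have := hl (2*k)
  calc n (2^(q+1) * k) = n (2^q * (2*k)) := by congr 1; ring
    _ ≤ A^(2*k) * l (2*k)^(2^q) := h1 _
    _ ≤ A^(2*k) * (B^k * l' k^2)^(2^q) := by gcongr; exact h2 k
    _ = _ := by
      rw [mul_pow (B^k), ← pow_mul B, ← pow_mul (l' k), mul_pow (A^2), ← pow_mul A, ← pow_mul B]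
      rw [show 2 * 2^q = 2^(q+1) by ring, mul_comm k (2^q)]; ring

lemma mg_R (W : Set (ℕ → ℝ)) (hW : IsWeightMatrix W) (h : RModerateGrowth W) (q : ℕ) : ∀ N ∈ W, ∃ L ∈ W,
    ∃ A : ℝ, 1 ≤ A ∧ ∀ k, mseq N (2^q*k) ≤ A^k * mseq L k^(2^q) := by
  induction q with
  | zero => intro N hN; exact ⟨N, hN, 1, le_rfl, fun k => by simp⟩
  | succ q ih =>
    intro N hN
    obtain ⟨L, hL, A, hA, h1⟩ := ih N hN
    obtain ⟨L2, hL2, h2⟩ := h L hL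
    obtain ⟨B, hB, h3⟩ := mg_double (hW.2.1 L hL) (hW.2.1 L2 hL2) h2
    obtain ⟨A', hA', h4⟩ := mg_step q (mseq_pos (hW.2.1 L hL)) (mseq_pos (hW.2.1 L2 hL2)) A B hA hB h1 h3
    exact ⟨L2, hL2, A', hA', h4⟩

lemma mg_B (W : Set (ℕ → ℝ)) (hW : IsWeightMatrix W) (h : BModerateGrowth W) (q : ℕ) : ∀ L ∈ W, ∃ N ∈ W,
    ∃ A : ℝ, 1 ≤ A ∧ ∀ k, mseq N (2^q*k) ≤ A^k * mseq L k^(2^q) := by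
  induction q with
  | zero => intro N hN; exact ⟨N, hN, 1, le_rfl, fun k => by simp⟩
  | succ q ih =>
    intro L2 hL2
    obtain ⟨L, hL, h2⟩ := h L2 hL2
    obtain ⟨N, hN, A, hA, h1⟩ := ih L hL
    obtain ⟨B, hB, h3⟩ := mg_double (hW.2.1 L hL) (hW.2.1 L2 hL2) h2
    obtain ⟨A', hA', h4⟩ := mg_step q (mseq_pos (hW.2.1 L hL)) (mseq_pos (hW.2.1 L2 hL2)) A B hA hB h1 h3
    exact ⟨N, hN, A', hA', h4⟩

lemma wchain_build {M M' N L L' : ℕ → ℝ} (q : ℕ) (hM : IsWeightSeq M) (hM' : IsWeightSeq M') (hN : IsWeightSeq N)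
    (hL : IsWeightSeq L) (hL' : IsWeightSeq L')
    (hrN : RootTendsToInfty (mseq N)) (hrL : RootTendsToInfty (mseq L')) (C C2 A1 C3 : ℝ) (hC : 1 ≤ C) (hC2 : 1 ≤ C2)
    (hA1 : 1 ≤ A1) (hC3 : 1 ≤ C3)
    (hd : ∀ j : ℕ, M (j+1) ≤ C^(j+1) * M' j)
    (hg : ∀ t : ℝ, 0 < t → GammaBar (mseq N) (C2 * t) ≤ GammaLow (mseq M') t)
    (hb : ∀ k, mseq N (2^q*k) ≤ A1^k * mseq L k^(2^q)) (hc : ∀ j : ℕ, L (j+1) ≤ C3^(j+1) * L' j) :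
    ∃ A, WChain q M (mseq N) (mseq L) L' A := by
  have hCC : 0 < 2*C*C2 := by positivity
  refine ⟨2*C*C2 + A1 + C3, ⟨by linarith, hM.2.1, mseq_pos hN, mseq_pos hL, hL'.2.1, ?_, ?_, ?_, hrL⟩⟩
  · exact wchain_a hM hM' hN hrN C C2 hC hC2 hd hg _ (by linarith)
  · intro k
    refine (hb k).trans ?_
    have := mseq_pos hL k
    gcongr
    linarith
  · intro k
    have p := hL'.2.1 k
    have p2 := hL.2.1 (k+1)
    have f1 : (0:ℝ) < k.factorial := by positivity
    have f2 : (k.factorial : ℝ) ≤ (k+1).factorial := by exact_mod_cast Nat.factorial_le (by omega)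
    calc (k.factorial : ℝ) * mseq L (k+1) = (k.factorial / (k+1).factorial) * L (k+1) := by rw [mseq]; ring
      _ ≤ 1 * L (k+1) := by gcongr; rw [div_le_one (by positivity)]; exact f2
      _ = L (k+1) := one_mul _
      _ ≤ C3^(k+1) * L' k := hc k
      _ ≤ _ := by gcongr; linarith

lemma chain_R (W : Set (ℕ → ℝ)) (hW : IsWeightMatrix W) (hR : RRegular W) (hG : RModerateGrowth W) (q : ℕ) :
    ∀ M ∈ W, ∃ L' ∈ W, ∃ n l A, WChain q M n l L' A := by
  intro M hM
  obtain ⟨hr, hd, hg⟩ := hR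
  obtain ⟨M', hM', C, hC, h1⟩ := hd M hM
  obtain ⟨N, hN, C2, hC2, h2⟩ := hg M' hM'
  obtain ⟨L, hL, A1, hA1, h3⟩ := mg_R W hW hG q N hN
  obtain ⟨L', hL', C3, hC3, h4⟩ := hd L hL
  have w := hW.2.1
  obtain ⟨A, hA⟩ := wchain_build q (w M hM) (w M' hM') (w N hN) (w L hL) (w L' hL') (hr N hN) (hr L' hL')
    C C2 A1 C3 hC hC2 hA1 hC3 h1 h2 h3 h4
  exact ⟨L', hL', _, _, A, hA⟩

lemma chain_B (W : Set (ℕ → ℝ)) (hW : IsWeightMatrix W) (hR : BRegular W) (hG : BModerateGrowth W) (q : ℕ) :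
    ∀ L' ∈ W, ∃ M ∈ W, ∃ n l A, WChain q M n l L' A := by
  intro L' hL'
  obtain ⟨hr, hd, hg⟩ := hR
  obtain ⟨L, hL, C3, hC3, h4⟩ := hd L' hL'
  obtain ⟨N, hN, A1, hA1, h3⟩ := mg_B W hW hG q L hL
  obtain ⟨M', hM', C2, hC2, h2⟩ := hg N hN
  obtain ⟨M, hM, C, hC, h1⟩ := hd M' hM'
  have w := hW.2.1
  have up : ∀ (X : ℕ → ℝ) (hX : IsWeightSeq X) (c : ℝ) (hc : 1 ≤ c) (j : ℕ), c^j * X j ≤ c^(j+1) * X j := by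
    intro X hX c hc j
    have := hX.2.1 j
    gcongr
    omega
  obtain ⟨A, hA⟩ := wchain_build q (w M hM) (w M' hM') (w N hN) (w L hL) (w L' hL') (hr N hN) (hr L' hL')
    C C2 A1 C3 hC hC2 hA1 hC3 (fun j => (h1 j).trans (up _ (w M' hM') C hC j)) h2 h3
    (fun j => (h4 j).trans (up _ (w L' hL') C3 hC3 j))
  exact ⟨M, hM, _, _, A, hA⟩

lemma taylor_jet (G : ℕ → ℝ → ℂ) (x0 δ B : ℝ) (K : ℕ) (hB : 0 ≤ B)
    (hG : ∀ k, ∀ s ∈ Icc (0:ℝ) 1, HasDerivAt (G k) (G (k+1) (x0 + δ * s)) (x0 + δ * s))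
    (hb : ∀ s ∈ Icc (0:ℝ) 1, ‖G (K+1) (x0 + δ * s)‖ ≤ B) :
    ‖G 0 (x0 + δ) - ∑ k ∈ Finset.range (K+1), (δ:ℂ)^k / k.factorial * G k x0‖ ≤ B * |δ|^(K+1) / K.factorial := by
  have hder : ∀ s ∈ Icc (0:ℝ) 1, ∀ K : ℕ, HasDerivAt
      (fun s : ℝ => ∑ k ∈ Finset.range (K+1), ((δ:ℂ) * (1 - s))^k / k.factorial * G k (x0 + δ * s))
      (((δ:ℂ) * (1 - s))^K / K.factorial * (δ * G (K+1) (x0 + δ * s))) s := by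
    intro s hs K
    have hcomp : ∀ k, HasDerivAt (fun s : ℝ => G k (x0 + δ * s)) (δ * G (k+1) (x0 + δ * s)) s := by
      intro k
      have h1 : HasDerivAt (fun s : ℝ => x0 + δ * s) δ s := by
        simpa using ((hasDerivAt_id s).const_mul δ).const_add x0
      have := (hG k s hs).scomp s h1
      exact this.congr_deriv (by rw [Complex.real_smul])
    have hlin : HasDerivAt (fun s : ℝ => (δ:ℂ) * (1 - s)) (-(δ:ℂ)) s := by
      have := (((hasDerivAt_id s).ofReal_comp).const_sub (1:ℂ)).const_mul (δ:ℂ)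
      exact this.congr_deriv (by simp)
    induction K with
    | zero =>
      simpa using hcomp 0
    | succ K ih =>
      have h1 : HasDerivAt (fun s : ℝ => ((δ:ℂ) * (1 - s))^(K+1) / (K+1).factorial * G (K+1) (x0 + δ * s))
        ((((K+1:ℕ):ℂ) * ((δ:ℂ) * (1 - s))^K * (-(δ:ℂ))) / (K+1).factorial * G (K+1) (x0 + δ * s) +
          ((δ:ℂ) * (1 - s))^(K+1) / (K+1).factorial * (δ * G (K+2) (x0 + δ * s))) s := by
        have := ((hlin.pow (K+1)).div_const ((K+1).factorial : ℂ)).mul (hcomp (K+1))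
        exact this.congr_deriv (by simp)
      have := ih.add h1
      refine (this.congr_of_eventuallyEq (Eventually.of_forall fun s => ?_)).congr_deriv ?_
      · rw [Finset.sum_range_succ]; rfl
      · have hf : ((K+1).factorial : ℂ) = ((K+1:ℕ):ℂ) * K.factorial := by rw [Nat.factorial_succ]; push_cast; ring
        have hk : ((K+1:ℕ):ℂ) ≠ 0 := by exact_mod_cast Nat.succ_ne_zero K
        have hk2 : (K.factorial:ℂ) ≠ 0 := by exact_mod_cast Nat.factorial_ne_zero K
        rw [hf]; field_simp; ring
  have mv := (convex_Icc (0:ℝ) 1).norm_image_sub_le_of_norm_hasDerivWithin_le (C := B * |δ|^(K+1) / K.factorial)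
    (fun s hs => (hder s hs K).hasDerivWithinAt) (fun s hs => by
      rw [norm_mul, norm_div, norm_pow, norm_mul, norm_mul, Complex.norm_natCast, Complex.norm_real]
      have h1 : ‖(1:ℂ) - s‖ ≤ 1 := by
        rw [show (1:ℂ) - s = ((1 - s : ℝ) : ℂ) by push_cast; ring, Complex.norm_real, Real.norm_eq_abs, abs_le]
        constructor <;> linarith [hs.1, hs.2]
      have h2 := hb s hs
      calc (‖δ‖ * ‖(1:ℂ) - s‖)^K / K.factorial * (‖δ‖ * ‖G (K+1) (x0 + δ*s)‖)
          ≤ (‖δ‖ * 1)^K / K.factorial * (‖δ‖ * B) := by gcongr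
        _ = _ := by rw [Real.norm_eq_abs]; ring) (left_mem_Icc.2 zero_le_one) (right_mem_Icc.2 zero_le_one)
  have e1 : ∑ k ∈ Finset.range (K+1), ((δ:ℂ) * (1 - (1:ℝ)))^k / k.factorial * G k (x0 + δ * 1) = G 0 (x0 + δ) := by
    rw [Finset.sum_range_succ']
    simp
  have e0 : ∑ k ∈ Finset.range (K+1), ((δ:ℂ) * (1 - (0:ℝ)))^k / k.factorial * G k (x0 + δ * 0) =
      ∑ k ∈ Finset.range (K+1), (δ:ℂ)^k / k.factorial * G k x0 := by simp
  rw [e1, e0] at mv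
  simpa using mv

lemma dominate (u v : ℕ → ℝ) (hv : ∀ k, 0 < v k) (h : ∀ᶠ k in atTop, u k ≤ v k) :
    ∃ D : ℝ, 0 < D ∧ ∀ k, u k ≤ D * v k := by
  obtain ⟨k0, hk0⟩ := eventually_atTop.1 h
  have hs : ∀ k, 0 ≤ |u k| / v k := fun k => div_nonneg (abs_nonneg _) (hv k).le
  refine ⟨1 + ∑ k ∈ Finset.range k0, |u k| / v k, by
    have := Finset.sum_nonneg (s := Finset.range k0) (fun k _ => hs k); linarith, fun k => ?_⟩
  have hS := Finset.sum_nonneg (s := Finset.range k0) (fun k _ => hs k)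
  rcases le_or_gt k0 k with hk | hk
  · have := hk0 k hk
    nlinarith [mul_nonneg hS (hv k).le]
  · have h1 : |u k| / v k ≤ ∑ k ∈ Finset.range k0, |u k| / v k :=
      Finset.single_le_sum (fun k _ => hs k) (Finset.mem_range.2 hk)
    calc u k ≤ |u k| := le_abs_self _
      _ = |u k| / v k * v k := by have := (hv k).ne'; field_simp
      _ ≤ _ := by have := (hv k).le; gcongr; linarith

lemma poly_two_pow (p : ℕ) : ∃ D : ℝ, 1 ≤ D ∧ ∀ K : ℕ, ((K:ℝ)+1)^p * (1/2)^K ≤ D := by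
  have h : Tendsto (fun n : ℕ => (n:ℝ)^p * (1/2:ℝ)^n) atTop (nhds 0) :=
    tendsto_pow_const_mul_const_pow_of_lt_one p (by norm_num) (by norm_num)
  obtain ⟨D, hD⟩ := h.bddAbove_range
  refine ⟨max 1 (2*D), le_max_left _ _, fun K => ?_⟩
  refine le_trans ?_ (le_max_right _ _)
  have := hD ⟨K+1, rfl⟩
  simp only [Nat.cast_add, Nat.cast_one, pow_succ] at this
  linarith

/-- Taylor polynomial, rescaled -/
def tpoly (G : ℕ → ℝ → ℂ) (x0 a : ℝ) (K : ℕ) (lam : ℂ) : Polynomial ℂ :=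
  ∑ k ∈ Finset.range (K+1), Polynomial.monomial k (lam * ((a:ℂ)^k / k.factorial * G k x0))

lemma tpoly_deg (G : ℕ → ℝ → ℂ) (x0 a : ℝ) (K : ℕ) (lam : ℂ) : (tpoly G x0 a K lam).natDegree ≤ K := by
  refine Polynomial.natDegree_sum_le_of_forall_le _ _ fun k hk => ?_
  rw [Finset.mem_range] at hk
  exact (Polynomial.natDegree_monomial_le _).trans (by omega)

lemma tpoly_eval (G : ℕ → ℝ → ℂ) (x0 a : ℝ) (K : ℕ) (lam z : ℂ) : (tpoly G x0 a K lam).eval z =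
    lam * ∑ k ∈ Finset.range (K+1), ((a:ℂ)*z)^k / k.factorial * G k x0 := by
  rw [tpoly, Polynomial.eval_finsetSum, Finset.mul_sum]
  refine Finset.sum_congr rfl fun k _ => ?_
  rw [Polynomial.eval_monomial, mul_pow]; ring

lemma tpoly_bound (G : ℕ → ℝ → ℂ) (x0 a : ℝ) (K : ℕ) (lam z : ℂ) (B : ℝ) (hz : ‖z‖ ≤ 1) (hB : 0 ≤ B)
    (h : ∀ k ≤ K, ‖lam‖ * (|a|^k / k.factorial * ‖G k x0‖) ≤ B * (1/2)^k) : ‖(tpoly G x0 a K lam).eval z‖ ≤ 2 * B := by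
  rw [tpoly, Polynomial.eval_finsetSum]
  have h1 : ∀ k ∈ Finset.range (K+1), ‖(Polynomial.monomial k (lam * ((a:ℂ)^k / k.factorial * G k x0))).eval z‖ ≤
      B * (1/2)^k := by
    intro k hk
    rw [Finset.mem_range] at hk
    rw [Polynomial.eval_monomial]
    simp only [norm_mul, norm_div, norm_pow, Complex.norm_natCast, Complex.norm_real, Real.norm_eq_abs]
    calc ‖lam‖ * (|a|^k / k.factorial * ‖G k x0‖) * ‖z‖^k ≤ ‖lam‖ * (|a|^k / k.factorial * ‖G k x0‖) * 1 := by
          gcongr; exact pow_le_one₀ (norm_nonneg _) hz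
      _ ≤ _ := by rw [mul_one]; exact h k (by omega)
  refine (norm_sum_le_of_le _ h1).trans ?_
  rw [← Finset.mul_sum, mul_comm 2 B]
  gcongr
  have := Summable.sum_le_tsum (f := fun k : ℕ => (1/2:ℝ)^k) (Finset.range (K+1)) (fun k _ => by positivity) summable_geometric_two
  rw [tsum_geometric_two] at this
  exact this

lemma jet_scaled (G : ℕ → ℝ → ℂ) (r C σ : ℝ) (M : ℕ → ℝ) (hC : 0 < C) (hσ : 0 < σ) (hM : ∀ k, 0 < M k)
    (hG : ∀ k, ∀ x ∈ Ioo (-(2*r)) (2*r), HasDerivAt (G k) (G (k+1) x) x)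
    (hb : ∀ k, ∀ x ∈ Ioo (-(2*r)) (2*r), ‖G k x‖ ≤ C * σ^k * M k)
    (x0 a : ℝ) (hx0 : x0 ∈ Ioo (-r) r) (ha : 0 < a) (har : a ≤ r) (K : ℕ) (lam : ℂ) (w : ℝ) (hw : |w| < 1) :
    ‖lam * G 0 (x0 + a * w) - (tpoly G x0 a K lam).eval (w:ℂ)‖ ≤
      ‖lam‖ * (C * (M (K+1) / K.factorial * (σ * a)^(K+1))) := by
  have hin : ∀ s ∈ Icc (0:ℝ) 1, x0 + (a*w) * s ∈ Ioo (-(2*r)) (2*r) := by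
    intro s hs
    have h1 : |(a*w)*s| < r := by
      rw [abs_mul, abs_mul, abs_of_pos ha, abs_of_nonneg hs.1]
      have : a * |w| < r := by nlinarith [abs_nonneg w]
      nlinarith [hs.1, hs.2, mul_nonneg ha.le (abs_nonneg w)]
    rw [abs_lt] at h1
    constructor <;> linarith [hx0.1, hx0.2, h1.1, h1.2]
  have hMK := hM (K+1)
  have T := taylor_jet G x0 (a*w) (C * σ^(K+1) * M (K+1)) K (by positivity) (fun k s hs => hG k _ (hin s hs))
    (fun s hs => hb _ _ (hin s hs))
  rw [tpoly_eval, ← mul_sub, norm_mul]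
  push_cast at T
  gcongr
  refine T.trans ?_
  rw [abs_mul, abs_of_pos ha]
  calc C * σ^(K+1) * M (K+1) * (a * |w|)^(K+1) / K.factorial
      ≤ C * σ^(K+1) * M (K+1) * (a * 1)^(K+1) / K.factorial := by gcongr
    _ = _ := by rw [mul_pow σ]; ring

lemma jet_poly_bound (G : ℕ → ℝ → ℂ) (r C σ : ℝ) (M : ℕ → ℝ) (A : ℝ) (hC : 0 < C)
    (hb : ∀ k, ∀ x ∈ Ioo (-(2*r)) (2*r), ‖G k x‖ ≤ C * σ^k * M k)
    (x0 a : ℝ) (hx0 : x0 ∈ Ioo (-(2*r)) (2*r)) (ha : 0 < a) (K : ℕ) (lam : ℂ) (hA : 0 ≤ A)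
    (hK : ∀ k ≤ K, mseq M k * (σ*a)^k ≤ A * (1/2)^k) (z : ℂ) (hz : ‖z‖ ≤ 1) :
    ‖(tpoly G x0 a K lam).eval z‖ ≤ 2 * (‖lam‖ * (C * A)) := by
  refine tpoly_bound G x0 a K lam z _ hz (by positivity) fun k hk => ?_
  have key : |a|^k / k.factorial * ‖G k x0‖ ≤ C * (A * (1/2)^k) := by
    calc |a|^k / k.factorial * ‖G k x0‖ ≤ a^k / k.factorial * (C * σ^k * M k) := by
          rw [abs_of_pos ha]
          exact mul_le_mul_of_nonneg_left (hb k x0 hx0) (by positivity)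
      _ = C * (mseq M k * (σ*a)^k) := by rw [mseq, mul_pow]; ring
      _ ≤ _ := mul_le_mul_of_nonneg_left (hK k hk) hC.le
  calc ‖lam‖ * (|a|^k / k.factorial * ‖G k x0‖) ≤ ‖lam‖ * (C * (A * (1/2)^k)) := by gcongr
    _ = ‖lam‖ * (C*A) * (1/2)^k := by ring

lemma main_prop (j : ℕ) (hj : 1 ≤ j) : ∃ q : ℕ, ∀ (M n l L' : ℕ → ℝ) (A : ℝ), WChain q M n l L' A →
    ∃ A0 : ℝ, 0 < A0 ∧ ∀ (σ C r : ℝ) (f : ℝ → ℂ) (g h : ℕ → ℝ → ℂ), 0 < σ → 0 < C → 0 < r →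
      (∀ x ∈ Ioo (-(2*r)) (2*r), g 0 x = f x^j) →
      (∀ x ∈ Ioo (-(2*r)) (2*r), h 0 x = f x^(j+1)) →
      (∀ k, ∀ x ∈ Ioo (-(2*r)) (2*r), HasDerivAt (g k) (g (k+1) x) x) →
      (∀ k, ∀ x ∈ Ioo (-(2*r)) (2*r), HasDerivAt (h k) (h (k+1) x) x) →
      (∀ k, ∀ x ∈ Ioo (-(2*r)) (2*r), ‖g k x‖ ≤ C * σ^k * M k) →
      (∀ k, ∀ x ∈ Ioo (-(2*r)) (2*r), ‖h k x‖ ≤ C * σ^k * M k) →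
      ∃ G : ℕ → ℝ → ℂ, (∀ x ∈ Ioo (-r) r, G 0 x = f x) ∧
        (∀ k, ∀ x ∈ Ioo (-r) r, HasDerivAt (G k) (G (k+1) x) x) ∧
        ∃ C' : ℝ, 0 < C' ∧ ∀ k, ∀ x ∈ Ioo (-r) r, ‖G k x‖ ≤ C' * (A0*σ)^k * L' k := by
  obtain ⟨c, Cb, E0, q', hc0, hc1, hCb, hE0, hE01, hq', core⟩ := coreB j hj
  obtain ⟨Dp, hDp, hDp2⟩ := poly_two_pow (2*q')
  set p : ℕ := 2^(2*q') with hp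
  have hp2 : 2*q' ≤ p := Nat.lt_two_pow_self.le
  have hp0 : p ≠ 0 := by positivity
  refine ⟨2*q'+1, fun M n l L' A W => ?_⟩
  have hA := W.hA
  refine ⟨64/c*A^3, by positivity, ?_⟩
  intro σ C r f g h hσ hC hr hg0 hh0 hgd hhd hgb hhb
  have hA0 : 0 < A := by linarith
  have hM := W.hM
  -- the scaling constant
  set lam : ℝ := min 1 (min (1/(2*(C*A))) (E0/(C*(A*(σ*r))))) with hlam
  have hlam0 : 0 < lam := by
    rw [hlam]; refine lt_min one_pos (lt_min ?_ ?_) <;> positivity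
  have hlam1 : lam ≤ 1 := min_le_left _ _
  have hlam2 : lam * (2*(C*A)) ≤ 1 := by
    rw [← le_div_iff₀ (by positivity)]; exact (min_le_right _ _).trans (min_le_left _ _)
  have hlam3 : lam * (C*(A*(σ*r))) ≤ E0 := by
    rw [← le_div_iff₀ (by positivity)]; exact (min_le_right _ _).trans (min_le_right _ _)
  choose! Kf ha1 ha2 ha3 using W.a
  set Ef : ℝ → ℝ := fun a => lam * (C * (M (Kf (σ*a) + 1) / (Kf (σ*a)).factorial * (σ*a)^(Kf (σ*a) + 1))) with hEf
  have hEpos : ∀ a, 0 < a → 0 < Ef a := by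
    intro a ha
    have := hM (Kf (σ*a) + 1)
    simp only [hEf]; positivity
  have hEK : ∀ a, 0 < a → a ≤ r → Ef a ≤ (1/2)^(Kf (σ*a)) := by
    intro a ha har
    have h1 := ha2 (σ*a) (by positivity)
    calc Ef a ≤ lam * (C * (A * (σ*a) * (1/2)^(Kf (σ*a)))) := by simp only [hEf]; gcongr
      _ ≤ lam * (C * (A * (σ*r) * (1/2)^(Kf (σ*a)))) := by gcongr
      _ = (lam * (C * (A * (σ*r)))) * (1/2)^(Kf (σ*a)) := by ring
      _ ≤ 1 * (1/2)^(Kf (σ*a)) := by gcongr; linarith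
      _ = _ := one_mul _
  have hEE0 : ∀ a, 0 < a → a ≤ r → Ef a ≤ E0 := by
    intro a ha har
    have h1 := ha2 (σ*a) (by positivity)
    calc Ef a ≤ lam * (C * (A * (σ*a) * (1/2)^(Kf (σ*a)))) := by simp only [hEf]; gcongr
      _ ≤ lam * (C * (A * (σ*r) * 1)) := by
          gcongr; exact pow_le_one₀ (by norm_num) (by norm_num)
      _ ≤ E0 := by rw [mul_one]; exact hlam3
  set C3 : ℝ := Cb^2 * Dp * (1/lam)^(2*q') with hC3
  have hC31 : 1 ≤ C3 := by
    have h1 : 1 ≤ 1/lam := by rw [le_div_iff₀ hlam0]; linarith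
    have h2 : 1 ≤ Cb^2 := one_le_pow₀ hCb
    have h3 : 1 ≤ (1/lam)^(2*q') := one_le_pow₀ h1
    exact one_le_mul_of_one_le_of_one_le (one_le_mul_of_one_le_of_one_le h2 hDp) h3
  set C6 : ℝ := C3^(p+1) with hC6
  have hC60 : 0 < C6 := by positivity
  set e : ℝ → ℝ := fun a => |C6 * Ef a| ^ ((p:ℝ)⁻¹) with he
  have he0 : ∀ a, 0 ≤ e a := fun a => Real.rpow_nonneg (abs_nonneg _) _
  have hep : ∀ a, 0 < a → e a^p = C6 * Ef a := by
    intro a ha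
    simp only [he]
    rw [Real.rpow_inv_natCast_pow (abs_nonneg _) hp0, abs_of_pos (mul_pos hC60 (hEpos a ha))]
  have H : ∀ x ∈ Ioo (-r) r, ∀ a, 0 < a → a ≤ r → ∃ F : ℂ → ℂ, DifferentiableOn ℂ F (Metric.ball (x:ℂ) (c*a)) ∧
      (∀ z ∈ Metric.ball (x:ℂ) (c*a), ‖F z‖ ≤ Cb/lam) ∧ ∀ y : ℝ, |y - x| < c*a → ‖f y - F y‖ ≤ e a := by
    intro x hx a ha har
    have hx2 : x ∈ Ioo (-(2*r)) (2*r) := ⟨by linarith [hx.1], by linarith [hx.2]⟩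
    set K := Kf (σ*a) with hK
    have hlamn : ∀ i, 1 ≤ i → ‖(lam:ℂ)^i‖ ≤ lam := by
      intro i hi
      rw [norm_pow, Complex.norm_real, Real.norm_eq_abs, abs_of_pos hlam0]
      exact pow_le_of_le_one hlam0.le hlam1 (by omega)
    have hpb : ∀ (i : ℕ), 1 ≤ i → ∀ G : ℕ → ℝ → ℂ, (∀ k, ∀ x ∈ Ioo (-(2*r)) (2*r), ‖G k x‖ ≤ C * σ^k * M k) →
        ∀ z ∈ Metric.ball (0:ℂ) 1, ‖(tpoly G x a K ((lam:ℂ)^i)).eval z‖ ≤ 1 := by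
      intro i hi G hGb z hz
      rw [mem_ball_zero_iff] at hz
      refine (jet_poly_bound G r C σ M A hC hGb x a hx2 ha K _ hA0.le (ha1 (σ*a) (by positivity)) z hz.le).trans ?_
      have := hlamn i hi
      calc 2 * (‖(lam:ℂ)^i‖ * (C*A)) ≤ 2 * (lam * (C*A)) := by gcongr
        _ = lam * (2*(C*A)) := by ring
        _ ≤ 1 := hlam2
    have htb : ∀ (i : ℕ), 1 ≤ i → ∀ G : ℕ → ℝ → ℂ, (∀ k, ∀ x ∈ Ioo (-(2*r)) (2*r), HasDerivAt (G k) (G (k+1) x) x) →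
        (∀ k, ∀ x ∈ Ioo (-(2*r)) (2*r), ‖G k x‖ ≤ C * σ^k * M k) →
        (∀ x ∈ Ioo (-(2*r)) (2*r), G 0 x = f x^i) → ∀ w : ℝ, |w| < 1 →
        ‖((lam:ℂ) * f (x + a*w))^i - (tpoly G x a K ((lam:ℂ)^i)).eval (w:ℂ)‖ ≤ Ef a := by
      intro i hi G hGd hGb hG0 w hw
      have h1 : x + a*w ∈ Ioo (-(2*r)) (2*r) := by
        have : |a*w| < r := by
          rw [abs_mul, abs_of_pos ha]; nlinarith [abs_nonneg w]
        rw [abs_lt] at this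
        constructor <;> linarith [hx.1, hx.2, this.1, this.2]
      rw [mul_pow, ← hG0 _ h1]
      refine (jet_scaled G r C σ M hC hσ hM hGd hGb x a hx ha har K _ w hw).trans ?_
      have := hM (K+1)
      simp only [hEf]
      gcongr
      exact hlamn i hi
    obtain ⟨F0, hF1, hF2, hF3⟩ := core K (tpoly g x a K ((lam:ℂ)^j)) (tpoly h x a K ((lam:ℂ)^(j+1)))
      (fun w => (lam:ℂ) * f (x + a*w)) (Ef a) (tpoly_deg _ _ _ _ _) (hpb j hj g hgb) (hpb (j+1) (by omega) h hhb)
      (hEpos a ha) (hEE0 a ha har)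
      (fun w hw => ⟨htb j hj g hgd hgb hg0 w hw, htb (j+1) (by omega) h hhd hhb hh0 w hw⟩)
    have hmap : ∀ z ∈ Metric.ball (x:ℂ) (c*a), (z - x)/a ∈ Metric.ball (0:ℂ) c := by
      intro z hz
      rw [Metric.mem_ball, Complex.dist_eq] at hz
      rw [mem_ball_zero_iff, norm_div, Complex.norm_real, Real.norm_eq_abs, abs_of_pos ha, div_lt_iff₀ ha]
      exact hz
    refine ⟨fun z => F0 ((z - x)/a) / lam, ?_, ?_, ?_⟩
    · refine DifferentiableOn.div_const ?_ _
      exact hF1.comp (by fun_prop) hmap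
    · intro z hz
      rw [norm_div, Complex.norm_real, Real.norm_eq_abs, abs_of_pos hlam0]
      gcongr
      exact hF2 _ (hmap z hz)
    · intro y hy
      set w := (y - x)/a with hw
      have hyw : x + a*w = y := by rw [hw]; field_simp; ring
      have hwc : |w| < c := by rw [hw, abs_div, abs_of_pos ha, div_lt_iff₀ ha]; exact hy
      have h1 := hF3 w hwc
      simp only [hyw] at h1
      have hwcast : ((y:ℂ) - x)/a = (w:ℂ) := by rw [hw]; push_cast; ring
      show ‖f y - F0 (((y:ℂ) - x)/a) / lam‖ ≤ e a
      rw [hwcast]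
      set X := ‖f y - F0 w / lam‖ with hX
      have hX0 : 0 ≤ X := norm_nonneg _
      have hlX : ‖(lam:ℂ) * f y - F0 w‖ = lam * X := by
        have : (lam:ℂ) ≠ 0 := by exact_mod_cast hlam0.ne'
        rw [show (lam:ℂ) * f y - F0 w = lam * (f y - F0 w / lam) by field_simp, norm_mul, Complex.norm_real,
          Real.norm_eq_abs, abs_of_pos hlam0]
      rw [hlX] at h1
      have hE := hEpos a ha
      have hEle := hEK a ha har
      have hE1 : Ef a ≤ 1 := (hEE0 a ha har).trans hE01
      have h2 : X^(2*q') ≤ C3 * Ef a := by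
        have hXl : X = (1/lam) * (lam * X) := by field_simp
        calc X^(2*q') = (1/lam)^(2*q') * ((lam * X)^q')^2 := by
              rw [← pow_mul, mul_comm q' 2, ← mul_pow, ← hXl]
          _ ≤ (1/lam)^(2*q') * (Cb * (K+1)^q' * Ef a)^2 := by gcongr
          _ = Cb^2 * (1/lam)^(2*q') * (((K+1:ℝ))^(2*q') * Ef a) * Ef a := by ring
          _ ≤ Cb^2 * (1/lam)^(2*q') * (((K+1:ℝ))^(2*q') * (1/2)^K) * Ef a := by gcongr
          _ ≤ Cb^2 * (1/lam)^(2*q') * Dp * Ef a := by gcongr; exact hDp2 K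
          _ = C3 * Ef a := by rw [hC3]; ring
      have h3 : X ≤ C3 := by
        by_contra hcon
        push Not at hcon
        have : X ≤ X^(2*q') := le_self_pow₀ (by linarith) (by omega)
        nlinarith
      have h4 : X^p ≤ C6 * Ef a := by
        obtain ⟨d, hd⟩ : ∃ d, p = 2*q' + d := ⟨p - 2*q', by omega⟩
        calc X^p = X^(2*q') * X^d := by rw [hd, pow_add]
          _ ≤ (C3 * Ef a) * C3^d := by gcongr
          _ = C3^(d+1) * Ef a := by ring
          _ ≤ C6 * Ef a := by
            rw [hC6]; gcongr
            omega
      rw [← hep a ha] at h4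
      exact le_of_pow_le_pow_left₀ hp0 (he0 a) h4
  set C7 : ℝ := C6 * (lam * (C * (A * (σ*r)))) + 1 with hC7
  have hC71 : 1 ≤ C7 := by
    have : 0 < C6 * (lam * (C * (A * (σ*r)))) := by positivity
    linarith
  have Hβ : ∀ k a, 0 < a → a ≤ r → Real.sqrt (e a) ≤ (C7 * l k * (A^2*σ)^k) * a^k := by
    intro k a ha har
    have hl := W.hl k
    have hnp := W.hn (2^(2*q'+1) * k)
    refine le_of_pow_le_pow_left₀ (n := 2*p) (by omega) (by positivity) ?_
    have hpp : 2^(2*q'+1) = 2*p := by rw [hp]; ring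
    calc Real.sqrt (e a)^(2*p) = e a^p := by rw [pow_mul, Real.sq_sqrt (he0 a)]
      _ = C6 * Ef a := hep a ha
      _ ≤ C6 * (lam * (C * (A * (σ*a) * (n (2^(2*q'+1) * k) * (A*(σ*a))^(2^(2*q'+1) * k))))) := by
          have := ha3 (σ*a) (by positivity) (2^(2*q'+1) * k)
          simp only [hEf]; gcongr
      _ ≤ C6 * (lam * (C * (A * (σ*r) * (n (2^(2*q'+1) * k) * (A*(σ*a))^(2^(2*q'+1) * k))))) := by gcongr
      _ = (C6 * (lam * (C * (A * (σ*r))))) * (n (2^(2*q'+1) * k) * (A*(σ*a))^(2^(2*q'+1) * k)) := by ring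
      _ ≤ C7 * ((A^k * l k^(2^(2*q'+1))) * (A*(σ*a))^(2^(2*q'+1) * k)) := by
          have := W.b k
          gcongr
          rw [hC7]; linarith
      _ ≤ C7^(2*p) * (((A^k)^(2*p) * l k^(2*p)) * (A*(σ*a))^(2*p*k)) := by
          rw [hpp]
          have h1 : C7 ≤ C7^(2*p) := le_self_pow₀ hC71 (by omega)
          have h2 : A^k ≤ (A^k)^(2*p) := le_self_pow₀ (one_le_pow₀ hA) (by omega)
          gcongr
      _ = ((C7 * l k * (A^2*σ)^k) * a^k)^(2*p) := by
          rw [mul_comm (2*p) k, pow_mul (A*(σ*a)), ← mul_pow, ← mul_pow, ← mul_pow]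
          congr 1
          rw [mul_pow A, mul_pow σ, mul_pow (A^2), ← pow_mul]; ring
  obtain ⟨G, hG0, hGd, hGb⟩ := glue r c (Cb/lam) hr hc0 hc1 (by rw [le_div_iff₀ hlam0]; linarith) f e
    (fun k => C7 * l k * (A^2*σ)^k) (fun k => by have := W.hl k; positivity) he0 H Hβ
  refine ⟨G, hG0, hGd, ?_⟩
  have hL := W.hL
  obtain ⟨D, hD0, hD⟩ := dominate (fun k => (64/c*(1/r)/(64/c*A^3*σ))^k) (mseq L')
    (fun k => div_pos (hL k) (by positivity)) (root_tendsto (fun k => div_pos (hL k) (by positivity)) W.d _ (by positivity))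
  set S := Real.sqrt (2*(Cb/lam)) with hS
  have hS0 : 0 ≤ S := Real.sqrt_nonneg _
  refine ⟨Cb/lam * D + 4*S*C7*(A^3*σ)*r, by positivity, fun k x hx => ?_⟩
  refine (hGb k x hx).trans ?_
  have hLk := hL k
  have f1 : (k.factorial:ℝ) * (64/c)^k * (1/r)^k ≤ D * (64/c*A^3*σ)^k * L' k := by
    have := hD k
    simp only [div_pow (64/c*(1/r)), mseq] at this
    rw [div_le_iff₀ (by positivity)] at this
    have fp : (0:ℝ) < k.factorial := by positivity
    calc (k.factorial:ℝ) * (64/c)^k * (1/r)^k = k.factorial * (64/c*(1/r))^k := by rw [mul_pow (64/c)]; ring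
      _ ≤ k.factorial * (D * (L' k / k.factorial) * (64/c*A^3*σ)^k) := by gcongr
      _ = _ := by field_simp
  have f2 : (k.factorial:ℝ) * (64/c)^k * (C7 * l (k+1) * (A^2*σ)^(k+1)) ≤ C7*(A^3*σ) * (64/c*A^3*σ)^k * L' k := by
    have := W.c k
    calc (k.factorial:ℝ) * (64/c)^k * (C7 * l (k+1) * (A^2*σ)^(k+1))
        = C7 * (64/c)^k * (A^2*σ)^(k+1) * (k.factorial * l (k+1)) := by ring
      _ ≤ C7 * (64/c)^k * (A^2*σ)^(k+1) * (A^(k+1) * L' k) := by gcongr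
      _ = C7 * (64/c)^k * ((A^2*σ)^(k+1) * A^(k+1)) * L' k := by ring
      _ = C7 * (64/c)^k * (A^3*σ)^(k+1) * L' k := by rw [← mul_pow]; ring
      _ = _ := by rw [show 64/c*A^3*σ = 64/c*(A^3*σ) by ring, mul_pow (64/c), pow_succ (A^3*σ)]; ring
  calc (k.factorial:ℝ) * (64/c)^k * (Cb/lam * (1/r)^k + 4 * S * (C7 * l (k+1) * (A^2*σ)^(k+1)) * r)
      = Cb/lam * ((k.factorial:ℝ) * (64/c)^k * (1/r)^k) +
        4 * S * r * ((k.factorial:ℝ) * (64/c)^k * (C7 * l (k+1) * (A^2*σ)^(k+1))) := by ring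
    _ ≤ Cb/lam * (D * (64/c*A^3*σ)^k * L' k) + 4 * S * r * (C7*(A^3*σ) * (64/c*A^3*σ)^k * L' k) := by gcongr
    _ = _ := by ring

lemma jets_of_contDiffOn (g : ℝ → ℂ) (U : Set ℝ) (hU : IsOpen U) (hg : ContDiffOn ℝ (⊤ : ℕ∞) g U) (k : ℕ)
    (x : ℝ) (hx : x ∈ U) :
    HasDerivAt (iteratedDerivWithin k g U) (iteratedDerivWithin (k+1) g U x) x := by
  have h1 : DifferentiableOn ℝ (iteratedDerivWithin k g U) U :=
    hg.differentiableOn_iteratedDerivWithin (by exact_mod_cast WithTop.coe_lt_top k) hU.uniqueDiffOn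
  have h2 := (h1 x hx).hasDerivWithinAt.hasDerivAt (hU.mem_nhds hx)
  rw [iteratedDerivWithin_succ]
  exact h2

lemma contDiffOn_of_jets (f : ℝ → ℂ) (G : ℕ → ℝ → ℂ) (U : Set ℝ) (hU : IsOpen U)
    (h0 : ∀ x ∈ U, G 0 x = f x) (hG : ∀ k, ∀ x ∈ U, HasDerivAt (G k) (G (k+1) x) x) :
    ContDiffOn ℝ (⊤ : ℕ∞) f U ∧ ∀ k, ∀ x ∈ U, ‖iteratedFDerivWithin ℝ k f U x‖ = ‖G k x‖ := by
  have key : ∀ k, ∀ x ∈ U, iteratedDerivWithin k f U x = G k x := by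
    intro k
    induction k with
    | zero => intro x hx; rw [iteratedDerivWithin_zero]; exact (h0 x hx).symm
    | succ k ih =>
      intro x hx
      rw [iteratedDerivWithin_succ, derivWithin_congr (fun y hy => ih y hy) (ih x hx)]
      exact (hG k x hx).hasDerivWithinAt.derivWithin (hU.uniqueDiffWithinAt hx)
  refine ⟨contDiffOn_of_differentiableOn_deriv fun m _ => ?_, fun k x hx => ?_⟩
  · exact DifferentiableOn.congr (fun x hx => (hG m x hx).differentiableAt.differentiableWithinAt) (key m)
  · rw [norm_iteratedFDerivWithin_eq_norm_iteratedDerivWithin, key k x hx]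

lemma exists_radius (U1 U2 : Set ℝ) (h1 : IsOpen U1) (h2 : IsOpen U2) (z1 : (0:ℝ) ∈ U1) (z2 : (0:ℝ) ∈ U2) :
    ∃ r : ℝ, 0 < r ∧ closure (Ioo (-(2*r)) (2*r)) ⊆ U1 ∧ closure (Ioo (-(2*r)) (2*r)) ⊆ U2 ∧
      IsCompact (closure (Ioo (-(2*r)) (2*r))) := by
  obtain ⟨ε, hε, hb⟩ := Metric.isOpen_iff.1 (h1.inter h2) 0 ⟨z1, z2⟩
  have hs : closure (Ioo (-(2*(ε/4))) (2*(ε/4))) ⊆ U1 ∩ U2 := by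
    refine Subset.trans ?_ hb
    rw [closure_Ioo (by linarith)]
    intro x hx
    rw [mem_ball_zero_iff, Real.norm_eq_abs, abs_lt]
    constructor <;> linarith [hx.1, hx.2]
  refine ⟨ε/4, by positivity, hs.trans inter_subset_left, hs.trans inter_subset_right, ?_⟩
  rw [closure_Ioo (by linarith)]
  exact isCompact_Icc

lemma final_prop (j : ℕ) (hj : 1 ≤ j) : ∃ q : ℕ, ∀ (M n l L' : ℕ → ℝ) (A : ℝ), WChain q M n l L' A →
    ∃ A0 : ℝ, 0 < A0 ∧ ∀ (σ C r : ℝ) (f : ℝ → ℂ) (U1 U2 : Set ℝ), 0 < σ → 0 < C → 0 < r →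
      IsOpen U1 → IsOpen U2 → closure (Ioo (-(2*r)) (2*r)) ⊆ U1 → closure (Ioo (-(2*r)) (2*r)) ⊆ U2 →
      ContDiffOn ℝ (⊤ : ℕ∞) (f^j) U1 → ContDiffOn ℝ (⊤ : ℕ∞) (f^(j+1)) U2 →
      (∀ x ∈ Ioo (-(2*r)) (2*r), ∀ k : ℕ, ‖iteratedFDerivWithin ℝ k (f^j) U1 x‖ ≤ C * σ^k * M k) →
      (∀ x ∈ Ioo (-(2*r)) (2*r), ∀ k : ℕ, ‖iteratedFDerivWithin ℝ k (f^(j+1)) U2 x‖ ≤ C * σ^k * M k) →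
      ContDiffOn ℝ (⊤ : ℕ∞) f (Ioo (-r) r) ∧ ∃ C' : ℝ, 0 < C' ∧ ∀ x ∈ Ioo (-r) r, ∀ k : ℕ,
        ‖iteratedFDerivWithin ℝ k f (Ioo (-r) r) x‖ ≤ C' * (A0*σ)^k * L' k := by
  obtain ⟨q, hq⟩ := main_prop j hj
  refine ⟨q, fun M n l L' A W => ?_⟩
  obtain ⟨A0, hA0, H⟩ := hq M n l L' A W
  refine ⟨A0, hA0, ?_⟩
  intro σ C r f U1 U2 hσ hC hr o1 o2 s1 s2 c1 c2 b1 b2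
  have t1 := subset_closure.trans s1
  have t2 := subset_closure.trans s2
  obtain ⟨G, hG0, hGd, C', hC', hGb⟩ := H σ C r f (fun k => iteratedDerivWithin k (f^j) U1)
    (fun k => iteratedDerivWithin k (f^(j+1)) U2) hσ hC hr
    (fun x hx => by simp [iteratedDerivWithin_zero]) (fun x hx => by simp [iteratedDerivWithin_zero])
    (fun k x hx => jets_of_contDiffOn _ U1 o1 c1 k x (t1 hx))
    (fun k x hx => jets_of_contDiffOn _ U2 o2 c2 k x (t2 hx))
    (fun k x hx => by rw [← norm_iteratedFDerivWithin_eq_norm_iteratedDerivWithin]; exact b1 x hx k)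
    (fun k x hx => by rw [← norm_iteratedFDerivWithin_eq_norm_iteratedDerivWithin]; exact b2 x hx k)
  obtain ⟨hc, hn⟩ := contDiffOn_of_jets f G (Ioo (-r) r) isOpen_Ioo hG0 hGd
  exact ⟨hc, C', hC', fun x hx k => by rw [hn k x hx]; exact hGb k x hx⟩

/-- for a weight matrix `W`, if `W` is R-regular of R-moderate growth then
the ring of germs at `0 ∈ ℝ` of `E^{W}`-functions (Roumieu) has property (D); if `W` is
B-regular of B-moderate growth then the Beurling ring has property (D). -/
theorem statement9 (W : Set (ℕ → ℝ)) (hW : IsWeightMatrix W) :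
    (RRegular W → RModerateGrowth W →
      ∀ f : ℝ → ℂ, ∀ j : ℕ, 1 ≤ j →
        (∃ U : Set ℝ, IsOpen U ∧ (0 : ℝ) ∈ U ∧ MatrixRoumieuOn W (f ^ j) U) →
        (∃ U : Set ℝ, IsOpen U ∧ (0 : ℝ) ∈ U ∧ MatrixRoumieuOn W (f ^ (j + 1)) U) →
        ∃ U : Set ℝ, IsOpen U ∧ (0 : ℝ) ∈ U ∧ MatrixRoumieuOn W f U) ∧
    (BRegular W → BModerateGrowth W →
      ∀ f : ℝ → ℂ, ∀ j : ℕ, 1 ≤ j →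
        (∃ U : Set ℝ, IsOpen U ∧ (0 : ℝ) ∈ U ∧ MatrixBeurlingOn W (f ^ j) U) →
        (∃ U : Set ℝ, IsOpen U ∧ (0 : ℝ) ∈ U ∧ MatrixBeurlingOn W (f ^ (j + 1)) U) →
        ∃ U : Set ℝ, IsOpen U ∧ (0 : ℝ) ∈ U ∧ MatrixBeurlingOn W f U) := by
  have mono : ∀ (C1 C σ1 σ : ℝ) (M1 M : ℕ → ℝ), 0 < C1 → 0 < σ1 → C1 ≤ C → σ1 ≤ σ → (∀ k, 0 < M1 k) →
      (∀ k, M1 k ≤ M k) → ∀ k, C1 * σ1^k * M1 k ≤ C * σ^k * M k := by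
    intro C1 C σ1 σ M1 M h1 h2 h3 h4 h5 h6 k
    have := h5 k
    have := h6 k
    have h7 : 0 ≤ C := h1.le.trans h3
    have h8 : 0 ≤ σ := h2.le.trans h4
    gcongr
  constructor
  · rintro hR hGr f j hj ⟨U1, o1, z1, c1, H1⟩ ⟨U2, o2, z2, c2, H2⟩
    obtain ⟨r, hr, s1, s2, hcpt⟩ := exists_radius U1 U2 o1 o2 z1 z2
    obtain ⟨M1, hM1, C1, σ1, hC1, hσ1, b1⟩ := H1 _ isOpen_Ioo hcpt s1
    obtain ⟨M2, hM2, C2, σ2, hC2, hσ2, b2⟩ := H2 _ isOpen_Ioo hcpt s2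
    obtain ⟨M, hM, hle1, hle2⟩ : ∃ M ∈ W, (∀ k, M1 k ≤ M k) ∧ (∀ k, M2 k ≤ M k) := by
      rcases hW.2.2 M1 hM1 M2 hM2 with h | h
      · exact ⟨M2, hM2, h, fun _ => le_rfl⟩
      · exact ⟨M1, hM1, fun _ => le_rfl, h⟩
    obtain ⟨q, hq⟩ := final_prop j hj
    obtain ⟨L', hL', n, l, A, hch⟩ := chain_R W hW hR hGr q M hM
    obtain ⟨A0, hA0, H⟩ := hq M n l L' A hch
    obtain ⟨hc, C', hC', hb⟩ := H (max σ1 σ2) (max C1 C2) r f U1 U2 (lt_max_of_lt_left hσ1)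
      (lt_max_of_lt_left hC1) hr o1 o2 s1 s2 c1 c2
      (fun x hx k => (b1 x hx k).trans (mono _ _ _ _ _ _ hC1 hσ1 (le_max_left _ _) (le_max_left _ _)
        (hW.2.1 M1 hM1).2.1 hle1 k))
      (fun x hx k => (b2 x hx k).trans (mono _ _ _ _ _ _ hC2 hσ2 (le_max_right _ _) (le_max_right _ _)
        (hW.2.1 M2 hM2).2.1 hle2 k))
    refine ⟨Ioo (-r) r, isOpen_Ioo, ⟨by linarith, hr⟩, hc, fun V _ _ hV => ?_⟩
    exact ⟨L', hL', C', A0 * max σ1 σ2, hC', mul_pos hA0 (lt_max_of_lt_left hσ1),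
      fun x hx k => hb x (hV (subset_closure hx)) k⟩
  · rintro hB hGr f j hj ⟨U1, o1, z1, c1, H1⟩ ⟨U2, o2, z2, c2, H2⟩
    obtain ⟨r, hr, s1, s2, hcpt⟩ := exists_radius U1 U2 o1 o2 z1 z2
    obtain ⟨q, hq⟩ := final_prop j hj
    have key : ∀ L' ∈ W, ∀ σ0 : ℝ, 0 < σ0 → ContDiffOn ℝ (⊤ : ℕ∞) f (Ioo (-r) r) ∧ ∃ C' : ℝ, 0 < C' ∧
        ∀ x ∈ Ioo (-r) r, ∀ k : ℕ, ‖iteratedFDerivWithin ℝ k f (Ioo (-r) r) x‖ ≤ C' * σ0^k * L' k := by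
      intro L' hL' σ0 hσ0
      obtain ⟨M, hM, n, l, A, hch⟩ := chain_B W hW hB hGr q L' hL'
      obtain ⟨A0, hA0, H⟩ := hq M n l L' A hch
      have hσ : 0 < σ0/A0 := by positivity
      obtain ⟨C1, hC1, b1⟩ := H1 _ isOpen_Ioo hcpt s1 M hM (σ0/A0) hσ
      obtain ⟨C2, hC2, b2⟩ := H2 _ isOpen_Ioo hcpt s2 M hM (σ0/A0) hσ
      have := H (σ0/A0) (max C1 C2) r f U1 U2 hσ (lt_max_of_lt_left hC1) hr o1 o2 s1 s2 c1 c2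
        (fun x hx k => (b1 x hx k).trans (mono _ _ _ _ _ _ hC1 hσ (le_max_left _ _) le_rfl
          (hW.2.1 M hM).2.1 (fun _ => le_rfl) k))
        (fun x hx k => (b2 x hx k).trans (mono _ _ _ _ _ _ hC2 hσ (le_max_right _ _) le_rfl
          (hW.2.1 M hM).2.1 (fun _ => le_rfl) k))
      rwa [mul_div_cancel₀ _ hA0.ne'] at this
    obtain ⟨L0, hL0⟩ := hW.1
    refine ⟨Ioo (-r) r, isOpen_Ioo, ⟨by linarith, hr⟩, (key L0 hL0 1 one_pos).1, fun V _ _ hV L' hL' σ0 hσ0 => ?_⟩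
    obtain ⟨-, C', hC', hb⟩ := key L' hL' σ0 hσ0
    exact ⟨C', hC', fun x hx k => hb x (hV (subset_closure hx)) k⟩
end
end

section
/- Let M and N be weight sequences satisfying m_k^{1/k} → ∞ and n_k^{1/k} → ∞, where m_k := M_k/k! and n_k := N_k/k!, and suppose C := mg(M,N) < ∞. Then for all t > 0 and all j ∈ ℕ one has h_m(t) ≤ C^j·n_j·t^j·h_n(C·t), and for all t > 0 one has h_m(t) ≤ h_n(eC·t/2)^2. -/
open Filter Set Asymptotics MeasureTheory

noncomputable section

/-- The basic inequality `m (j+k) ≤ C^(j+k) n j n k`. -/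
theorem mseq_add_le (M N : ℕ → ℝ) (hM : IsWeightSeq M) (hN : IsWeightSeq N)
    (hfin : MgFinite M N) (j k : ℕ) :
    mseq M (j + k) ≤ mg M N ^ (j + k) * (mseq N j * mseq N k) := by
  obtain ⟨hM0, hMp, -⟩ := hM
  obtain ⟨hN0, hNp, -⟩ := hN
  have hNN : 0 < N j * N k := mul_pos (hNp j) (hNp k)
  have hq : 0 ≤ M (j + k) / (N j * N k) := (div_pos (hMp _) hNN).le
  have key : M (j + k) ≤ mg M N ^ (j + k) * (N j * N k) := by
    rcases Nat.eq_zero_or_pos (j + k) with h | h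
    · obtain ⟨rfl, rfl⟩ : j = 0 ∧ k = 0 := by omega
      simp [hM0, hN0]
    · have h1 : (M (j + k) / (N j * N k)) ^ (1 / (j + k : ℝ)) ≤ mg M N :=
        le_csSup hfin ⟨j, k, h, rfl⟩
      have h2 := pow_le_pow_left₀ (Real.rpow_nonneg hq _) h1 (j + k)
      have h3 : ((M (j + k) / (N j * N k)) ^ (1 / (j + k : ℝ))) ^ (j + k)
          = M (j + k) / (N j * N k) := by
        have := Real.rpow_inv_natCast_pow hq (n := j + k) (by omega)
        push_cast at this
        rwa [one_div]
      rw [h3] at h2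
      exact (div_le_iff₀ hNN).1 h2
  have hC : 0 ≤ mg M N ^ (j + k) * (N j * N k) := (hMp _).le.trans key
  have hf : ((j.factorial : ℝ) * k.factorial) ≤ ((j + k).factorial : ℝ) := by
    exact_mod_cast Nat.le_of_dvd (Nat.factorial_pos _)
      (Nat.factorial_mul_factorial_dvd_factorial_add j k)
  have hp : (0 : ℝ) < (j.factorial : ℝ) * k.factorial := by positivity
  calc mseq M (j + k) ≤ (mg M N ^ (j + k) * (N j * N k)) / ((j + k).factorial : ℝ) := by
        unfold mseq
        gcongr
    _ ≤ (mg M N ^ (j + k) * (N j * N k)) / ((j.factorial : ℝ) * k.factorial) :=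
        div_le_div_of_nonneg_left hC hp hf
    _ = _ := by
        unfold mseq
        field_simp

/-- Upper bound for `h_m` by each term. -/
theorem hFun_le (m : ℕ → ℝ) (hm : ∀ k, 0 ≤ m k) (t : ℝ) (ht : 0 ≤ t) (k : ℕ) :
    hFun m t ≤ m k * t ^ k :=
  ciInf_le ⟨0, by rintro _ ⟨i, rfl⟩; exact mul_nonneg (hm i) (pow_nonneg ht i)⟩ k

/-- if `C = mg (M, N) < ∞` then `h_m (t) ≤ C^j n_j t^j h_n (C t)` and
`h_m (t) ≤ h_n (e C t / 2) ^ 2` for all `t > 0`. -/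
theorem statement11 (M N : ℕ → ℝ) (hM : IsWeightSeq M) (hN : IsWeightSeq N)
    (hm : RootTendsToInfty (mseq M)) (hn : RootTendsToInfty (mseq N))
    (hfin : MgFinite M N) :
    (∀ t : ℝ, 0 < t → ∀ j : ℕ,
      hFun (mseq M) t ≤ mg M N ^ j * mseq N j * t ^ j * hFun (mseq N) (mg M N * t)) ∧
    (∀ t : ℝ, 0 < t →
      hFun (mseq M) t ≤ hFun (mseq N) (Real.exp 1 * mg M N * t / 2) ^ 2) := by
  have hMn : ∀ k, 0 ≤ mseq M k := fun k => div_nonneg (hM.2.1 k).le (by positivity)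
  have hNn : ∀ k, 0 ≤ mseq N k := fun k => div_nonneg (hN.2.1 k).le (by positivity)
  have hC : 0 ≤ mg M N := by
    apply Real.sSup_nonneg
    rintro x ⟨j, k, -, rfl⟩
    exact Real.rpow_nonneg
      (div_nonneg (hM.2.1 _).le (mul_nonneg (hN.2.1 _).le (hN.2.1 _).le)) _
  have hkey := mseq_add_le M N hM hN hfin
  constructor
  · intro t ht j
    have ha : 0 ≤ mg M N ^ j * mseq N j * t ^ j :=
      mul_nonneg (mul_nonneg (pow_nonneg hC j) (hNn j)) (pow_nonneg ht.le j)
    rw [hFun.eq_1 (mseq N), Real.mul_iInf_of_nonneg ha]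
    refine le_ciInf fun k => ?_
    refine (hFun_le _ hMn t ht.le (j + k)).trans ?_
    refine (mul_le_mul_of_nonneg_right (hkey j k) (pow_nonneg ht.le _)).trans (le_of_eq ?_)
    ring
  · intro t ht
    set s := Real.exp 1 * mg M N * t / 2 with hs
    have hCt : 0 ≤ mg M N * t := mul_nonneg hC ht.le
    have hle : mg M N * t ≤ s := by
      have he : (2 : ℝ) ≤ Real.exp 1 := by
        have := Real.add_one_le_exp (1 : ℝ)
        linarith
      rw [hs]
      nlinarith
    have hbd : ∀ k, hFun (mseq M) t ≤ (mseq N k * s ^ k) ^ 2 := by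
      intro k
      refine (hFun_le _ hMn t ht.le (k + k)).trans ?_
      refine (mul_le_mul_of_nonneg_right (hkey k k) (pow_nonneg ht.le _)).trans ?_
      calc _ = (mseq N k * (mg M N * t) ^ k) ^ 2 := by ring
        _ ≤ _ := by
          have := hNn k
          gcongr
    have hroot : Real.sqrt (hFun (mseq M) t) ≤ hFun (mseq N) s :=
      le_ciInf fun k => (Real.sqrt_le_left
        (mul_nonneg (hNn k) (pow_nonneg (hCt.trans hle) k))).2 (hbd k)
    have h0 : 0 ≤ hFun (mseq M) t :=
      le_ciInf fun k => mul_nonneg (hMn k) (pow_nonneg ht.le k)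
    calc hFun (mseq M) t = Real.sqrt (hFun (mseq M) t) ^ 2 := (Real.sq_sqrt h0).symm
      _ ≤ _ := pow_le_pow_left₀ (Real.sqrt_nonneg _) hroot 2
end
end
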